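/- arXiv:2511.22960 — 2 statements merged into one kernel-verified Lean document; each statement's English description precedes it below -/
import Mathlib

section
/- Let (X,ρ,μ) be a space of homogeneous type satisfying the weak reverse doubling (WRD) condition and let Ω ⊆ X be an open set satisfying the weak measure density (WMD) condition. Let r : X → (0,∞) be a globally log-Hölder continuous function and let q ∈ (0,∞) satisfy 0 < q < r̃₋ ≤ r̃₊ < ∞, where r̃₋ := ess inf_{x∈X} r(x) and r̃₊ := ess sup_{x∈X} r(x). Then there exist positive constants C and C̃ such that for every measurable f on Ω with inf_{a∈ℝ} ‖f+a‖_{L^{r(·)}(Ω)} < ∞ and with ‖(∫_Ω |f(·)−f(y)|^q/(U(·,y)·ρ(·,y)^{s₀q}) dμ(y))^{1/q}‖_{L^{r(·)}(Ω)} < ∞ for some s₀ ∈ (0,1), one has C·inf_{a∈ℝ}‖f+a‖_{L^{r(·)}(Ω)} ≤ liminf_{s→0⁺} s^{1/q}‖(∫_Ω |f(·)−f(y)|^q/(U(·,y)·ρ(·,y)^{sq}) dμ(y))^{1/q}‖_{L^{r(·)}(Ω)} ≤ limsup_{s→0⁺} s^{1/q}‖(∫_Ω |f(·)−f(y)|^q/(U(·,y)·ρ(·,y)^{sq})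 dμ(y))^{1/q}‖_{L^{r(·)}(Ω)} ≤ C̃·inf_{a∈ℝ}‖f+a‖_{L^{r(·)}(Ω)}. -/
noncomputable section

open MeasureTheory Filter Set
open scoped ENNReal NNReal Topology

namespace Paper

variable {X : Type*} [MeasurableSpace X]

/-- The ball with center `x` and radius `r` for the quasi-metric `ρ`. -/
def ball (ρ : X → X → ℝ) (x : X) (r : ℝ) : Set X := {y | ρ x y < r}

/-- `(X, ρ, μ)` is a quasi-metric measure space with quasi-triangle constant `K₀`:
`ρ` is a quasi-metric with constant `K₀` and all `ρ`-balls are `μ`-measurable. -/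
structure IsQuasiMetricMeasure (ρ : X → X → ℝ) (μ : Measure X) (K₀ : ℝ) : Prop where
  nonneg : ∀ x y, 0 ≤ ρ x y
  eq_zero_iff : ∀ x y, ρ x y = 0 ↔ x = y
  symm : ∀ x y, ρ x y = ρ y x
  one_le : 1 ≤ K₀
  triangle : ∀ x y z, ρ x z ≤ K₀ * (ρ x y + ρ y z)
  measurableSet_ball : ∀ x r, MeasurableSet (ball ρ x r)

/-- The doubling condition for `μ` with doubling constant `L ∈ [1, ∞)`. -/
def IsDoubling (ρ : X → X → ℝ) (μ : Measure X) (L : ℝ≥0∞) : Prop :=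
  1 ≤ L ∧ L < ∞ ∧ ∀ (x : X) (r : ℝ), 0 < r →
    0 < μ (ball ρ x r) ∧ μ (ball ρ x (2 * r)) ≤ L * μ (ball ρ x r) ∧ μ (ball ρ x r) < ∞

/-- `U(x,y) := min{μ(B(x,ρ(x,y))), μ(B(y,ρ(x,y)))}`. -/
def U (ρ : X → X → ℝ) (μ : Measure X) (x y : X) : ℝ≥0∞ :=
  min (μ (ball ρ x (ρ x y))) (μ (ball ρ y (ρ x y)))

/-- The weak reverse doubling (WRD) condition. -/
def WRD (ρ : X → X → ℝ) (μ : Measure X) : Prop :=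
  ∃ (x₀ : X) (lam C : ℝ), 1 < lam ∧ 1 < C ∧
    ENNReal.ofReal C ≤
      liminf (fun r : ℝ => μ (ball ρ x₀ (lam * r)) / μ (ball ρ x₀ r)) atTop

/-- The weak measure density (WMD) condition for `Ω`. -/
def WMD (ρ : X → X → ℝ) (μ : Measure X) (Ω : Set X) : Prop :=
  ∃ (x₀ : X) (C₀ : ℝ), 0 < C₀ ∧ C₀ ≤ 1 ∧
    ENNReal.ofReal C₀ ≤
      liminf (fun r : ℝ => μ (ball ρ x₀ r ∩ Ω) / μ (ball ρ x₀ r)) atTop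

/-- `Ω` is open with respect to the quasi-metric `ρ`. -/
def IsRhoOpen (ρ : X → X → ℝ) (Ω : Set X) : Prop :=
  ∀ x ∈ Ω, ∃ r : ℝ, 0 < r ∧ ball ρ x r ⊆ Ω

/-- The Maz'ya–Shaposhnikova integrand on a set `E`:
`x ↦ (∫_E |f(x) − f(y)|^q / (U(x,y) ρ(x,y)^{sq}) dμ(y))^{1/q}`. -/
def sob (ρ : X → X → ℝ) (μ : Measure X) (E : Set X) (f : X → ℝ) (q s : ℝ) (x : X) :
    ℝ≥0∞ :=
  (∫⁻ y in E, ENNReal.ofReal |f x - f y| ^ q /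
      (U ρ μ x y * ENNReal.ofReal (ρ x y) ^ (s * q)) ∂μ) ^ (1 / q)

/-- The variable Lebesgue quasi-norm on a set `E` with exponent function `rr`. -/
def vnorm (μ : Measure X) (rr : X → ℝ) (E : Set X) (g : X → ℝ≥0∞) : ℝ≥0∞ :=
  sInf {lam : ℝ≥0∞ | lam ≠ 0 ∧ (∫⁻ x in E, (g x / lam) ^ rr x ∂μ) ≤ 1}

/-- `rr` is globally log-Hölder continuous with respect to `ρ`. -/
def GloballyLogHolder (ρ : X → X → ℝ) (rr : X → ℝ) : Prop :=
  ∃ (x₀ : X) (rlim C : ℝ), 0 < C ∧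
    (∀ x y : X, |rr x - rr y| ≤ C / Real.log (Real.exp 1 + 1 / ρ x y)) ∧
    ∀ x : X, |rr x - rlim| ≤ C / Real.log (Real.exp 1 + ρ x₀ x)

/-!
The factor `s` is the reciprocal of a geometric series: a dyadic annulus `ρ x y ≈ 2 ^ k`, `k ≥ 0`,
contributes about `2 ^ (-s q k)` to the energy, and these weights sum to about `1 / s`.

*Lower bound.* By weak reverse doubling and weak measure density, a fixed proportion of every
large annulus around the base point lies in `Ω`. If `f` has finite norm then `{|f| ≥ ε}` has finite
measure, so most of that part carries only values `|f y| < ε`. Where `|f x| ≥ 2 ε`, every large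
annulus therefore contributes at least a multiple of `|f x| ^ q`, and `ε → 0` exhausts `{f ≠ 0}`.

*Upper bound.* Distances at most `1` cost no more than the energy of order `s₀`, whose
contribution vanishes after multiplication by `s ^ (1 / q)`. The rest is a convex combination of
`|f x| ^ q` and of averages of `|f| ^ q` over balls of radius at least `1`. Averages over balls of
one fixed radius are bounded on `L ^ 1`, uniformly in the radius, so no maximal function enters. At
radius at least `1`, moving the variable exponent inside an average costs only the log-Hölder decay
of the exponent at infinity.

Replacing `f` by `f + a` changes no difference `f x - f y`, so both bounds extend to the infimum
over `a`.
-/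

variable {ρ : X → X → ℝ} {μ : Measure X} {K₀ : ℝ} {L : ℝ≥0∞}

section Balls

theorem ball_mono {Y : Type*} {ρ : Y → Y → ℝ} {x : Y} {r r' : ℝ} (h : r ≤ r') :
    ball ρ x r ⊆ ball ρ x r' :=
  fun _ hy => lt_of_lt_of_le hy h

theorem exists_mem_ball_natCast_add_one {Y : Type*} (ρ : Y → Y → ℝ) (o x : Y) :
    ∃ n : ℕ, x ∈ ball ρ o (n + 1) := by
  obtain ⟨n, hn⟩ := exists_nat_gt (ρ o x)
  exact ⟨n, hn.trans (lt_add_one _)⟩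

theorem IsQuasiMetricMeasure.self (hX : IsQuasiMetricMeasure ρ μ K₀) (x : X) : ρ x x = 0 :=
  (hX.eq_zero_iff x x).2 rfl

theorem IsQuasiMetricMeasure.ball_subset_ball (hX : IsQuasiMetricMeasure ρ μ K₀) {x z : X}
    {r r' : ℝ} (h : K₀ * (ρ z x + r) ≤ r') : ball ρ x r ⊆ ball ρ z r' := fun y hy =>
  calc ρ z y ≤ K₀ * (ρ z x + ρ x y) := hX.triangle z x y
    _ < K₀ * (ρ z x + r) := by
      have := hX.one_le
      gcongr
      exact hy
    _ ≤ r' := h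

theorem IsQuasiMetricMeasure.measurable (hX : IsQuasiMetricMeasure ρ μ K₀) (x : X) :
    Measurable (ρ x) :=
  measurable_of_Iio fun r => hX.measurableSet_ball x r

theorem IsDoubling.measure_ball_pos (hL : IsDoubling ρ μ L) (x : X) {r : ℝ} (hr : 0 < r) :
    0 < μ (ball ρ x r) :=
  (hL.2.2 x r hr).1

theorem IsDoubling.measure_ball_lt_top (hL : IsDoubling ρ μ L) (x : X) {r : ℝ} (hr : 0 < r) :
    μ (ball ρ x r) < ∞ :=
  (hL.2.2 x r hr).2.2

theorem IsDoubling.measure_ball_two_pow_mul_le (hL : IsDoubling ρ μ L) (x : X) {r : ℝ}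
    (hr : 0 < r) (m : ℕ) : μ (ball ρ x (2 ^ m * r)) ≤ L ^ m * μ (ball ρ x r) := by
  induction m with
  | zero => simp
  | succ m ih =>
    calc μ (ball ρ x (2 ^ (m + 1) * r)) = μ (ball ρ x (2 * (2 ^ m * r))) := by
          rw [pow_succ', mul_assoc]
      _ ≤ L * μ (ball ρ x (2 ^ m * r)) := (hL.2.2 x _ (by positivity)).2.1
      _ ≤ L * (L ^ m * μ (ball ρ x r)) := by gcongr
      _ = L ^ (m + 1) * μ (ball ρ x r) := by rw [pow_succ', mul_assoc]

theorem IsDoubling.sigmaFinite (hX : IsQuasiMetricMeasure ρ μ K₀) (hL : IsDoubling ρ μ L) :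
    SigmaFinite μ := by
  rcases isEmpty_or_nonempty X with _ | ⟨⟨o⟩⟩
  · rw [Measure.eq_zero_of_isEmpty μ]
    infer_instance
  · exact Measure.FiniteSpanningSetsIn.sigmaFinite (C := {s | MeasurableSet s})
      { set := fun n => ball ρ o (n + 1)
        set_mem := fun n => hX.measurableSet_ball o _
        finite := fun n => hL.measure_ball_lt_top o (by positivity)
        spanning := iUnion_eq_univ_iff.2 (exists_mem_ball_natCast_add_one ρ o) }

/-- `μ` has growth exponent `n`: enlarging a ball `M ≥ 1` times multiplies its measure by at most
`(2 * M) ^ n`. This is the scale-invariant form in which doubling is used; an exponent in `ℕ` makes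
the constants ordinary powers. -/
def HasGrowthExponent (ρ : X → X → ℝ) (μ : Measure X) (n : ℕ) : Prop :=
  ∀ (x : X) (r M : ℝ), 0 < r → 1 ≤ M →
    μ (ball ρ x (M * r)) ≤ ENNReal.ofReal ((2 * M) ^ n) * μ (ball ρ x r)

theorem IsDoubling.exists_hasGrowthExponent (hL : IsDoubling ρ μ L) :
    ∃ n : ℕ, HasGrowthExponent ρ μ n := by
  obtain ⟨n, hn⟩ := ENNReal.exists_nat_gt hL.2.1.ne
  have hLn : L ≤ 2 ^ n := hn.le.trans (mod_cast Nat.lt_two_pow_self.le)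
  refine ⟨n, fun x r M hr hM => ?_⟩
  obtain ⟨m, hm, hm'⟩ := exists_nat_pow_near hM one_lt_two
  calc μ (ball ρ x (M * r)) ≤ μ (ball ρ x (2 ^ (m + 1) * r)) :=
        measure_mono (ball_mono (by gcongr))
    _ ≤ L ^ (m + 1) * μ (ball ρ x r) := hL.measure_ball_two_pow_mul_le x hr _
    _ ≤ (2 ^ n) ^ (m + 1) * μ (ball ρ x r) := by gcongr
    _ = ENNReal.ofReal ((2 * 2 ^ m) ^ n) * μ (ball ρ x r) := by
      rw [← pow_succ', ← pow_mul, ← pow_mul, mul_comm n, ENNReal.ofReal_pow zero_le_two,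
        ENNReal.ofReal_ofNat]
    _ ≤ ENNReal.ofReal ((2 * M) ^ n) * μ (ball ρ x r) := by gcongr

theorem HasGrowthExponent.measure_ball_le {n : ℕ} (hn : HasGrowthExponent ρ μ n)
    (hX : IsQuasiMetricMeasure ρ μ K₀) {x z : X} {r r' M : ℝ} (hr' : 0 < r') (hM : 1 ≤ M)
    (h : K₀ * (ρ z x + r) ≤ M * r') :
    μ (ball ρ x r) ≤ ENNReal.ofReal ((2 * M) ^ n) * μ (ball ρ z r') :=
  (measure_mono (hX.ball_subset_ball h)).trans (hn z r' M hr' hM)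

end Balls

section DecayWeight

/-- The weight `(e + ρ(o, x)) ^ (-m)`. It is `μ`-integrable for large `m`, and it absorbs the error
made when a log-Hölder exponent is replaced by its limit at infinity. -/
def decayWeight (ρ : X → X → ℝ) (o : X) (m : ℕ) (x : X) : ℝ≥0∞ :=
  ENNReal.ofReal ((Real.exp 1 + ρ o x)⁻¹ ^ m)

theorem measurable_decayWeight (hX : IsQuasiMetricMeasure ρ μ K₀) (o : X) (m : ℕ) :
    Measurable (decayWeight ρ o m) := by
  have := hX.measurable o
  unfold decayWeight
  fun_prop

theorem decayWeight_le_tsum_indicator (hX : IsQuasiMetricMeasure ρ μ K₀) (o : X) (m : ℕ) (x : X) :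
    decayWeight ρ o m x ≤
      ∑' k : ℕ, (ball ρ o (2 ^ k)).indicator (fun _ => ENNReal.ofReal ((2 / 2 ^ k) ^ m)) x := by
  have hρ := hX.nonneg o x
  have he : 1 ≤ Real.exp 1 := Real.one_le_exp zero_le_one
  obtain ⟨k, hk, hk'⟩ :=
    exists_nat_pow_near (show 1 ≤ Real.exp 1 + ρ o x by linarith) one_lt_two
  have hx : x ∈ ball ρ o (2 ^ (k + 1)) := show ρ o x < _ by linarith
  refine le_trans ?_ (ENNReal.le_tsum (k + 1))
  rw [indicator_of_mem hx, decayWeight, pow_succ' 2 k, div_mul_cancel_left₀ two_ne_zero]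
  gcongr

theorem HasGrowthExponent.lintegral_decayWeight_ne_top {n : ℕ} (hn : HasGrowthExponent ρ μ n)
    (hX : IsQuasiMetricMeasure ρ μ K₀) (hL : IsDoubling ρ μ L) (o : X) :
    ∫⁻ x, decayWeight ρ o (n + 1) x ∂μ ≠ ∞ := by
  have h_ball (k : ℕ) : ENNReal.ofReal ((2 / 2 ^ k) ^ (n + 1)) * μ (ball ρ o (2 ^ k)) ≤
      ENNReal.ofReal (2 ^ (2 * n + 1)) * μ (ball ρ o 1) * 2⁻¹ ^ k := by
    have h2k : (1 : ℝ) ≤ 2 ^ k := one_le_pow₀ one_le_two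
    calc ENNReal.ofReal ((2 / 2 ^ k) ^ (n + 1)) * μ (ball ρ o (2 ^ k))
        ≤ ENNReal.ofReal ((2 / 2 ^ k) ^ (n + 1)) *
            (ENNReal.ofReal ((2 * 2 ^ k) ^ n) * μ (ball ρ o 1)) := by
          gcongr
          simpa only [mul_one] using hn o 1 (2 ^ k) one_pos h2k
      _ = ENNReal.ofReal (2 ^ (2 * n + 1) * 2⁻¹ ^ k) * μ (ball ρ o 1) := by
          rw [← mul_assoc, ← ENNReal.ofReal_mul (by positivity)]
          congr 2
          rw [div_pow, mul_pow, inv_pow]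
          field_simp
          ring
      _ = ENNReal.ofReal (2 ^ (2 * n + 1)) * μ (ball ρ o 1) * 2⁻¹ ^ k := by
          rw [ENNReal.ofReal_mul (by positivity), ENNReal.ofReal_pow (by positivity : (0:ℝ) ≤ 2⁻¹),
            ENNReal.ofReal_inv_of_pos two_pos, ENNReal.ofReal_ofNat, mul_right_comm]
  have hμ := hL.measure_ball_lt_top o one_pos
  refine ne_top_of_le_ne_top ?_ (lintegral_mono (decayWeight_le_tsum_indicator hX o (n + 1)))
  rw [lintegral_tsum fun k => (measurable_const.indicator (hX.measurableSet_ball o _)).aemeasurable]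
  simp_rw [lintegral_indicator_const (hX.measurableSet_ball o _)]
  refine ne_top_of_le_ne_top ?_ (ENNReal.tsum_le_tsum h_ball)
  rw [ENNReal.tsum_mul_left, ENNReal.tsum_geometric, ENNReal.one_sub_inv_two, inv_inv]
  finiteness

end DecayWeight

section Jensen

theorem rpow_lintegral_le_lintegral_rpow {α : Type*} [MeasurableSpace α] {ν : Measure α}
    (hν : ν univ ≤ 1) {p : ℝ} (hp : 1 ≤ p) {f : α → ℝ≥0∞} (hf : AEMeasurable f ν) :
    (∫⁻ x, f x ∂ν) ^ p ≤ ∫⁻ x, f x ^ p ∂ν := by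
  have hp0 : 0 < p := one_pos.trans_le hp
  have h : eLpNorm' f 1 ν ≤ eLpNorm' f p ν := by
    refine (eLpNorm'_le_eLpNorm'_mul_rpow_measure_univ one_pos hp hf.aestronglyMeasurable).trans ?_
    refine mul_le_of_le_one_right' (ENNReal.rpow_le_one hν ?_)
    simpa only [one_div, inv_one, sub_nonneg] using inv_le_one_of_one_le₀ hp
  simp only [eLpNorm', enorm_eq_self, ENNReal.rpow_one, div_one] at h
  rwa [one_div, ENNReal.le_rpow_inv_iff hp0] at h

theorem rpow_laverage_le_laverage_rpow {α : Type*} [MeasurableSpace α] {ν : Measure α} {p : ℝ}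
    (hp : 1 ≤ p) {f : α → ℝ≥0∞} (hf : AEMeasurable f ν) :
    (⨍⁻ x, f x ∂ν) ^ p ≤ ⨍⁻ x, f x ^ p ∂ν := by
  rw [laverage_eq', laverage_eq']
  refine rpow_lintegral_le_lintegral_rpow ?_ hp (hf.smul_measure _)
  simpa only [Measure.smul_apply, smul_eq_mul] using ENNReal.inv_mul_le_one _

theorem rpow_tsum_mul_le_tsum_mul_rpow {w : ℕ → ℝ≥0∞} (hw : ∑' k, w k ≤ 1) {p : ℝ} (hp : 1 ≤ p)
    (z : ℕ → ℝ≥0∞) : (∑' k, w k * z k) ^ p ≤ ∑' k, w k * z k ^ p := by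
  have hcount (f : ℕ → ℝ≥0∞) : ∫⁻ k, f k ∂Measure.count.withDensity w = ∑' k, w k * f k := by
    rw [lintegral_withDensity_eq_lintegral_mul _ .of_discrete .of_discrete, lintegral_count]
    rfl
  rw [← hcount, ← hcount]
  refine rpow_lintegral_le_lintegral_rpow ?_ hp Measurable.of_discrete.aemeasurable
  rwa [withDensity_apply _ .univ, setLIntegral_univ, lintegral_count]

end Jensen

section Averages

theorem IsDoubling.exists_countable_net (hX : IsQuasiMetricMeasure ρ μ K₀) (hL : IsDoubling ρ μ L)
    {R : ℝ} (hR : 0 < R) :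
    ∃ S : Set X, S.Countable ∧ S.PairwiseDisjoint (fun z => ball ρ z R) ∧
      ∀ x, ∃ z ∈ S, x ∈ ball ρ z (2 * K₀ * R) := by
  have hself (x : X) : x ∈ ball ρ x R := (hX.self x).trans_lt hR
  obtain ⟨S, -, hdisj, hcover⟩ := Vitali.exists_disjoint_subfamily_covering_enlargement
    (fun x => ball ρ x R) univ (fun _ => 1) 2 one_lt_two (fun _ _ => zero_le_one) 1
    (fun _ _ => le_rfl) (fun x _ => ⟨x, hself x⟩)
  refine ⟨S, ?_, hdisj, fun x => ?_⟩
  · have := hL.sigmaFinite hX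
    have hpos := Measure.countable_meas_pos_of_disjoint_iUnion (μ := μ)
      (As := fun z : S => ball ρ z R) (fun z => hX.measurableSet_ball z R)
      (hdisj.on_injective Subtype.val_injective Subtype.prop)
    simpa only [hL.measure_ball_pos _ hR, ofPred_true, countable_univ_iff, countable_coe_iff]
      using hpos
  · obtain ⟨z, hz, ⟨w, hwx, hwz⟩, -⟩ := hcover x trivial
    refine ⟨z, hz, ?_⟩
    calc ρ z x ≤ K₀ * (ρ z w + ρ w x) := hX.triangle z w x
      _ < K₀ * (R + R) := by
        have hK := hX.one_le
        rw [hX.symm w x]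
        gcongr
        exacts [hwz, hwx]
      _ = 2 * K₀ * R := by ring

theorem HasGrowthExponent.tsum_indicator_ball_le {n : ℕ} (hn : HasGrowthExponent ρ μ n)
    (hX : IsQuasiMetricMeasure ρ μ K₀) (hL : IsDoubling ρ μ L) {R M : ℝ} (hR : 0 < R) (hM : 1 ≤ M)
    {S : Set X} (hS : S.PairwiseDisjoint fun z => ball ρ z R) (y : X) :
    ∑' z : S, (ball ρ (z : X) (M * R)).indicator 1 y ≤
      ENNReal.ofReal ((2 * (3 * K₀ ^ 2 * M)) ^ n) := by
  have hK := hX.one_le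
  set Q := ENNReal.ofReal ((2 * (3 * K₀ ^ 2 * M)) ^ n)
  set B := ball ρ y (K₀ * (M * R + R))
  have hB (z : S) :
      (ball ρ (z : X) (M * R)).indicator 1 y * μ B ≤ Q * μ (ball ρ (z : X) R ∩ B) := by
    by_cases hz : y ∈ ball ρ (z : X) (M * R)
    · have hzy : ρ z y ≤ M * R := le_of_lt hz
      have hsub : ball ρ (z : X) R ⊆ B := hX.ball_subset_ball (by rw [hX.symm y z]; gcongr)
      rw [indicator_of_mem hz, Pi.one_apply, one_mul, inter_eq_left.2 hsub]
      refine hn.measure_ball_le hX hR (by nlinarith) ?_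
      calc K₀ * (ρ z y + K₀ * (M * R + R)) ≤ K₀ * (K₀ * (M * R) + K₀ * (M * R + M * R)) := by
            gcongr
            · exact hzy.trans (le_mul_of_one_le_left (by positivity) hK)
            · exact le_mul_of_one_le_left hR.le hM
        _ = 3 * K₀ ^ 2 * M * R := by ring
    · rw [indicator_of_notMem hz, zero_mul]
      exact zero_le
  have hsum : ∑' z : S, μ (ball ρ (z : X) R ∩ B) ≤ μ B :=
    (tsum_meas_le_meas_iUnion_of_disjoint μ
      (fun z => (hX.measurableSet_ball _ _).inter (hX.measurableSet_ball _ _))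
      fun u v huv => (hS u.2 v.2 (Subtype.coe_ne_coe.2 huv)).mono inter_subset_left
        inter_subset_left).trans (measure_mono (iUnion_subset fun z => inter_subset_right))
  have hrad : 0 < K₀ * (M * R + R) := by positivity
  refine (ENNReal.mul_le_mul_iff_left (hL.measure_ball_pos y hrad).ne'
    (hL.measure_ball_lt_top y hrad).ne).1 ?_
  rw [← ENNReal.tsum_mul_right]
  refine (ENNReal.tsum_le_tsum hB).trans ?_
  rw [ENNReal.tsum_mul_left]
  gcongr

theorem HasGrowthExponent.setLAverage_ball_le {n : ℕ} (hn : HasGrowthExponent ρ μ n)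
    (hX : IsQuasiMetricMeasure ρ μ K₀) {R : ℝ} (hR : 0 < R) {x z : X}
    (hx : x ∈ ball ρ z (2 * K₀ * R)) (ψ : X → ℝ≥0∞) :
    ⨍⁻ y in ball ρ x R, ψ y ∂μ ≤ ENNReal.ofReal ((2 * (4 * K₀ ^ 2)) ^ n) *
      ((∫⁻ y in ball ρ z (3 * K₀ ^ 2 * R), ψ y ∂μ) / μ (ball ρ z (2 * K₀ * R))) := by
  have hK := hX.one_le
  have hzx : ρ z x ≤ 2 * K₀ * R := le_of_lt hx
  have ha0 : ENNReal.ofReal ((2 * (4 * K₀ ^ 2)) ^ n) ≠ 0 :=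
    (ENNReal.ofReal_pos.2 (by positivity)).ne'
  have hsub : ball ρ x R ⊆ ball ρ z (3 * K₀ ^ 2 * R) := hX.ball_subset_ball <|
    calc K₀ * (ρ z x + R) ≤ K₀ * (2 * K₀ * R + K₀ * R) := by
          gcongr
          exact le_mul_of_one_le_left hR.le hK
      _ = 3 * K₀ ^ 2 * R := by ring
  have hμ : μ (ball ρ z (2 * K₀ * R)) ≤ ENNReal.ofReal ((2 * (4 * K₀ ^ 2)) ^ n) * μ (ball ρ x R) :=
    hn.measure_ball_le hX hR (by nlinarith) <| by
      rw [hX.symm x z]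
      calc K₀ * (ρ z x + 2 * K₀ * R) ≤ K₀ * (2 * K₀ * R + 2 * K₀ * R) := by gcongr
        _ = 4 * K₀ ^ 2 * R := by ring
  calc ⨍⁻ y in ball ρ x R, ψ y ∂μ
      ≤ (∫⁻ y in ball ρ z (3 * K₀ ^ 2 * R), ψ y ∂μ) / μ (ball ρ x R) := by
        rw [setLAverage_eq]
        gcongr
    _ ≤ (∫⁻ y in ball ρ z (3 * K₀ ^ 2 * R), ψ y ∂μ) /
          (μ (ball ρ z (2 * K₀ * R)) / ENNReal.ofReal ((2 * (4 * K₀ ^ 2)) ^ n)) := by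
        gcongr
        exact ENNReal.div_le_of_le_mul' hμ
    _ = _ := by
        rw [div_eq_mul_inv, ENNReal.inv_div (.inl ENNReal.ofReal_ne_top) (.inl ha0), div_eq_mul_inv,
          div_eq_mul_inv, mul_left_comm]

-- `ρ` is only measurable in each variable separately, so averages over balls are not known to
-- depend measurably on the center, and integrating them by Tonelli's theorem is not available.
theorem HasGrowthExponent.exists_measurable_majorant_setLAverage {n : ℕ}
    (hn : HasGrowthExponent ρ μ n) (hX : IsQuasiMetricMeasure ρ μ K₀) (hL : IsDoubling ρ μ L) :
    ∃ A : ℝ≥0∞, A ≠ ∞ ∧ ∀ R : ℝ, 0 < R → ∀ ψ : X → ℝ≥0∞, Measurable ψ →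
      ∃ Ψ : X → ℝ≥0∞, Measurable Ψ ∧ (∀ x, ⨍⁻ y in ball ρ x R, ψ y ∂μ ≤ Ψ x) ∧
        ∫⁻ x, Ψ x ∂μ ≤ A * ∫⁻ x, ψ x ∂μ := by
  have hK := hX.one_le
  set a := ENNReal.ofReal ((2 * (4 * K₀ ^ 2)) ^ n)
  set b := ENNReal.ofReal ((2 * (3 * K₀ ^ 2 * (3 * K₀ ^ 2))) ^ n)
  refine ⟨a * b, by finiteness, fun R hR ψ hψ => ?_⟩
  obtain ⟨S, hScount, hS, hcover⟩ := hL.exists_countable_net hX hR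
  have := hScount.to_subtype
  have hmeas (z : S) (r : ℝ) := hX.measurableSet_ball (z : X) r
  have hrad : 0 < 2 * K₀ * R := by positivity
  set I : S → ℝ≥0∞ := fun z => ∫⁻ y in ball ρ z (3 * K₀ ^ 2 * R), ψ y ∂μ with hI
  refine ⟨fun x => ∑' z : S, (ball ρ z (2 * K₀ * R)).indicator
    (fun _ => a * (I z / μ (ball ρ z (2 * K₀ * R)))) x,
    .tsum fun z => measurable_const.indicator (hmeas z _), fun x => ?_, ?_⟩
  · obtain ⟨z, hz, hxz⟩ := hcover x
    refine le_trans ?_ (ENNReal.le_tsum ⟨z, hz⟩)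
    rw [indicator_of_mem hxz]
    exact hn.setLAverage_ball_le hX hR hxz ψ
  have hI_mul (z : S) : I z = ∫⁻ y, (ball ρ z (3 * K₀ ^ 2 * R)).indicator 1 y * ψ y ∂μ := by
    simp only [hI, ← lintegral_indicator (hmeas z _)]
    classical simp only [indicator_apply, Pi.one_apply, ite_mul, one_mul, zero_mul]
  calc ∫⁻ x, ∑' z : S, (ball ρ z (2 * K₀ * R)).indicator
        (fun _ => a * (I z / μ (ball ρ z (2 * K₀ * R)))) x ∂μ
      = ∑' z : S, a * I z := by
        rw [lintegral_tsum fun z => (measurable_const.indicator (hmeas z _)).aemeasurable]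
        refine tsum_congr fun z => ?_
        rw [lintegral_indicator_const (hmeas z _), mul_assoc, ENNReal.div_mul_cancel
          (hL.measure_ball_pos z hrad).ne' (hL.measure_ball_lt_top z hrad).ne]
    _ = a * ∫⁻ y, (∑' z : S, (ball ρ z (3 * K₀ ^ 2 * R)).indicator 1 y) * ψ y ∂μ := by
        simp_rw [ENNReal.tsum_mul_left, hI_mul, ← ENNReal.tsum_mul_right]
        rw [lintegral_tsum]
        exact fun z => ((measurable_one.indicator (hmeas z _)).mul hψ).aemeasurable
    _ ≤ a * ∫⁻ y, b * ψ y ∂μ := by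
        gcongr with y
        exact hn.tsum_indicator_ball_le hX hL hR (by nlinarith) hS y
    _ = a * b * ∫⁻ y, ψ y ∂μ := by rw [lintegral_const_mul _ hψ, mul_assoc]

end Averages

section VariableNorm

/-- The modular of the variable Lebesgue space on `E`; `vnorm` is the Luxemburg quasi-norm
associated with it. -/
def modular (μ : Measure X) (rr : X → ℝ) (E : Set X) (g : X → ℝ≥0∞) : ℝ≥0∞ :=
  ∫⁻ x in E, g x ^ rr x ∂μ

variable {rr rr' : X → ℝ} {E : Set X} {g : X → ℝ≥0∞} {r r' : ℝ} {c l : ℝ≥0∞}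

theorem vnorm_le_of_modular_div_le_one (hl : l ≠ 0) (h : modular μ rr E (fun x => g x / l) ≤ 1) :
    vnorm μ rr E g ≤ l :=
  sInf_le ⟨hl, h⟩

theorem modular_div_le_one_of_vnorm_lt (hr : ∀ x, 0 ≤ rr x) (h : vnorm μ rr E g < l) :
    modular μ rr E (fun x => g x / l) ≤ 1 := by
  obtain ⟨l', ⟨-, hl'⟩, hlt⟩ := sInf_lt_iff.1 h
  exact (lintegral_mono fun x =>
    ENNReal.rpow_le_rpow (ENNReal.div_le_div_left hlt.le _) (hr x)).trans hl'

theorem vnorm_congr_ae (h : rr =ᵐ[μ] rr') : vnorm μ rr E g = vnorm μ rr' E g := by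
  have (l : ℝ≥0∞) : ∫⁻ x in E, (g x / l) ^ rr x ∂μ = ∫⁻ x in E, (g x / l) ^ rr' x ∂μ :=
    lintegral_congr_ae <| (ae_restrict_of_ae h).mono fun x hx => by simp only [hx]
  simp only [vnorm, this]

theorem vnorm_const_mul_le (hc : c ≠ 0) (hc' : c ≠ ∞) :
    vnorm μ rr E (fun x => c * g x) ≤ c * vnorm μ rr E g := by
  rw [mul_comm, ← ENNReal.div_le_iff hc hc']
  refine le_sInf fun l ⟨hl, hgl⟩ => ?_
  rw [ENNReal.div_le_iff hc hc', mul_comm]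
  refine vnorm_le_of_modular_div_le_one (mul_ne_zero hc hl) ?_
  simpa only [modular, ENNReal.mul_div_mul_left _ _ hc hc'] using hgl

theorem vnorm_const_mul (hc : c ≠ 0) (hc' : c ≠ ∞) :
    vnorm μ rr E (fun x => c * g x) = c * vnorm μ rr E g := by
  refine (vnorm_const_mul_le hc hc').antisymm ?_
  have h := vnorm_const_mul_le (μ := μ) (rr := rr) (E := E) (g := fun x => c * g x)
    (ENNReal.inv_ne_zero.2 hc') (ENNReal.inv_ne_top.2 hc)
  simp only [← mul_assoc, ENNReal.inv_mul_cancel hc hc', one_mul] at h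
  rwa [mul_comm c⁻¹, ← div_eq_mul_inv, ENNReal.le_div_iff_mul_le (.inl hc) (.inl hc'),
    mul_comm] at h

theorem modular_const_mul_le (hr : 0 ≤ r) (hrr : ∀ x, r ≤ rr x) (hc : c ≤ 1) :
    modular μ rr E (fun x => c * g x) ≤ c ^ r * modular μ rr E g := by
  have hcr : c ^ r ≠ ∞ := ENNReal.rpow_ne_top_of_nonneg hr (hc.trans_lt ENNReal.one_lt_top).ne
  rw [modular, modular, ← lintegral_const_mul' _ _ hcr]
  refine lintegral_mono fun x => ?_
  beta_reduce
  rw [ENNReal.mul_rpow_of_nonneg _ _ (hr.trans (hrr x))]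
  gcongr ?_ * _
  exact ENNReal.rpow_le_rpow_of_exponent_ge hc (hrr x)

theorem vnorm_le_rpow_of_modular_le (hr : 0 < r) (hrr : ∀ x, r ≤ rr x) (hc : 1 ≤ c)
    (h : modular μ rr E g ≤ c) : vnorm μ rr E g ≤ c ^ (1 / r) := by
  rcases eq_or_ne c ∞ with rfl | hc'
  · rw [ENNReal.top_rpow_of_pos (by positivity)]
    exact le_top
  have hc0 : c ≠ 0 := (one_pos.trans_le hc).ne'
  refine vnorm_le_of_modular_div_le_one (by simp [hc0, hc']) ?_
  simp only [div_eq_mul_inv (g _), mul_comm (g _)]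
  calc modular μ rr E (fun x => (c ^ (1 / r))⁻¹ * g x)
      ≤ ((c ^ (1 / r))⁻¹) ^ r * modular μ rr E g :=
        modular_const_mul_le hr.le hrr <|
          ENNReal.inv_le_one.2 (ENNReal.one_le_rpow hc (by positivity))
    _ = c⁻¹ * modular μ rr E g := by
        rw [ENNReal.inv_rpow, ← ENNReal.rpow_mul, one_div_mul_cancel hr.ne', ENNReal.rpow_one]
    _ ≤ c⁻¹ * c := by gcongr
    _ = 1 := ENNReal.inv_mul_cancel hc0 hc'

theorem tendsto_modular_const_mul_zero (hr : 0 < r) (hrr : ∀ x, r ≤ rr x)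
    (hg : vnorm μ rr E g < ∞) :
    Tendsto (fun c => modular μ rr E (fun x => c * g x)) (𝓝 0) (𝓝 0) := by
  obtain ⟨l, hgl, hl⟩ := exists_between hg
  have hl0 : l ≠ 0 := (bot_le.trans_lt hgl).ne'
  have hmod := modular_div_le_one_of_vnorm_lt (fun x => hr.le.trans (hrr x)) hgl
  have hcl : Tendsto (fun c : ℝ≥0∞ => c * l) (𝓝 0) (𝓝 0) := by
    simpa only [id, zero_mul] using
      ENNReal.Tendsto.mul_const (tendsto_id (x := 𝓝 (0 : ℝ≥0∞))) (.inr hl.ne)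
  have hclr : Tendsto (fun c : ℝ≥0∞ => (c * l) ^ r) (𝓝 0) (𝓝 0) := by
    simpa only [ENNReal.zero_rpow_of_pos hr] using hcl.ennrpow_const r
  refine tendsto_of_tendsto_of_tendsto_of_le_of_le' tendsto_const_nhds hclr
    (.of_forall fun _ => zero_le) ?_
  filter_upwards [hcl.eventually_le_const one_pos] with c hc
  calc modular μ rr E (fun x => c * g x) = modular μ rr E (fun x => c * l * (g x / l)) := by
        simp only [mul_assoc, ENNReal.mul_div_cancel hl0 hl.ne]
    _ ≤ (c * l) ^ r * modular μ rr E (fun x => g x / l) := modular_const_mul_le hr.le hrr hc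
    _ ≤ (c * l) ^ r := mul_le_of_le_one_right' hmod

theorem measure_inter_le_ne_top_of_vnorm_lt_top (hr : ∀ x, 0 ≤ rr x) (hr' : ∀ x, rr x ≤ r')
    (hE : MeasurableSet E) (hgm : Measurable g) (hg : vnorm μ rr E g < ∞) {ε : ℝ≥0∞} (hε : ε ≠ 0) :
    μ (E ∩ {x | ε ≤ g x}) ≠ ∞ := by
  obtain ⟨l, hgl, hl⟩ := exists_between hg
  set b := min 1 (ε / l)
  have hb : b ≠ 0 := by simp [b, hε, hl.ne]
  have hb' : b ≠ ∞ := ((min_le_left _ _).trans_lt ENNReal.one_lt_top).ne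
  have hs : MeasurableSet (E ∩ {x | ε ≤ g x}) := hE.inter (measurableSet_le measurable_const hgm)
  have hle : b ^ r' * μ (E ∩ {x | ε ≤ g x}) ≤ 1 :=
    calc b ^ r' * μ (E ∩ {x | ε ≤ g x}) = ∫⁻ _ in E ∩ {x | ε ≤ g x}, b ^ r' ∂μ := by
          rw [setLIntegral_const]
      _ ≤ ∫⁻ x in E ∩ {x | ε ≤ g x}, (g x / l) ^ rr x ∂μ := by
          refine setLIntegral_mono' hs fun x hx => ?_
          calc b ^ r' ≤ b ^ rr x := ENNReal.rpow_le_rpow_of_exponent_ge (min_le_left _ _) (hr' x)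
            _ ≤ (g x / l) ^ rr x := by
              refine ENNReal.rpow_le_rpow ((min_le_right _ _).trans ?_) (hr x)
              gcongr
              exact hx.2
      _ ≤ modular μ rr E (fun x => g x / l) := lintegral_mono_set inter_subset_left
      _ ≤ 1 := modular_div_le_one_of_vnorm_lt hr hgl
  intro h
  rw [h, ENNReal.mul_top (by simp [hb, hb'])] at hle
  simp at hle

theorem vnorm_le_liminf {ι : Type*} {F : Filter ι} {G : ι → X → ℝ≥0∞} (hr : ∀ x, 0 < rr x)
    (hE : MeasurableSet E) {D : ℕ → Set X} (hDE : ∀ n, D n ⊆ E) (hD : Monotone D)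
    (hDm : ∀ n, MeasurableSet (D n)) (hg : ∀ x ∈ E, x ∉ ⋃ n, D n → g x = 0)
    (h : ∀ n, ∀ᶠ i in F, ∀ x ∈ D n, g x ≤ G i x) :
    vnorm μ rr E g ≤ liminf (fun i => vnorm μ rr E (G i)) F := by
  refine le_of_forall_gt_imp_ge_of_dense fun l hl => ?_
  have hl0 : l ≠ 0 := (bot_le.trans_lt hl).ne'
  refine vnorm_le_of_modular_div_le_one hl0 ?_
  have hDn (n : ℕ) : ∫⁻ x in D n, (g x / l) ^ rr x ∂μ ≤ 1 := by
    obtain ⟨i, hi, hgi⟩ := ((frequently_lt_of_liminf_lt (h := hl)).and_eventually (h n)).exists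
    calc ∫⁻ x in D n, (g x / l) ^ rr x ∂μ ≤ ∫⁻ x in D n, (G i x / l) ^ rr x ∂μ :=
          setLIntegral_mono' (hDm n) fun x hx => ENNReal.rpow_le_rpow
            (ENNReal.div_le_div_right (hgi x hx) _) (hr x).le
      _ ≤ modular μ rr E (fun x => G i x / l) := lintegral_mono_set (hDE n)
      _ ≤ 1 := modular_div_le_one_of_vnorm_lt (fun x => (hr x).le) hi
  calc modular μ rr E (fun x => g x / l) = ∫⁻ x in ⋃ n, D n, (g x / l) ^ rr x ∂μ := by
        have hzero : ∫⁻ x in E \ ⋃ n, D n, (g x / l) ^ rr x ∂μ = 0 :=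
          setLIntegral_eq_zero (hE.diff (.iUnion hDm)) fun x hx => by
            rw [hg x hx.1 hx.2, ENNReal.zero_div, ENNReal.zero_rpow_of_pos (hr x), Pi.zero_apply]
        rw [modular, ← lintegral_inter_add_sdiff _ E (.iUnion hDm), hzero, add_zero,
          inter_eq_right.2 (iUnion_subset hDE)]
    _ = ⨆ n, ∫⁻ x in D n, (g x / l) ^ rr x ∂μ := setLIntegral_iUnion_of_directed _ hD.directed_le
    _ ≤ 1 := iSup_le hDn

end VariableNorm

section KeyEstimate

theorem rpow_le_mul_rpow_add_inv_pow {u : ℝ≥0∞} (hu : u ≤ 1) {a c p p' : ℝ} (ha : 1 ≤ a)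
    (hp : 1 ≤ p) (h : |p - p'| * Real.log a ≤ c) (m : ℕ) :
    u ^ p ≤ ENNReal.ofReal (Real.exp (m * c)) * u ^ p' + ENNReal.ofReal (a⁻¹ ^ m) := by
  have : 0 < a := one_pos.trans_le ha
  rcases le_or_gt u (ENNReal.ofReal (a⁻¹ ^ m)) with hua | hua
  · exact le_add_left ((ENNReal.rpow_le_self_of_le_one hu hp).trans hua)
  have hu0 : u ≠ 0 := (bot_le.trans_lt hua).ne'
  have hu_inv : u⁻¹ ≤ ENNReal.ofReal (a ^ m) := by
    rw [ENNReal.inv_le_iff_inv_le, ← ENNReal.ofReal_inv_of_pos (by positivity), ← inv_pow]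
    exact hua.le
  have hexp : (a ^ m) ^ |p - p'| ≤ Real.exp (m * c) := by
    rw [Real.rpow_def_of_pos (by positivity), Real.log_pow, mul_assoc, mul_comm (Real.log a)]
    gcongr
  refine le_add_right ?_
  calc u ^ p = u ^ (p - p') * u ^ p' := by
        rw [← ENNReal.rpow_add _ _ hu0 (hu.trans_lt ENNReal.one_lt_top).ne, sub_add_cancel]
    _ ≤ u ^ (-|p - p'|) * u ^ p' := by
        gcongr ?_ * _
        exact ENNReal.rpow_le_rpow_of_exponent_ge hu (neg_abs_le _)
    _ ≤ ENNReal.ofReal (a ^ m) ^ |p - p'| * u ^ p' := by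
        rw [ENNReal.rpow_neg, ← ENNReal.inv_rpow]
        gcongr
    _ ≤ ENNReal.ofReal (Real.exp (m * c)) * u ^ p' := by
        rw [ENNReal.ofReal_rpow_of_nonneg (by positivity) (abs_nonneg _)]
        gcongr

theorem rpow_laverage_le_mul_laverage_rpow_of_mul_posLog_le {α : Type*} [MeasurableSpace α]
    {ν : Measure α} {p : α → ℝ} {p' κ : ℝ} {h : α → ℝ≥0∞} (hp : ∀ y, 1 ≤ p y) (hp' : 1 ≤ p')
    (hκ : 0 ≤ κ) (hm : AEMeasurable h ν) (h01 : ∀ y, h y = 0 ∨ 1 ≤ h y) (ht : ⨍⁻ y, h y ∂ν ≠ ∞)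
    (hpκ : ∀ᵐ y ∂ν, (p' - p y) * Real.posLog (⨍⁻ y, h y ∂ν).toReal ≤ κ) :
    (⨍⁻ y, h y ∂ν) ^ p' ≤ ENNReal.ofReal (Real.exp κ) * ⨍⁻ y, h y ^ p y ∂ν := by
  have h_rpow_mono {y : α} {e e' : ℝ} (he : 0 < e) (hee' : e ≤ e') : h y ^ e ≤ h y ^ e' := by
    rcases h01 y with h0 | h1
    · simp only [h0, ENNReal.zero_rpow_of_pos, he, he.trans_le hee', le_refl]
    · exact ENNReal.rpow_le_rpow_of_exponent_le h1 hee'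
  lift ⨍⁻ y, h y ∂ν to ℝ≥0 using ht with t htdef
  rcases le_or_gt t 1 with ht1 | ht1
  · calc (t : ℝ≥0∞) ^ p' ≤ t := ENNReal.rpow_le_self_of_le_one (mod_cast ht1) hp'
      _ ≤ ⨍⁻ y, h y ^ p y ∂ν := by
        rw [htdef]
        refine laverage_mono_ae (.of_forall fun y => ?_)
        simpa only [ENNReal.rpow_one] using h_rpow_mono one_pos (hp y)
      _ ≤ ENNReal.ofReal (Real.exp κ) * ⨍⁻ y, h y ^ p y ∂ν :=
        le_mul_of_one_le_left' (ENNReal.one_le_ofReal.2 (Real.one_le_exp hκ))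
  · have hlog : 0 < Real.log t := Real.log_pos (mod_cast ht1)
    rw [ENNReal.coe_toReal, Real.posLog_eq_log (by rw [NNReal.abs_eq]; exact_mod_cast ht1.le)]
      at hpκ
    set e := max 1 (p' - κ / Real.log t)
    have he : 1 ≤ e := le_max_left _ _
    have hep : ∀ᵐ y ∂ν, e ≤ p y := hpκ.mono fun y hy =>
      max_le (hp y) (by linarith [(le_div_iff₀ hlog).2 hy])
    have hpe : (t : ℝ≥0∞) ^ (p' - e) ≤ ENNReal.ofReal (Real.exp κ) := by
      rw [← ENNReal.ofReal_coe_nnreal, ENNReal.ofReal_rpow_of_pos (mod_cast one_pos.trans ht1),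
        Real.rpow_def_of_pos (mod_cast one_pos.trans ht1), mul_comm]
      gcongr
      exact (le_div_iff₀ hlog).1 (by linarith [le_max_right 1 (p' - κ / Real.log t)])
    calc (t : ℝ≥0∞) ^ p' = t ^ (p' - e) * t ^ e := by
          rw [← ENNReal.rpow_add _ _ (mod_cast (one_pos.trans ht1).ne') ENNReal.coe_ne_top,
            sub_add_cancel]
      _ ≤ ENNReal.ofReal (Real.exp κ) * ⨍⁻ y, h y ^ p y ∂ν := by
          gcongr
          rw [htdef]
          refine (rpow_laverage_le_laverage_rpow he hm).trans (laverage_mono_ae ?_)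
          exact hep.mono fun y hy => h_rpow_mono (one_pos.trans_le he) hy

theorem laverage_le_laverage_min_add_laverage_indicator {α : Type*} [MeasurableSpace α]
    {ν : Measure α} {h : α → ℝ≥0∞} (hm : Measurable h) :
    ⨍⁻ y, h y ∂ν ≤ ⨍⁻ y, min (h y) 1 ∂ν + ⨍⁻ y, {y | 1 < h y}.indicator h y ∂ν := by
  simp only [laverage_eq']
  rw [← lintegral_add_left (hm.min measurable_const)]
  refine lintegral_mono fun y => ?_
  rcases le_or_gt (h y) 1 with hy | hy
  · exact le_add_right (min_eq_left hy).ge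
  · exact le_add_left (indicator_of_mem (s := {y | 1 < h y}) hy h).ge

variable {p : X → ℝ} {p' c P : ℝ} {o x : X} {h : X → ℝ≥0∞} {R : ℝ}

theorem rpow_setLAverage_ball_le_of_le_one (hL : IsDoubling ρ μ L)
    (hX : IsQuasiMetricMeasure ρ μ K₀) (hR : 0 < R) (hp : ∀ x, 1 ≤ p x) (hp' : 1 ≤ p')
    (hlog : ∀ x, |p x - p'| * Real.log (Real.exp 1 + ρ o x) ≤ c) (m : ℕ)
    (hm : Measurable h) (h1 : ∀ y, h y ≤ 1) :
    (⨍⁻ y in ball ρ x R, h y ∂μ) ^ p x ≤ ENNReal.ofReal (Real.exp (m * c)) ^ 2 *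
      ⨍⁻ y in ball ρ x R, (h y ^ p y + decayWeight ρ o m y) ∂μ + decayWeight ρ o m x := by
  set E := ENNReal.ofReal (Real.exp (m * c))
  have he (y : X) : 1 ≤ Real.exp 1 + ρ o y :=
    le_add_of_le_of_nonneg (Real.one_le_exp zero_le_one) (hX.nonneg o y)
  have hc : 0 ≤ c :=
    (mul_nonneg (abs_nonneg _) (Real.log_nonneg (he x))).trans (hlog x)
  have hE : 1 ≤ E := ENNReal.one_le_ofReal.2 (Real.one_le_exp (by positivity))
  have havg : ⨍⁻ y in ball ρ x R, h y ∂μ ≤ 1 :=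
    (setLAverage_mono_ae _ (.of_forall h1)).trans_eq <| setLAverage_const
      (hL.measure_ball_pos x hR).ne' (hL.measure_ball_lt_top x hR).ne 1
  have hlim (y : X) : h y ^ p' ≤ E * (h y ^ p y + decayWeight ρ o m y) := by
    rw [mul_add]
    refine (rpow_le_mul_rpow_add_inv_pow (h1 y) (he y) hp' ?_ m).trans
      (add_le_add_right (le_mul_of_one_le_left' hE) _)
    rw [abs_sub_comm]
    exact hlog y
  refine (rpow_le_mul_rpow_add_inv_pow havg (he x) (hp x) (hlog x) m).trans ?_
  gcongr ?_ + _
  calc E * (⨍⁻ y in ball ρ x R, h y ∂μ) ^ p'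
      ≤ E * ⨍⁻ y in ball ρ x R, h y ^ p' ∂μ := by
        gcongr
        exact rpow_laverage_le_laverage_rpow hp' hm.aemeasurable
    _ ≤ E * ⨍⁻ y in ball ρ x R, E * (h y ^ p y + decayWeight ρ o m y) ∂μ := by
        gcongr E * ?_
        exact setLAverage_mono_ae _ (.of_forall hlim)
    _ = E ^ 2 * ⨍⁻ y in ball ρ x R, (h y ^ p y + decayWeight ρ o m y) ∂μ := by
        rw [laverage_eq', lintegral_const_mul' _ _ ENNReal.ofReal_ne_top, ← laverage_eq', sq,
          mul_assoc]

theorem HasGrowthExponent.inv_measure_ball_le {n : ℕ} (hn : HasGrowthExponent ρ μ n)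
    (hX : IsQuasiMetricMeasure ρ μ K₀) (o : X) {y : X} (hR : 1 ≤ R) (hy : y ∈ ball ρ x R) :
    (μ (ball ρ x R))⁻¹ ≤
      ENNReal.ofReal ((2 * (K₀ ^ 2 * (Real.exp 1 + ρ o y))) ^ n) * (μ (ball ρ o 1))⁻¹ := by
  have hK := hX.one_le
  have hy0 := hX.nonneg o y
  have he : 2 ≤ Real.exp 1 := by linarith [Real.add_one_le_exp 1]
  rw [mul_comm, ENNReal.inv_le_iff_inv_le, ENNReal.mul_inv (.inr ENNReal.ofReal_ne_top)
    (.inr (ENNReal.ofReal_pos.2 (by positivity)).ne'), inv_inv, ← div_eq_mul_inv]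
  refine ENNReal.div_le_of_le_mul' (hn.measure_ball_le hX (one_pos.trans_le hR)
    (one_le_mul_of_one_le_of_one_le (one_le_pow₀ hK) (by linarith)) ?_)
  calc K₀ * (ρ x o + 1) ≤ K₀ * (K₀ * (R + ρ o y) + K₀ * 1) := by
        gcongr
        · refine (hX.triangle x y o).trans ?_
          rw [hX.symm y o]
          gcongr
          exact hy.le
        · rwa [mul_one]
    _ = K₀ ^ 2 * (R + ρ o y + 1) := by ring
    _ ≤ K₀ ^ 2 * ((Real.exp 1 + ρ o y) * R) := by
        gcongr
        nlinarith
    _ = K₀ ^ 2 * (Real.exp 1 + ρ o y) * R := by rw [mul_assoc]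

theorem HasGrowthExponent.exists_posLog_inv_measure_ball_le {n : ℕ} (hn : HasGrowthExponent ρ μ n)
    (hX : IsQuasiMetricMeasure ρ μ K₀) (hL : IsDoubling ρ μ L) (o : X) :
    ∃ b : ℝ, 0 ≤ b ∧ ∀ R, 1 ≤ R → ∀ x, ∀ y ∈ ball ρ x R,
      Real.posLog (μ (ball ρ x R))⁻¹.toReal ≤ b * Real.log (Real.exp 1 + ρ o y) := by
  set v := (μ (ball ρ o 1))⁻¹.toReal
  refine ⟨Real.posLog ((2 * K₀ ^ 2) ^ n * v) + n, add_nonneg Real.posLog_nonneg n.cast_nonneg,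
    fun R hR x y hy => ?_⟩
  have hy0 := hX.nonneg o y
  set a := Real.exp 1 + ρ o y
  have ha : Real.exp 1 ≤ a := le_add_of_nonneg_right hy0
  have hlog : 1 ≤ Real.log a := (Real.le_log_iff_exp_le ((Real.exp_pos 1).trans_le ha)).2 ha
  have hinv : (μ (ball ρ x R))⁻¹.toReal ≤ (2 * K₀ ^ 2) ^ n * v * a ^ n := by
    refine (ENNReal.toReal_mono (ENNReal.mul_ne_top ENNReal.ofReal_ne_top
      (ENNReal.inv_ne_top.2 (hL.measure_ball_pos o one_pos).ne'))
      (hn.inv_measure_ball_le hX o hR hy)).trans_eq ?_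
    rw [ENNReal.toReal_mul, ENNReal.toReal_ofReal (by positivity), ← mul_assoc, mul_pow,
      mul_right_comm]
  calc Real.posLog (μ (ball ρ x R))⁻¹.toReal
      ≤ Real.posLog ((2 * K₀ ^ 2) ^ n * v * a ^ n) :=
        Real.posLog_le_posLog ENNReal.toReal_nonneg hinv
    _ ≤ Real.posLog ((2 * K₀ ^ 2) ^ n * v) + n * Real.log a := by
        refine Real.posLog_mul.trans_eq ?_
        rw [Real.posLog_pow, Real.posLog_eq_log (x := a)
          (le_abs.2 (.inl ((Real.one_le_exp zero_le_one).trans ha)))]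
    _ ≤ (Real.posLog ((2 * K₀ ^ 2) ^ n * v) + n) * Real.log a := by
        rw [add_mul]
        gcongr
        exact le_mul_of_one_le_right Real.posLog_nonneg hlog

theorem rpow_setLAverage_ball_le_of_eq_zero_or_one_le (hL : IsDoubling ρ μ L)
    (hX : IsQuasiMetricMeasure ρ μ K₀) (hR : 0 < R) {b : ℝ} (hb : 0 ≤ b)
    (hμ : ∀ y ∈ ball ρ x R,
      Real.posLog (μ (ball ρ x R))⁻¹.toReal ≤ b * Real.log (Real.exp 1 + ρ o y))
    (hp : ∀ x, 1 ≤ p x) (hlog : ∀ x, |p x - p'| * Real.log (Real.exp 1 + ρ o x) ≤ c)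
    (hm : Measurable h) (h01 : ∀ y, h y = 0 ∨ 1 ≤ h y) (hh : ∫⁻ y, h y ^ p y ∂μ ≤ 1) :
    (⨍⁻ y in ball ρ x R, h y ∂μ) ^ p x ≤
      ENNReal.ofReal (Real.exp (2 * (b * c))) * ⨍⁻ y in ball ρ x R, h y ^ p y ∂μ := by
  have havg : ⨍⁻ y in ball ρ x R, h y ∂μ ≤ (μ (ball ρ x R))⁻¹ := by
    rw [setLAverage_eq, ENNReal.div_eq_inv_mul]
    refine mul_le_of_le_one_right' ((lintegral_mono fun y => ?_).trans
      ((setLIntegral_le_lintegral _ _).trans hh))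
    rcases h01 y with h0 | h1
    · exact h0.trans_le zero_le
    · simpa only [ENNReal.rpow_one] using ENNReal.rpow_le_rpow_of_exponent_le h1 (hp y)
  have hinv : (μ (ball ρ x R))⁻¹ ≠ ∞ := ENNReal.inv_ne_top.2 (hL.measure_ball_pos x hR).ne'
  have hx : x ∈ ball ρ x R := (hX.self x).trans_lt hR
  set T := Real.posLog (⨍⁻ y in ball ρ x R, h y ∂μ).toReal
  have hT : 0 ≤ T := Real.posLog_nonneg
  have hdiff {y : X} (hy : y ∈ ball ρ x R) : |p y - p'| * T ≤ b * c :=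
    calc |p y - p'| * T ≤ |p y - p'| * (b * Real.log (Real.exp 1 + ρ o y)) := by
          gcongr
          exact (Real.posLog_le_posLog ENNReal.toReal_nonneg
            (ENNReal.toReal_mono hinv havg)).trans (hμ y hy)
      _ = b * (|p y - p'| * Real.log (Real.exp 1 + ρ o y)) := by ring
      _ ≤ b * c := by
          gcongr
          exact hlog y
  refine rpow_laverage_le_mul_laverage_rpow_of_mul_posLog_le hp (hp x) ?_ hm.aemeasurable h01
    (ne_top_of_le_ne_top hinv havg) ?_
  · have := (mul_nonneg (abs_nonneg _) hT).trans (hdiff hx)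
    positivity
  filter_upwards [ae_restrict_mem (hX.measurableSet_ball x R)] with y hy
  calc (p x - p y) * T ≤ (|p x - p'| + |p y - p'|) * T := by
        gcongr
        linarith [le_abs_self (p x - p'), neg_le_abs (p y - p')]
    _ ≤ 2 * (b * c) := by linarith [hdiff hx, hdiff hy]

-- Small values of `h` are controlled by the decay of `p` at infinity, large ones by the
-- normalization of the modular.
theorem HasGrowthExponent.exists_rpow_setLAverage_ball_le {n : ℕ} (hn : HasGrowthExponent ρ μ n)
    (hX : IsQuasiMetricMeasure ρ μ K₀) (hL : IsDoubling ρ μ L) (hp : ∀ x, 1 ≤ p x)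
    (hpP : ∀ x, p x ≤ P) (hp' : 1 ≤ p')
    (hlog : ∀ x, |p x - p'| * Real.log (Real.exp 1 + ρ o x) ≤ c) (m : ℕ) :
    ∃ A : ℝ≥0∞, A ≠ ∞ ∧ ∀ h : X → ℝ≥0∞, Measurable h → ∫⁻ y, h y ^ p y ∂μ ≤ 1 →
      ∀ R, 1 ≤ R → ∀ x, (⨍⁻ y in ball ρ x R, h y ∂μ) ^ p x ≤
        A * (⨍⁻ y in ball ρ x R, (h y ^ p y + decayWeight ρ o m y) ∂μ + decayWeight ρ o m x) := by
  obtain ⟨b, hb, hμ⟩ := hn.exists_posLog_inv_measure_ball_le hX hL o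
  set E := ENNReal.ofReal (Real.exp (m * c))
  set E' := ENNReal.ofReal (Real.exp (2 * (b * c)))
  refine ⟨2 ^ P * (E ^ 2 + E' + 1), by finiteness, fun h hm hh R hR x => ?_⟩
  have hR0 : 0 < R := one_pos.trans_le hR
  have hp0 (y : X) : 0 ≤ p y := zero_le_one.trans (hp y)
  set D := ⨍⁻ y in ball ρ x R, (h y ^ p y + decayWeight ρ o m y) ∂μ
  set h₁ : X → ℝ≥0∞ := fun y => min (h y) 1
  set h₂ : X → ℝ≥0∞ := {y | 1 < h y}.indicator h
  have hs : MeasurableSet {y | 1 < h y} := measurableSet_lt measurable_const hm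
  have hh₂ (y : X) : h₂ y ≤ h y := indicator_le_self _ _ y
  have hsmall : (⨍⁻ y in ball ρ x R, h₁ y ∂μ) ^ p x ≤ E ^ 2 * D + decayWeight ρ o m x := by
    refine (rpow_setLAverage_ball_le_of_le_one hL hX hR0 hp hp' hlog m (hm.min measurable_const)
      fun y => min_le_right _ _).trans ?_
    gcongr E ^ 2 * ?_ + _
    refine setLAverage_mono_ae _ (.of_forall fun y => add_le_add_left ?_ _)
    exact ENNReal.rpow_le_rpow (min_le_left _ _) (hp0 y)
  have hlarge : (⨍⁻ y in ball ρ x R, h₂ y ∂μ) ^ p x ≤ E' * D := by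
    refine (rpow_setLAverage_ball_le_of_eq_zero_or_one_le hL hX hR0 hb (hμ R hR x) hp hlog
      (hm.indicator hs) (fun y => ?_) ((lintegral_mono fun y =>
        ENNReal.rpow_le_rpow (hh₂ y) (hp0 y)).trans hh)).trans ?_
    · by_cases hy : 1 < h y
      · exact .inr (hy.le.trans (indicator_of_mem (s := {y | 1 < h y}) hy h).ge)
      · exact .inl (indicator_of_notMem (s := {y | 1 < h y}) hy h)
    · gcongr
      refine setLAverage_mono_ae _ (.of_forall fun y => le_add_right ?_)
      exact ENNReal.rpow_le_rpow (hh₂ y) (hp0 y)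
  calc (⨍⁻ y in ball ρ x R, h y ∂μ) ^ p x
      ≤ (⨍⁻ y in ball ρ x R, h₁ y ∂μ + ⨍⁻ y in ball ρ x R, h₂ y ∂μ) ^ p x :=
        ENNReal.rpow_le_rpow (laverage_le_laverage_min_add_laverage_indicator hm) (hp0 x)
    _ ≤ 2 ^ (p x - 1) * ((⨍⁻ y in ball ρ x R, h₁ y ∂μ) ^ p x +
          (⨍⁻ y in ball ρ x R, h₂ y ∂μ) ^ p x) := ENNReal.rpow_add_le_mul_rpow_add_rpow _ _ (hp x)
    _ ≤ 2 ^ P * (E ^ 2 * D + decayWeight ρ o m x + E' * D) := by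
        gcongr
        · exact one_le_two
        · linarith [hpP x]
    _ ≤ 2 ^ P * (E ^ 2 * D + decayWeight ρ o m x + E' * D +
          (D + (E ^ 2 + E') * decayWeight ρ o m x)) := mul_le_mul_right le_self_add _
    _ = 2 ^ P * (E ^ 2 + E' + 1) * (D + decayWeight ρ o m x) := by ring

end KeyEstimate

section Energy

/-- The Maz'ya–Shaposhnikova kernel `|f(x) − f(y)|^q / (U(x,y) ρ(x,y)^{sq})`, whose integral in `y`
is `sobEnergy`. -/
def sobKernel (ρ : X → X → ℝ) (μ : Measure X) (f : X → ℝ) (q s : ℝ) (x y : X) : ℝ≥0∞ :=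
  ENNReal.ofReal |f x - f y| ^ q / (U ρ μ x y * ENNReal.ofReal (ρ x y) ^ (s * q))

/-- The energy `∫_E |f(x) − f(y)|^q / (U(x,y) ρ(x,y)^{sq}) dμ(y)` at the point `x`, that is, the
`q`-th power of `sob`. -/
def sobEnergy (ρ : X → X → ℝ) (μ : Measure X) (E : Set X) (f : X → ℝ) (q s : ℝ) (x : X) : ℝ≥0∞ :=
  ∫⁻ y in E, sobKernel ρ μ f q s x y ∂μ

variable {E : Set X} {f : X → ℝ} {q s : ℝ} {x y o : X} {r : ℝ} {n : ℕ}

theorem sob_eq_sobEnergy_rpow : sob ρ μ E f q s x = sobEnergy ρ μ E f q s x ^ (1 / q) :=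
  rfl

theorem sob_add_const (a : ℝ) : sob ρ μ E (fun x => f x + a) q s = sob ρ μ E f q s := by
  unfold sob
  simp only [add_sub_add_right_eq_sub]

theorem HasGrowthExponent.le_sobKernel (hn : HasGrowthExponent ρ μ n)
    (hX : IsQuasiMetricMeasure ρ μ K₀) (hr : 0 < r) (hx : ρ o x ≤ r) (hy : ρ o y ≤ r)
    (hsq : 0 ≤ s * q) (hq : 0 ≤ q) (hf : |f x| ≤ 2 * |f x - f y|) :
    (ENNReal.ofReal |f x| / 2) ^ q / (ENNReal.ofReal ((2 * (3 * K₀ ^ 2)) ^ n) * μ (ball ρ o r) *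
      ENNReal.ofReal (2 * K₀ * r) ^ (s * q)) ≤ sobKernel ρ μ f q s x y := by
  have hK := hX.one_le
  have hxy : ρ x y ≤ 2 * K₀ * r :=
    calc ρ x y ≤ K₀ * (ρ x o + ρ o y) := hX.triangle x o y
      _ ≤ K₀ * (r + r) := by
        rw [hX.symm x o]
        gcongr
      _ = 2 * K₀ * r := by ring
  have hU : U ρ μ x y ≤ ENNReal.ofReal ((2 * (3 * K₀ ^ 2)) ^ n) * μ (ball ρ o r) := by
    refine (min_le_left _ _).trans (hn.measure_ball_le hX hr (by nlinarith) ?_)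
    calc K₀ * (ρ o x + ρ x y) ≤ K₀ * (K₀ * r + 2 * K₀ * r) := by
          gcongr
          exact hx.trans (le_mul_of_one_le_left hr.le hK)
      _ = 3 * K₀ ^ 2 * r := by ring
  unfold sobKernel
  gcongr
  refine ENNReal.div_le_of_le_mul' ((ENNReal.ofReal_le_ofReal hf).trans_eq ?_)
  rw [ENNReal.ofReal_mul zero_le_two, ENNReal.ofReal_ofNat]

theorem HasGrowthExponent.le_setLIntegral_sobKernel (hn : HasGrowthExponent ρ μ n)
    (hX : IsQuasiMetricMeasure ρ μ K₀) (hL : IsDoubling ρ μ L) (hr : 0 < r) (hx : ρ o x ≤ r)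
    (hsq : 0 ≤ s * q) (hq : 0 ≤ q) {S : Set X} (hSm : MeasurableSet S) (hS : ∀ y ∈ S, ρ o y ≤ r)
    (hf : ∀ y ∈ S, |f x| ≤ 2 * |f x - f y|) {c : ℝ≥0∞} (hc : c * μ (ball ρ o r) ≤ μ S) :
    c / ENNReal.ofReal ((2 * (3 * K₀ ^ 2)) ^ n) * (ENNReal.ofReal |f x| / 2) ^ q /
      ENNReal.ofReal (2 * K₀ * r) ^ (s * q) ≤ ∫⁻ y in S, sobKernel ρ μ f q s x y ∂μ := by
  have hK := hX.one_le
  set Q := ENNReal.ofReal ((2 * (3 * K₀ ^ 2)) ^ n)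
  have hQ : Q ≠ 0 := (ENNReal.ofReal_pos.2 (by positivity)).ne'
  set V := ENNReal.ofReal (2 * K₀ * r) ^ (s * q)
  set v := μ (ball ρ o r)
  have hv := (hL.measure_ball_pos o hr).ne'
  have hv' := (hL.measure_ball_lt_top o hr).ne
  calc c / Q * (ENNReal.ofReal |f x| / 2) ^ q / V
      = (ENNReal.ofReal |f x| / 2) ^ q / (Q * v * V) * (c * v) := by
        simp only [div_eq_mul_inv]
        rw [ENNReal.mul_inv (.inl (mul_ne_zero hQ hv)) (.inl (by finiteness)),
          ENNReal.mul_inv (.inl hQ) (.inl ENNReal.ofReal_ne_top),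
          ← one_mul (c * Q⁻¹ * _), ← ENNReal.inv_mul_cancel hv hv']
        ring
    _ ≤ (ENNReal.ofReal |f x| / 2) ^ q / (Q * v * V) * μ S := by gcongr
    _ = ∫⁻ _ in S, (ENNReal.ofReal |f x| / 2) ^ q / (Q * v * V) ∂μ := by rw [setLIntegral_const]
    _ ≤ ∫⁻ y in S, sobKernel ρ μ f q s x y ∂μ :=
        setLIntegral_mono' hSm fun y hy => hn.le_sobKernel hX hr hx (hS y hy) hsq hq (hf y hy)

end Energy

section LowerBound

variable {f : X → ℝ} {q : ℝ} {Ω : Set X} {x o : X} {r : ℝ}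

theorem WRD.exists_mul_measure_ball_le (hW : WRD ρ μ) (hX : IsQuasiMetricMeasure ρ μ K₀)
    (hL : IsDoubling ρ μ L) (o : X) {N : ℝ≥0∞} (hN : N ≠ ∞) :
    ∃ Λ, 1 < Λ ∧ ∀ᶠ r in atTop, N * μ (ball ρ o r) ≤ μ (ball ρ o (Λ * r)) := by
  have hK := hX.one_le
  obtain ⟨x₀, lam, C, hlam, hC, hliminf⟩ := hW
  obtain ⟨C', hC', hC'C⟩ := exists_between (ENNReal.one_lt_ofReal.2 hC)
  obtain ⟨k, hk⟩ :=
    ((ENNReal.tendsto_pow_atTop_nhds_top_iff.2 hC').eventually_const_le hN.lt_top).exists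
  have hiter (j : ℕ) :
      ∀ᶠ r in atTop, C' ^ j * μ (ball ρ x₀ r) ≤ μ (ball ρ x₀ (lam ^ j * r)) := by
    induction j with
    | zero => simp
    | succ j ih =>
      have hstep : ∀ᶠ r in atTop, C' * μ (ball ρ x₀ r) ≤ μ (ball ρ x₀ (lam * r)) := by
        filter_upwards [eventually_lt_of_lt_liminf (hC'C.trans_le hliminf), eventually_gt_atTop 0]
          with r hr hr0
        exact (ENNReal.le_div_iff_mul_le (.inl (hL.measure_ball_pos x₀ hr0).ne')
          (.inl (hL.measure_ball_lt_top x₀ hr0).ne)).1 hr.le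
      have hscale : Tendsto (fun r => lam ^ j * r) atTop atTop :=
        tendsto_id.const_mul_atTop (by positivity)
      filter_upwards [ih, hscale.eventually hstep] with r hr hr'
      rw [pow_succ', pow_succ', mul_assoc, mul_assoc]
      exact (mul_le_mul_right hr C').trans hr'
  have hK_two : Tendsto (fun r => 2 * K₀ * r) atTop atTop :=
    tendsto_id.const_mul_atTop (by positivity)
  have hlamk : 1 ≤ lam ^ k := one_le_pow₀ hlam.le
  refine ⟨3 * K₀ ^ 2 * lam ^ k, by nlinarith, ?_⟩
  filter_upwards [hK_two.eventually (hiter k), eventually_ge_atTop (ρ x₀ o), eventually_ge_atTop 0]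
    with r hr hor hr0
  calc N * μ (ball ρ o r) ≤ C' ^ k * μ (ball ρ x₀ (2 * K₀ * r)) := by
        gcongr
        exact hX.ball_subset_ball (by nlinarith)
    _ ≤ μ (ball ρ x₀ (lam ^ k * (2 * K₀ * r))) := hr
    _ ≤ μ (ball ρ o (3 * K₀ ^ 2 * lam ^ k * r)) := by
        refine measure_mono (hX.ball_subset_ball ?_)
        calc K₀ * (ρ o x₀ + lam ^ k * (2 * K₀ * r))
            ≤ K₀ * (K₀ * (lam ^ k * r) + lam ^ k * (2 * K₀ * r)) := by
              rw [hX.symm o x₀]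
              gcongr
              nlinarith [le_mul_of_one_le_left hr0 hlamk,
                le_mul_of_one_le_left (mul_nonneg (zero_le_one.trans hlamk) hr0) hK]
          _ = 3 * K₀ ^ 2 * lam ^ k * r := by ring

theorem WRD.eventually_le_measure_ball (hW : WRD ρ μ) (hX : IsQuasiMetricMeasure ρ μ K₀)
    (hL : IsDoubling ρ μ L) (o : X) {M : ℝ≥0∞} (hM : M ≠ ∞) :
    ∀ᶠ r in atTop, M ≤ μ (ball ρ o r) := by
  have hv := (hL.measure_ball_pos o one_pos).ne'
  have hv' := (hL.measure_ball_lt_top o one_pos).ne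
  obtain ⟨Λ, -, hΛ⟩ := hW.exists_mul_measure_ball_le hX hL o (ENNReal.div_ne_top hM hv)
  obtain ⟨r, hr, hr1⟩ := (hΛ.and (eventually_ge_atTop 1)).exists
  filter_upwards [eventually_ge_atTop (Λ * r)] with r' hr'
  calc M = M / μ (ball ρ o 1) * μ (ball ρ o 1) := (ENNReal.div_mul_cancel hv hv').symm
    _ ≤ M / μ (ball ρ o 1) * μ (ball ρ o r) := by
        gcongr
        exact ball_mono hr1
    _ ≤ μ (ball ρ o (Λ * r)) := hr
    _ ≤ μ (ball ρ o r') := measure_mono (ball_mono hr')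

theorem WMD.exists_mul_measure_ball_le_measure_annulus (hΩ : WMD ρ μ Ω) (hW : WRD ρ μ)
    (hX : IsQuasiMetricMeasure ρ μ K₀) (hL : IsDoubling ρ μ L) :
    ∃ (o : X) (Λ : ℝ) (c : ℝ≥0∞), 1 < Λ ∧ c ≠ 0 ∧ c ≠ ∞ ∧ ∀ F, μ (Ω ∩ F) ≠ ∞ →
      ∀ᶠ r in atTop, c * μ (ball ρ o (Λ * r)) ≤ μ ((Ω \ F) ∩ ρ o ⁻¹' Ico r (Λ * r)) := by
  obtain ⟨o, C₀, hC₀, -, hliminf⟩ := hΩ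
  set a := ENNReal.ofReal (C₀ / 4)
  have ha : a ≠ 0 := (ENNReal.ofReal_pos.2 (by positivity)).ne'
  have ha' : a ≠ ∞ := ENNReal.ofReal_ne_top
  have haC₀ : a + (a + a) < ENNReal.ofReal C₀ := by
    rw [← ENNReal.ofReal_add (by positivity) (by positivity),
      ← ENNReal.ofReal_add (by positivity) (by positivity), ENNReal.ofReal_lt_ofReal_iff hC₀]
    linarith
  obtain ⟨Λ, hΛ, hΛμ⟩ := hW.exists_mul_measure_ball_le hX hL o (ENNReal.inv_ne_top.2 ha)
  have hscale : Tendsto (fun r => Λ * r) atTop atTop := tendsto_id.const_mul_atTop (by positivity)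
  refine ⟨o, Λ, a, hΛ, ha, ha', fun F hF => ?_⟩
  filter_upwards [hΛμ, hscale.eventually (eventually_lt_of_lt_liminf (haC₀.trans_le hliminf)),
    hscale.eventually (hW.eventually_le_measure_ball hX hL o (ENNReal.div_ne_top hF ha)),
    eventually_gt_atTop 0] with r hr hrΩ hrF hr0
  have hv := (hL.measure_ball_lt_top o (show 0 < Λ * r by positivity)).ne
  set v := μ (ball ρ o (Λ * r))
  have hcover : ball ρ o (Λ * r) ∩ Ω ⊆
      ((Ω \ F) ∩ ρ o ⁻¹' Ico r (Λ * r)) ∪ (ball ρ o r ∪ Ω ∩ F) := by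
    rintro y ⟨hy, hyΩ⟩
    by_cases hyF : y ∈ F
    · exact .inr (.inr ⟨hyΩ, hyF⟩)
    rcases lt_or_ge (ρ o y) r with hyr | hyr
    · exact .inr (.inl hyr)
    · exact .inl ⟨⟨hyΩ, hyF⟩, hyr, hy⟩
  refine (ENNReal.add_le_add_iff_right (a := a * v + a * v) (by finiteness)).1 ?_
  calc a * v + (a * v + a * v) = (a + (a + a)) * v := by ring
    _ ≤ μ (ball ρ o (Λ * r) ∩ Ω) := ENNReal.mul_le_of_le_div hrΩ.le
    _ ≤ μ ((Ω \ F) ∩ ρ o ⁻¹' Ico r (Λ * r)) + (μ (ball ρ o r) + μ (Ω ∩ F)) :=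
        (measure_mono hcover).trans ((measure_union_le _ _).trans
          (add_le_add_right (measure_union_le _ _) _))
    _ ≤ μ ((Ω \ F) ∩ ρ o ⁻¹' Ico r (Λ * r)) + (a * v + a * v) := by
        gcongr
        · exact (ENNReal.inv_mul_le_iff ha ha').1 hr
        · rwa [ENNReal.div_le_iff_le_mul (.inl ha) (.inl ha'), mul_comm] at hrF

theorem inv_ofReal_mul_pow_rpow {a Λ : ℝ} (ha : 0 < a) (hΛ : 0 < Λ) (t : ℝ) (j : ℕ) :
    (ENNReal.ofReal (a * Λ ^ j) ^ t)⁻¹ =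
      (ENNReal.ofReal a ^ t)⁻¹ * ENNReal.ofReal (Real.exp (-(t * Real.log Λ))) ^ j := by
  have hpow : Λ ^ (-(t * j)) = Real.exp (-(t * Real.log Λ)) ^ j := by
    rw [← Real.exp_nat_mul, Real.rpow_def_of_pos hΛ]
    ring_nf
  rw [← ENNReal.rpow_neg, ← ENNReal.rpow_neg, ENNReal.ofReal_rpow_of_pos (by positivity),
    ENNReal.ofReal_rpow_of_pos ha, ← ENNReal.ofReal_pow (Real.exp_pos _).le, ← hpow,
    ← ENNReal.ofReal_mul (by positivity), Real.mul_rpow ha.le (by positivity),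
    ← Real.rpow_natCast, ← Real.rpow_mul hΛ.le, mul_neg, mul_comm (j : ℝ)]

theorem one_le_ofReal_mul_tsum_exp_neg {t : ℝ} (ht : 0 < t) :
    1 ≤ ENNReal.ofReal t * ∑' j : ℕ, ENNReal.ofReal (Real.exp (-t)) ^ j := by
  have h : 0 < 1 - Real.exp (-t) := sub_pos.2 (Real.exp_lt_one_iff.2 (neg_lt_zero.2 ht))
  rw [ENNReal.tsum_geometric, ← ENNReal.ofReal_one, ← ENNReal.ofReal_sub _ (Real.exp_pos _).le,
    ← ENNReal.ofReal_inv_of_pos h, ← ENNReal.ofReal_mul ht.le]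
  refine ENNReal.ofReal_le_ofReal ((le_div_iff₀ h).2 ?_)
  linarith [Real.add_one_le_exp (-t)]

theorem eventually_ofReal_rpow_mul_le_two {a : ℝ} (ha : 0 < a) (q : ℝ) :
    ∀ᶠ s in 𝓝[>] (0 : ℝ), ENNReal.ofReal a ^ (s * q) ≤ 2 := by
  have hlim : Tendsto (fun s : ℝ => a ^ (s * q)) (𝓝 0) (𝓝 1) := by
    have hcont : Continuous fun s : ℝ => a ^ (s * q) :=
      (Real.continuous_const_rpow ha.ne').comp (continuous_mul_const q)
    simpa only [zero_mul, Real.rpow_zero] using hcont.tendsto 0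
  filter_upwards [(hlim.mono_left nhdsWithin_le_nhds).eventually_le_const one_lt_two] with s hs
  rw [ENNReal.ofReal_rpow_of_pos ha, ← ENNReal.ofReal_ofNat 2]
  exact ENNReal.ofReal_le_ofReal hs

theorem HasGrowthExponent.mul_tsum_le_sobEnergy {n : ℕ} (hn : HasGrowthExponent ρ μ n)
    (hX : IsQuasiMetricMeasure ρ μ K₀) (hL : IsDoubling ρ μ L) {S : Set X} (hS : MeasurableSet S)
    (hSΩ : S ⊆ Ω) {Λ : ℝ} (hΛ : 1 < Λ) (hr : 0 < r) (hx : ρ o x ≤ r) {c : ℝ≥0∞}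
    (hc : ∀ r' ≥ r, c * μ (ball ρ o (Λ * r')) ≤ μ (S ∩ ρ o ⁻¹' Ico r' (Λ * r')))
    (hf : ∀ y ∈ S, |f x| ≤ 2 * |f x - f y|) {s : ℝ} (hq : 0 ≤ q) (hs : 0 ≤ s) :
    c / ENNReal.ofReal ((2 * (3 * K₀ ^ 2)) ^ n) * (ENNReal.ofReal |f x| / 2) ^ q /
      ENNReal.ofReal (2 * K₀ * (Λ * r)) ^ (s * q) *
        ∑' j : ℕ, ENNReal.ofReal (Real.exp (-(s * q * Real.log Λ))) ^ j ≤
      sobEnergy ρ μ Ω f q s x := by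
  have := hX.one_le
  have hΛ0 : 0 < Λ := one_pos.trans hΛ
  have hΛj (j : ℕ) : r ≤ Λ ^ j * r := le_mul_of_one_le_left hr.le (one_le_pow₀ hΛ.le)
  set A : ℕ → Set X := fun j => S ∩ ρ o ⁻¹' Ico (Λ ^ j * r) (Λ * (Λ ^ j * r))
  have hA (j : ℕ) : MeasurableSet (A j) := hS.inter (hX.measurable o measurableSet_Ico)
  have hmono : Monotone fun j : ℕ => Λ ^ j * r := fun i j hij => by
    have := hΛ.le
    dsimp only
    gcongr
  have hdisj : Pairwise (Function.onFun Disjoint A) := fun i j hij => by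
    have := (hmono.pairwise_disjoint_on_Ico_succ hij).preimage (ρ o)
    simp only [Nat.succ_eq_succ, Nat.succ_eq_add_one, pow_succ', mul_assoc] at this
    exact this.mono inter_subset_right inter_subset_right
  have hpow (j : ℕ) : (ENNReal.ofReal (2 * K₀ * (Λ * (Λ ^ j * r))) ^ (s * q))⁻¹ =
      (ENNReal.ofReal (2 * K₀ * (Λ * r)) ^ (s * q))⁻¹ *
        ENNReal.ofReal (Real.exp (-(s * q * Real.log Λ))) ^ j := by
    rw [← inv_ofReal_mul_pow_rpow (by positivity) hΛ0]
    congr 3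
    ring
  calc _ = ∑' j, c / ENNReal.ofReal ((2 * (3 * K₀ ^ 2)) ^ n) * (ENNReal.ofReal |f x| / 2) ^ q /
        ENNReal.ofReal (2 * K₀ * (Λ * (Λ ^ j * r))) ^ (s * q) := by
        simp only [div_eq_mul_inv _ (ENNReal.ofReal _ ^ (s * q)), hpow]
        simp only [← mul_assoc, ENNReal.tsum_mul_left]
    _ ≤ ∑' j, ∫⁻ y in A j, sobKernel ρ μ f q s x y ∂μ := by
        refine ENNReal.tsum_le_tsum fun j => ?_
        refine hn.le_setLIntegral_sobKernel hX hL (by positivity) ?_ (by positivity) hq (hA j)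
          (fun y hy => hy.2.2.le) (fun y hy => hf y hy.1) (hc _ (hΛj j))
        exact (hx.trans (hΛj j)).trans (le_mul_of_one_le_left (by positivity) hΛ.le)
    _ = ∫⁻ y in ⋃ j, A j, sobKernel ρ μ f q s x y ∂μ := (lintegral_iUnion hA hdisj _).symm
    _ ≤ sobEnergy ρ μ Ω f q s x :=
        lintegral_mono_set (iUnion_subset fun j => inter_subset_left.trans hSΩ)

theorem WMD.exists_eventually_mul_rpow_le_sobEnergy (hΩ : WMD ρ μ Ω) (hW : WRD ρ μ)
    (hX : IsQuasiMetricMeasure ρ μ K₀) (hL : IsDoubling ρ μ L) (hΩm : MeasurableSet Ω)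
    (hq : 0 < q) :
    ∃ (o : X) (c : ℝ≥0∞), c ≠ 0 ∧ c ≠ ∞ ∧ ∀ f : X → ℝ, Measurable f → ∀ ε : ℝ,
      μ (Ω ∩ {y | ε ≤ |f y|}) ≠ ∞ → ∀ R : ℝ, ∀ᶠ s in 𝓝[>] 0, ∀ x ∈ ball ρ o R,
        2 * ε ≤ |f x| →
          c * ENNReal.ofReal |f x| ^ q ≤ ENNReal.ofReal s * sobEnergy ρ μ Ω f q s x := by
  obtain ⟨o, Λ, c, hΛ, hc, hc', hann⟩ := hΩ.exists_mul_measure_ball_le_measure_annulus hW hX hL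
  obtain ⟨n, hn⟩ := hL.exists_hasGrowthExponent
  have := hX.one_le
  have hlog : 0 < Real.log Λ := Real.log_pos hΛ
  set Q := ENNReal.ofReal ((2 * (3 * K₀ ^ 2)) ^ n)
  have hQ : Q ≠ 0 := (ENNReal.ofReal_pos.2 (by positivity)).ne'
  set b := ENNReal.ofReal (q * Real.log Λ)
  have hb : b ≠ 0 := (ENNReal.ofReal_pos.2 (by positivity)).ne'
  have h2q : (2 : ℝ≥0∞) ^ q ≠ ∞ := by finiteness
  refine ⟨o, c / Q / 2 ^ q / 2 / b, by simp [hc, Q, h2q, b], by finiteness, fun f hf ε hε R => ?_⟩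
  obtain ⟨r₀, hr₀⟩ := eventually_atTop.1 (hann _ hε)
  set r := max r₀ (max R 1)
  have hr : 0 < r := by positivity
  have hρ : 0 < 2 * K₀ * (Λ * r) := by positivity
  filter_upwards [eventually_ofReal_rpow_mul_le_two hρ q, self_mem_nhdsWithin]
    with s hs2 (hs : 0 < s) x hx hfx
  have hfS (y : X) (hy : y ∈ Ω \ {y | ε ≤ |f y|}) : |f x| ≤ 2 * |f x - f y| := by
    have : |f y| < ε := not_le.1 hy.2
    linarith [abs_sub_abs_le_abs_sub (f x) (f y)]
  have henergy := hn.mul_tsum_le_sobEnergy hX hL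
    (hΩm.diff (measurableSet_le measurable_const hf.abs)) sdiff_subset hΛ hr
    (hx.le.trans ((le_max_left R 1).trans (le_max_right _ _)))
    (fun r' hr' => hr₀ r' ((le_max_left _ _).trans hr')) hfS hq.le hs.le
  set F := ENNReal.ofReal |f x|
  set P := ENNReal.ofReal (2 * K₀ * (Λ * r)) ^ (s * q)
  set T := ∑' j : ℕ, ENNReal.ofReal (Real.exp (-(s * q * Real.log Λ))) ^ j
  have hT : 1 ≤ ENNReal.ofReal s * b * T := by
    rw [← ENNReal.ofReal_mul hs.le, ← mul_assoc]
    exact one_le_ofReal_mul_tsum_exp_neg (by positivity)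
  calc c / Q / 2 ^ q / 2 / b * F ^ q = c / Q * (F / 2) ^ q / 2 / b * 1 := by
        rw [ENNReal.div_rpow_of_nonneg _ _ hq.le]
        simp only [div_eq_mul_inv]
        ring
    _ ≤ c / Q * (F / 2) ^ q / P / b * (ENNReal.ofReal s * b * T) := by gcongr
    _ = b⁻¹ * b * (ENNReal.ofReal s * (c / Q * (F / 2) ^ q / P * T)) := by
        simp only [div_eq_mul_inv]
        ring
    _ ≤ ENNReal.ofReal s * sobEnergy ρ μ Ω f q s x := by
        rw [ENNReal.inv_mul_cancel hb ENNReal.ofReal_ne_top, one_mul]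
        gcongr

theorem WMD.exists_mul_vnorm_le_liminf (hΩ : WMD ρ μ Ω) (hW : WRD ρ μ)
    (hX : IsQuasiMetricMeasure ρ μ K₀) (hL : IsDoubling ρ μ L) (hΩm : MeasurableSet Ω)
    (hq : 0 < q) :
    ∃ c : ℝ≥0∞, c ≠ 0 ∧ c ≠ ∞ ∧ ∀ (rr : X → ℝ) (r' : ℝ), (∀ x, 0 < rr x) → (∀ x, rr x ≤ r') →
      ∀ f : X → ℝ, Measurable f → vnorm μ rr Ω (fun x => ENNReal.ofReal |f x|) < ∞ →
        c * vnorm μ rr Ω (fun x => ENNReal.ofReal |f x|) ≤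
          liminf (fun s => ENNReal.ofReal s ^ (1 / q) * vnorm μ rr Ω (sob ρ μ Ω f q s))
            (𝓝[>] 0) := by
  obtain ⟨o, c, hc, hc', henergy⟩ := hΩ.exists_eventually_mul_rpow_le_sobEnergy hW hX hL hΩm hq
  have hcq : c ^ (1 / q) ≠ 0 := by simp [hc, hc']
  have hcq' : c ^ (1 / q) ≠ ∞ := by finiteness
  refine ⟨c ^ (1 / q), hcq, hcq', fun rr r' hrr hrr' f hf hfin => ?_⟩
  set D : ℕ → Set X := fun N => Ω ∩ (ball ρ o (N + 1) ∩ {x | 2 * (1 / ((N : ℝ) + 1)) ≤ |f x|})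
  have hD : Monotone D := by
    refine fun M N hMN x ⟨hx, hxM, hfx⟩ => ⟨hx, ball_mono (by gcongr) hxM, ?_⟩
    exact le_trans (by gcongr) (show 2 * (1 / ((M : ℝ) + 1)) ≤ |f x| from hfx)
  have hDm (N : ℕ) : MeasurableSet (D N) := hΩm.inter
    ((hX.measurableSet_ball o _).inter (measurableSet_le measurable_const hf.abs))
  have hzero (x : X) (hx : x ∈ Ω) (hxD : x ∉ ⋃ N, D N) : f x = 0 := by
    contrapose! hxD
    obtain ⟨N, hN⟩ := exists_nat_gt (max (ρ o x) (2 / |f x|))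
    have hNρ : ρ o x < N + 1 := by linarith [le_max_left (ρ o x) (2 / |f x|)]
    have hNf : 2 / |f x| ≤ N + 1 := by linarith [le_max_right (ρ o x) (2 / |f x|)]
    refine mem_iUnion.2 ⟨N, hx, hNρ, ?_⟩
    rw [mem_ofPred_eq, mul_one_div]
    exact (div_le_comm₀ (by positivity) (by positivity)).1 hNf
  have hsob (N : ℕ) : ∀ᶠ s in 𝓝[>] (0 : ℝ), ∀ x ∈ D N,
      c ^ (1 / q) * ENNReal.ofReal |f x| ≤ ENNReal.ofReal s ^ (1 / q) * sob ρ μ Ω f q s x := by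
    have hfin' : μ (Ω ∩ {y | 1 / ((N : ℝ) + 1) ≤ |f y|}) ≠ ∞ := by
      have hN : 0 < 1 / ((N : ℝ) + 1) := by positivity
      have := measure_inter_le_ne_top_of_vnorm_lt_top (fun x => (hrr x).le) hrr' hΩm
        hf.abs.ennreal_ofReal hfin (ENNReal.ofReal_pos.2 hN).ne'
      simpa only [ENNReal.ofReal_le_ofReal_iff (abs_nonneg _)] using this
    filter_upwards [henergy f hf _ hfin' (N + 1)] with s hs x hx
    have := ENNReal.rpow_le_rpow (hs x hx.2.1 hx.2.2) (one_div_nonneg.2 hq.le)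
    rwa [ENNReal.mul_rpow_of_nonneg _ _ (by positivity), ← ENNReal.rpow_mul,
      mul_one_div_cancel hq.ne', ENNReal.rpow_one,
      ENNReal.mul_rpow_of_nonneg _ _ (by positivity)] at this
  rw [← vnorm_const_mul hcq hcq']
  refine (vnorm_le_liminf hrr hΩm (fun _ => inter_subset_left) hD hDm
    (fun x hx hxD => by simp [hzero x hx hxD]) hsob).trans_eq (liminf_congr ?_)
  filter_upwards [self_mem_nhdsWithin] with s (hs : 0 < s)
  exact vnorm_const_mul (by simp [hs]) (by finiteness)

end LowerBound

section UpperBound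

variable {E : Set X} {f : X → ℝ} {q s s₀ r : ℝ} {x y : X} {n : ℕ}

theorem add_rpow_le_two_rpow_mul (u v : ℝ≥0∞) (hq : 0 ≤ q) :
    (u + v) ^ q ≤ 2 ^ q * (u ^ q + v ^ q) :=
  calc (u + v) ^ q ≤ (2 * max u v) ^ q := by
        rw [two_mul]
        gcongr
        exacts [le_max_left _ _, le_max_right _ _]
    _ = 2 ^ q * max (u ^ q) (v ^ q) := by
        rw [ENNReal.mul_rpow_of_nonneg _ _ hq, (ENNReal.monotone_rpow_of_nonneg hq).map_max]
    _ ≤ 2 ^ q * (u ^ q + v ^ q) := by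
        gcongr
        exact max_le_add_of_nonneg zero_le zero_le

theorem sobKernel_le_of_le_one (hs : s ≤ s₀) (hq : 0 ≤ q) (hxy : ρ x y ≤ 1) :
    sobKernel ρ μ f q s x y ≤ sobKernel ρ μ f q s₀ x y := by
  unfold sobKernel
  gcongr _ / (_ * ?_)
  exact ENNReal.rpow_le_rpow_of_exponent_ge (ENNReal.ofReal_le_one.2 hxy) (by gcongr)

theorem HasGrowthExponent.sobKernel_le (hn : HasGrowthExponent ρ μ n)
    (hX : IsQuasiMetricMeasure ρ μ K₀) (hr : 0 < r) (hrxy : r ≤ ρ x y) (hxyr : ρ x y < 2 * r)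
    (hq : 0 ≤ q) (hsq : 0 ≤ s * q) :
    sobKernel ρ μ f q s x y ≤ 2 ^ q * ENNReal.ofReal ((2 * (3 * K₀)) ^ n) *
      (ENNReal.ofReal r ^ (s * q))⁻¹ / μ (ball ρ x (2 * r)) *
        (ENNReal.ofReal |f x| ^ q + ENNReal.ofReal |f y| ^ q) := by
  have hK := hX.one_le
  set Q := ENNReal.ofReal ((2 * (3 * K₀)) ^ n)
  have hQ : Q ≠ 0 := (ENNReal.ofReal_pos.2 (by positivity)).ne'
  have hQ' : Q ≠ ∞ := ENNReal.ofReal_ne_top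
  have hnum : ENNReal.ofReal |f x - f y| ^ q ≤
      2 ^ q * (ENNReal.ofReal |f x| ^ q + ENNReal.ofReal |f y| ^ q) := by
    refine le_trans ?_ (add_rpow_le_two_rpow_mul _ _ hq)
    rw [← ENNReal.ofReal_add (abs_nonneg _) (abs_nonneg _)]
    gcongr
    exact abs_sub _ _
  have hU : μ (ball ρ x (2 * r)) / Q ≤ U ρ μ x y := by
    have hρ : 0 < ρ x y := hr.trans_le hrxy
    refine le_min ?_ ?_ <;>
      refine ENNReal.div_le_of_le_mul' (hn.measure_ball_le hX hρ (by linarith) ?_)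
    · rw [hX.self]
      nlinarith [hxyr]
    · rw [hX.symm y x]
      nlinarith [hxyr]
  calc sobKernel ρ μ f q s x y
      ≤ 2 ^ q * (ENNReal.ofReal |f x| ^ q + ENNReal.ofReal |f y| ^ q) /
          (μ (ball ρ x (2 * r)) / Q * ENNReal.ofReal r ^ (s * q)) := by
        unfold sobKernel
        gcongr
    _ = _ := by
        have hr' : ENNReal.ofReal r ^ (s * q) ≠ 0 := by simp [hr]
        rw [div_eq_mul_inv, ENNReal.mul_inv (.inr (by finiteness)) (.inr hr'),
          ENNReal.inv_div (.inl hQ') (.inl hQ)]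
        simp only [div_eq_mul_inv]
        ring

theorem HasGrowthExponent.setLIntegral_sobKernel_far_le (hn : HasGrowthExponent ρ μ n)
    (hX : IsQuasiMetricMeasure ρ μ K₀) (hL : IsDoubling ρ μ L) (hE : MeasurableSet E)
    (hq : 0 ≤ q) (hs : 0 ≤ s) {H : X → ℝ≥0∞} (hH : Measurable H)
    (hfH : ∀ y ∈ E, ENNReal.ofReal |f y| ^ q ≤ H y) (hx : x ∈ E) :
    ∫⁻ y in E \ ball ρ x 1, sobKernel ρ μ f q s x y ∂μ ≤
      2 ^ q * ENNReal.ofReal ((2 * (3 * K₀)) ^ n) *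
        ∑' k : ℕ, ENNReal.ofReal (Real.exp (-(s * q * Real.log 2))) ^ k *
          (H x + ⨍⁻ y in ball ρ x (2 * 2 ^ k), H y ∂μ) := by
  set Q := ENNReal.ofReal ((2 * (3 * K₀)) ^ n)
  set θ := ENNReal.ofReal (Real.exp (-(s * q * Real.log 2)))
  set B : ℕ → Set X := fun k => ball ρ x (2 * 2 ^ k)
  set A : ℕ → Set X := fun k => E ∩ (B k \ ball ρ x (2 ^ k))
  have hA (k : ℕ) : MeasurableSet (A k) :=
    hE.inter ((hX.measurableSet_ball x _).diff (hX.measurableSet_ball x _))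
  have hμB (k : ℕ) : μ (B k) ≠ 0 := (hL.measure_ball_pos x (by positivity)).ne'
  have hμB' (k : ℕ) : μ (B k) ≠ ∞ := (hL.measure_ball_lt_top x (by positivity)).ne
  have hcover : E \ ball ρ x 1 ⊆ ⋃ k, A k := fun y ⟨hyE, hy⟩ => by
    have hy1 : 1 ≤ ρ x y := not_lt.1 hy
    obtain ⟨k, hk, hk'⟩ := exists_nat_pow_near hy1 one_lt_two
    exact mem_iUnion.2 ⟨k, hyE, hk'.trans_eq (pow_succ' 2 k), not_lt.2 hk⟩
  have hkernel (k : ℕ) (y : X) (hy : y ∈ A k) :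
      sobKernel ρ μ f q s x y ≤ 2 ^ q * Q * θ ^ k / μ (B k) * (H x + H y) := by
    have hpow : (ENNReal.ofReal (2 ^ k) ^ (s * q))⁻¹ = θ ^ k := by
      simpa using inv_ofReal_mul_pow_rpow one_pos two_pos (s * q) k
    rw [← hpow]
    refine (hn.sobKernel_le hX (by positivity) (not_lt.1 hy.2.2) hy.2.1 hq (by positivity)).trans ?_
    gcongr
    exacts [hfH x hx, hfH y hy.1]
  calc ∫⁻ y in E \ ball ρ x 1, sobKernel ρ μ f q s x y ∂μ
      ≤ ∑' k, ∫⁻ y in A k, sobKernel ρ μ f q s x y ∂μ :=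
        (lintegral_mono_set hcover).trans (lintegral_iUnion_le _ _)
    _ ≤ ∑' k, ∫⁻ y in B k, 2 ^ q * Q * θ ^ k / μ (B k) * (H x + H y) ∂μ :=
        ENNReal.tsum_le_tsum fun k => (setLIntegral_mono' (hA k) (hkernel k)).trans
          (lintegral_mono_set (inter_subset_right.trans sdiff_subset))
    _ = ∑' k, 2 ^ q * Q * (θ ^ k * (H x + ⨍⁻ y in B k, H y ∂μ)) := by
        refine tsum_congr fun k => ?_
        rw [lintegral_const_mul _ (hH.const_add _), lintegral_add_left measurable_const,
          setLIntegral_const, setLAverage_eq]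
        conv_rhs => rw [← ENNReal.mul_div_cancel_right (a := H x) (hμB k) (hμB' k)]
        simp only [div_eq_mul_inv]
        ring
    _ = 2 ^ q * Q * ∑' k, θ ^ k * (H x + ⨍⁻ y in B k, H y ∂μ) := ENNReal.tsum_mul_left

theorem ofReal_le_mul_one_sub_exp_neg {t T : ℝ} (ht : 0 ≤ t) (htT : t ≤ T) :
    ENNReal.ofReal t ≤ ENNReal.ofReal (1 + T) * (1 - ENNReal.ofReal (Real.exp (-t))) := by
  rw [← ENNReal.ofReal_one, ← ENNReal.ofReal_sub _ (Real.exp_pos _).le,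
    ← ENNReal.ofReal_mul (by linarith)]
  refine ENNReal.ofReal_le_ofReal ?_
  have hexp : Real.exp (-t) * (1 + t) ≤ 1 := by
    calc Real.exp (-t) * (1 + t) ≤ Real.exp (-t) * Real.exp t := by
          gcongr
          linarith [Real.add_one_le_exp t]
      _ = 1 := by rw [← Real.exp_add, neg_add_cancel, Real.exp_zero]
  nlinarith [Real.exp_pos (-t), Real.exp_le_one_iff.2 (neg_nonpos.2 ht)]

theorem HasGrowthExponent.exists_mul_sobEnergy_le (hn : HasGrowthExponent ρ μ n)
    (hX : IsQuasiMetricMeasure ρ μ K₀) (hL : IsDoubling ρ μ L) (hE : MeasurableSet E)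
    (hq : 0 < q) :
    ∃ A, A ≠ ∞ ∧ ∀ (f : X → ℝ) (H : X → ℝ≥0∞), Measurable H →
      (∀ y ∈ E, ENNReal.ofReal |f y| ^ q ≤ H y) → ∀ s s₀, 0 ≤ s → s ≤ s₀ → s ≤ 1 →
        ∃ w : ℕ → ℝ≥0∞, ∑' k, w k ≤ 1 ∧ ∀ x ∈ E,
          ENNReal.ofReal s * sobEnergy ρ μ E f q s x ≤ ENNReal.ofReal s * sobEnergy ρ μ E f q s₀ x +
            A * ∑' k, w k * (H x + ⨍⁻ y in ball ρ x (2 * 2 ^ k), H y ∂μ) := by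
  have hlog : 0 < q * Real.log 2 := mul_pos hq (Real.log_pos one_lt_two)
  set b := ENNReal.ofReal (q * Real.log 2)
  have hb : b ≠ 0 := (ENNReal.ofReal_pos.2 hlog).ne'
  set A := 2 ^ q * ENNReal.ofReal ((2 * (3 * K₀)) ^ n)
  set C := ENNReal.ofReal (1 + q * Real.log 2)
  refine ⟨C / b * A, by finiteness, fun f H hH hfH s s₀ hs hs₀ hs1 => ?_⟩
  set θ := ENNReal.ofReal (Real.exp (-(s * q * Real.log 2)))
  have hsθ : ENNReal.ofReal s ≤ C / b * (1 - θ) := by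
    rw [← ENNReal.mul_div_right_comm,
      ENNReal.le_div_iff_mul_le (.inl hb) (.inl ENNReal.ofReal_ne_top), ← ENNReal.ofReal_mul hs,
      ← mul_assoc]
    exact ofReal_le_mul_one_sub_exp_neg (by positivity) (by nlinarith)
  refine ⟨fun k => (1 - θ) * θ ^ k, ?_, fun x hx => ?_⟩
  · rw [ENNReal.tsum_mul_left, ENNReal.tsum_geometric]
    exact ENNReal.mul_inv_le_one _
  have hnear : ∫⁻ y in E ∩ ball ρ x 1, sobKernel ρ μ f q s x y ∂μ ≤ sobEnergy ρ μ E f q s₀ x :=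
    (setLIntegral_mono' (hE.inter (hX.measurableSet_ball x 1)) fun y hy =>
      sobKernel_le_of_le_one hs₀ hq.le (le_of_lt hy.2)).trans (lintegral_mono_set inter_subset_left)
  rw [sobEnergy, ← lintegral_inter_add_sdiff _ E (hX.measurableSet_ball x 1), mul_add]
  refine add_le_add (mul_le_mul_right hnear _) ?_
  calc ENNReal.ofReal s * ∫⁻ y in E \ ball ρ x 1, sobKernel ρ μ f q s x y ∂μ
      ≤ C / b * (1 - θ) * (A * ∑' k, θ ^ k * (H x + ⨍⁻ y in ball ρ x (2 * 2 ^ k), H y ∂μ)) := by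
        gcongr
        exact hn.setLIntegral_sobKernel_far_le hX hL hE hq.le hs hH hfH hx
    _ = C / b * A * ∑' k, (1 - θ) * θ ^ k * (H x + ⨍⁻ y in ball ρ x (2 * 2 ^ k), H y ∂μ) := by
        simp only [mul_assoc (1 - θ), ENNReal.tsum_mul_left]
        ring

theorem HasGrowthExponent.exists_measurable_majorant_tsum_setLAverage
    (hn : HasGrowthExponent ρ μ n) (hX : IsQuasiMetricMeasure ρ μ K₀) (hL : IsDoubling ρ μ L)
    {p : X → ℝ} {p' P c : ℝ} {o : X} (hpm : Measurable p) (hp : ∀ x, 1 ≤ p x) (hpP : ∀ x, p x ≤ P)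
    (hp' : 1 ≤ p') (hlog : ∀ x, |p x - p'| * Real.log (Real.exp 1 + ρ o x) ≤ c) :
    ∃ A, A ≠ ∞ ∧ ∀ H, Measurable H → ∫⁻ x, H x ^ p x ∂μ ≤ 1 →
      ∀ w : ℕ → ℝ≥0∞, ∑' k, w k ≤ 1 → ∀ R : ℕ → ℝ, (∀ k, 1 ≤ R k) →
        ∃ G, Measurable G ∧ ∫⁻ x, G x ∂μ ≤ A ∧
          ∀ x, (∑' k, w k * (H x + ⨍⁻ y in ball ρ x (R k), H y ∂μ)) ^ p x ≤ G x := by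
  obtain ⟨B, hB, hkey⟩ := hn.exists_rpow_setLAverage_ball_le hX hL hp hpP hp' hlog (n + 1)
  obtain ⟨M, hM, hmajorant⟩ := hn.exists_measurable_majorant_setLAverage hX hL
  set φ := decayWeight ρ o (n + 1)
  have hφm : Measurable φ := measurable_decayWeight hX o (n + 1)
  have hφ : ∫⁻ x, φ x ∂μ ≠ ∞ := hn.lintegral_decayWeight_ne_top hX hL o
  set Φ := ∫⁻ x, φ x ∂μ
  refine ⟨2 ^ P * (1 + B * (M * (1 + Φ) + Φ)), by finiteness, fun H hH hHp w hw R hR => ?_⟩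
  have hHpm : Measurable fun x => H x ^ p x := hH.pow hpm
  choose Ψ hΨm hΨ hΨint using fun k => hmajorant (R k) (one_pos.trans_le (hR k)) _ (hHpm.add hφm)
  have hΨint' (k : ℕ) : ∫⁻ x, Ψ k x ∂μ ≤ M * (1 + Φ) := by
    refine (hΨint k).trans ?_
    gcongr
    exact (lintegral_add_right _ hφm).trans_le (by gcongr)
  refine ⟨fun x => 2 ^ P * ∑' k, w k * (H x ^ p x + B * (Ψ k x + φ x)), by fun_prop, ?_, ?_⟩
  · calc ∫⁻ x, 2 ^ P * ∑' k, w k * (H x ^ p x + B * (Ψ k x + φ x)) ∂μ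
        = 2 ^ P * ∑' k, w k * (∫⁻ x, H x ^ p x ∂μ + B * (∫⁻ x, Ψ k x ∂μ + Φ)) := by
          rw [lintegral_const_mul _ (by fun_prop), lintegral_tsum (by fun_prop)]
          congr! 3 with k
          rw [lintegral_const_mul _ (by fun_prop), lintegral_add_left hHpm,
            lintegral_const_mul _ (by fun_prop), lintegral_add_right _ hφm]
      _ ≤ 2 ^ P * ∑' k, w k * (1 + B * (M * (1 + Φ) + Φ)) := by
          gcongr with k
          exact hΨint' k
      _ ≤ 2 ^ P * (1 + B * (M * (1 + Φ) + Φ)) := by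
          rw [ENNReal.tsum_mul_right]
          gcongr
          exact mul_le_of_le_one_left' hw
  · intro x
    calc (∑' k, w k * (H x + ⨍⁻ y in ball ρ x (R k), H y ∂μ)) ^ p x
        ≤ ∑' k, w k * (H x + ⨍⁻ y in ball ρ x (R k), H y ∂μ) ^ p x :=
          rpow_tsum_mul_le_tsum_mul_rpow hw (hp x) _
      _ ≤ ∑' k, w k * (2 ^ P * (H x ^ p x + B * (Ψ k x + φ x))) := by
          gcongr with k
          refine (add_rpow_le_two_rpow_mul _ _ (zero_le_one.trans (hp x))).trans ?_
          gcongr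
          · exact one_le_two
          · exact hpP x
          · exact (hkey H hH hHp (R k) (hR k) x).trans (by gcongr; exact hΨ k x)
      _ = 2 ^ P * ∑' k, w k * (H x ^ p x + B * (Ψ k x + φ x)) := by
          simp only [mul_left_comm _ (2 ^ P : ℝ≥0∞), ENNReal.tsum_mul_left]

theorem ofReal_rpow_mul_sob_rpow (hq : 0 < q) (t : ℝ) :
    (ENNReal.ofReal s ^ (1 / q) * sob ρ μ E f q s₀ x) ^ t =
      (ENNReal.ofReal s * sobEnergy ρ μ E f q s₀ x) ^ (t / q) := by
  rw [sob_eq_sobEnergy_rpow, ← ENNReal.mul_rpow_of_nonneg _ _ (by positivity), ← ENNReal.rpow_mul,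
    one_div_mul_eq_div]

theorem rpow_le_of_le_add_mul {u v D S : ℝ≥0∞} {p P : ℝ} (hp : 0 ≤ p) (hpP : p ≤ P)
    (h : u ≤ v + D * S) : u ^ p ≤ 2 ^ P * v ^ p + 2 ^ P * (1 + D) ^ P * S ^ p :=
  calc u ^ p ≤ 2 ^ p * (v ^ p + (D * S) ^ p) :=
        (ENNReal.rpow_le_rpow h hp).trans (add_rpow_le_two_rpow_mul _ _ hp)
    _ ≤ 2 ^ P * (v ^ p + (1 + D) ^ P * S ^ p) := by
        rw [ENNReal.mul_rpow_of_nonneg _ _ hp]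
        gcongr
        · exact one_le_two
        · exact (ENNReal.rpow_le_rpow le_add_self hp).trans
            (ENNReal.rpow_le_rpow_of_exponent_le le_self_add hpP)
    _ = 2 ^ P * v ^ p + 2 ^ P * (1 + D) ^ P * S ^ p := by ring

theorem lintegral_indicator_rpow_eq_modular {rr : X → ℝ} (hE : MeasurableSet E) (hq : 0 < q)
    (hrr : ∀ x, 0 < rr x) (g : X → ℝ≥0∞) :
    ∫⁻ x, E.indicator (fun y => g y ^ q) x ^ (rr x / q) ∂μ = modular μ rr E g := by
  rw [modular, ← lintegral_indicator hE]
  refine lintegral_congr fun x => ?_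
  by_cases hx : x ∈ E
  · rw [indicator_of_mem hx, indicator_of_mem hx, ← ENNReal.rpow_mul, mul_div_cancel₀ _ hq.ne']
  · rw [indicator_of_notMem hx, indicator_of_notMem hx,
      ENNReal.zero_rpow_of_pos (div_pos (hrr x) hq)]

theorem HasGrowthExponent.exists_modular_mul_sob_le (hn : HasGrowthExponent ρ μ n)
    (hX : IsQuasiMetricMeasure ρ μ K₀) (hL : IsDoubling ρ μ L) (hE : MeasurableSet E) (hq : 0 < q)
    {rr : X → ℝ} {rlim rM c : ℝ} {o : X} (hrrm : Measurable rr) (hrr : ∀ x, q ≤ rr x)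
    (hrM : ∀ x, rr x ≤ rM) (hrlim : q ≤ rlim)
    (hlog : ∀ x, |rr x - rlim| * Real.log (Real.exp 1 + ρ o x) ≤ c) :
    ∃ A B, A ≠ ∞ ∧ B ≠ ∞ ∧ ∀ f, Measurable f →
      modular μ rr E (fun x => ENNReal.ofReal |f x|) ≤ 1 → ∀ s s₀, 0 ≤ s → s ≤ s₀ → s ≤ 1 →
        modular μ rr E (fun x => ENNReal.ofReal s ^ (1 / q) * sob ρ μ E f q s x) ≤
          B * modular μ rr E (fun x => ENNReal.ofReal s ^ (1 / q) * sob ρ μ E f q s₀ x) + A := by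
  obtain ⟨D, hD, hsplit⟩ := hn.exists_mul_sobEnergy_le hX hL hE hq
  obtain ⟨M, hM, hmajorant⟩ := hn.exists_measurable_majorant_tsum_setLAverage hX hL
    (p := fun x => rr x / q) (p' := rlim / q) (P := rM / q) (c := c / q) (o := o)
    (hrrm.div_const q) (fun x => (one_le_div hq).2 (hrr x))
    (fun x => div_le_div_of_nonneg_right (hrM x) hq.le) ((one_le_div hq).2 hrlim) fun x => by
      rw [← sub_div, abs_div, abs_of_pos hq, div_mul_eq_mul_div]
      gcongr
      exact hlog x
  have hr (x : X) : 0 < rr x := hq.trans_le (hrr x)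
  refine ⟨2 ^ (rM / q) * (1 + D) ^ (rM / q) * M, 2 ^ (rM / q), by finiteness, by finiteness,
    fun f hf hfm s s₀ hs hs₀ hs1 => ?_⟩
  set H := E.indicator fun y => ENNReal.ofReal |f y| ^ q
  have hH : Measurable H := (hf.abs.ennreal_ofReal.pow_const q).indicator hE
  have hHp : ∫⁻ x, H x ^ (rr x / q) ∂μ ≤ 1 :=
    (lintegral_indicator_rpow_eq_modular hE hq hr _).trans_le hfm
  have hfH (y : X) (hy : y ∈ E) : ENNReal.ofReal |f y| ^ q ≤ H y := by
    simp only [H, indicator_of_mem hy, le_refl]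
  obtain ⟨w, hw, henergy⟩ := hsplit f H hH hfH s s₀ hs hs₀ hs1
  obtain ⟨G, hGm, hG, hHG⟩ := hmajorant H hH hHp w hw _ fun k =>
    (one_le_two.trans (le_mul_of_one_le_right zero_le_two (one_le_pow₀ one_le_two)))
  have hpointwise (x : X) (hx : x ∈ E) :
      (ENNReal.ofReal s ^ (1 / q) * sob ρ μ E f q s x) ^ rr x ≤
        2 ^ (rM / q) * (ENNReal.ofReal s ^ (1 / q) * sob ρ μ E f q s₀ x) ^ rr x +
          2 ^ (rM / q) * (1 + D) ^ (rM / q) * G x := by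
    rw [ofReal_rpow_mul_sob_rpow hq, ofReal_rpow_mul_sob_rpow hq]
    refine (rpow_le_of_le_add_mul (div_pos (hr x) hq).le
      (div_le_div_of_nonneg_right (hrM x) hq.le) (henergy x hx)).trans ?_
    gcongr
    exact hHG x
  calc modular μ rr E (fun x => ENNReal.ofReal s ^ (1 / q) * sob ρ μ E f q s x)
      ≤ ∫⁻ x in E, (2 ^ (rM / q) * (ENNReal.ofReal s ^ (1 / q) * sob ρ μ E f q s₀ x) ^ rr x +
          2 ^ (rM / q) * (1 + D) ^ (rM / q) * G x) ∂μ := setLIntegral_mono' hE hpointwise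
    _ = 2 ^ (rM / q) * modular μ rr E (fun x => ENNReal.ofReal s ^ (1 / q) * sob ρ μ E f q s₀ x) +
          2 ^ (rM / q) * (1 + D) ^ (rM / q) * ∫⁻ x in E, G x ∂μ := by
        rw [lintegral_add_right _ (by fun_prop), lintegral_const_mul' _ _ (by finiteness),
          lintegral_const_mul _ hGm, modular]
    _ ≤ _ := by
        gcongr
        exact (setLIntegral_le_lintegral E G).trans hG

theorem HasGrowthExponent.exists_eventually_mul_vnorm_sob_le (hn : HasGrowthExponent ρ μ n)
    (hX : IsQuasiMetricMeasure ρ μ K₀) (hL : IsDoubling ρ μ L) (hE : MeasurableSet E) (hq : 0 < q)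
    {rr : X → ℝ} {rlim rM c : ℝ} {o : X} (hrrm : Measurable rr) (hrr : ∀ x, q ≤ rr x)
    (hrM : ∀ x, rr x ≤ rM) (hrlim : q ≤ rlim)
    (hlog : ∀ x, |rr x - rlim| * Real.log (Real.exp 1 + ρ o x) ≤ c) :
    ∃ A : ℝ≥0∞, A ≠ 0 ∧ A ≠ ∞ ∧ ∀ f, Measurable f →
      modular μ rr E (fun x => ENNReal.ofReal |f x|) ≤ 1 →
        ∀ s₀ > 0, vnorm μ rr E (sob ρ μ E f q s₀) < ∞ →
          ∀ᶠ s in 𝓝[>] 0, ENNReal.ofReal s ^ (1 / q) * vnorm μ rr E (sob ρ μ E f q s) ≤ A := by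
  obtain ⟨A, B, hA, hB, hmodular⟩ :=
    hn.exists_modular_mul_sob_le hX hL hE hq hrrm hrr hrM hrlim hlog
  refine ⟨(1 + A) ^ (1 / q), by simp [hA], by finiteness, fun f hf hfm s₀ hs₀ hfin => ?_⟩
  have hscale : Tendsto (fun s : ℝ => ENNReal.ofReal s ^ (1 / q)) (𝓝[>] 0) (𝓝 0) := by
    have : Continuous fun s : ℝ => ENNReal.ofReal s ^ (1 / q) :=
      ENNReal.continuous_rpow_const.comp ENNReal.continuous_ofReal
    simpa [hq] using (this.tendsto 0).mono_left nhdsWithin_le_nhds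
  have hzero : Tendsto (fun s => B * modular μ rr E fun x =>
      ENNReal.ofReal s ^ (1 / q) * sob ρ μ E f q s₀ x) (𝓝[>] 0) (𝓝 0) := by
    simpa using ENNReal.Tendsto.const_mul
      ((tendsto_modular_const_mul_zero hq hrr hfin).comp hscale) (.inr hB)
  filter_upwards [hzero.eventually_le_const one_pos, Ioo_mem_nhdsGT (lt_min hs₀ one_pos)]
    with s hs ⟨hs0, hs1⟩
  rw [← vnorm_const_mul (by simp [hs0]) (by finiteness)]
  refine vnorm_le_rpow_of_modular_le hq hrr le_self_add ?_
  exact (hmodular f hf hfm s s₀ hs0.le (hs1.trans_le (min_le_left _ _)).le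
    (hs1.trans_le (min_le_right _ _)).le).trans (add_le_add_left hs _)

theorem sob_const_mul (hq : 0 < q) {l : ℝ} (hl : 0 ≤ l) :
    sob ρ μ E (fun x => l * f x) q s = fun x => ENNReal.ofReal l * sob ρ μ E f q s x := by
  funext x
  have hkernel (y : X) : sobKernel ρ μ (fun x => l * f x) q s x y =
      ENNReal.ofReal l ^ q * sobKernel ρ μ f q s x y := by
    rw [sobKernel, ← mul_sub, abs_mul, abs_of_nonneg hl, ENNReal.ofReal_mul hl,
      ENNReal.mul_rpow_of_nonneg _ _ hq.le, mul_div_assoc, sobKernel]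
  simp only [sob_eq_sobEnergy_rpow, sobEnergy, hkernel]
  rw [lintegral_const_mul' _ _ (by finiteness), ENNReal.mul_rpow_of_nonneg _ _ (by positivity),
    ← ENNReal.rpow_mul, mul_one_div_cancel hq.ne', ENNReal.rpow_one]

theorem HasGrowthExponent.exists_limsup_le_mul_vnorm (hn : HasGrowthExponent ρ μ n)
    (hX : IsQuasiMetricMeasure ρ μ K₀) (hL : IsDoubling ρ μ L) (hE : MeasurableSet E) (hq : 0 < q)
    {rr : X → ℝ} {rlim rM c : ℝ} {o : X} (hrrm : Measurable rr) (hrr : ∀ x, q ≤ rr x)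
    (hrM : ∀ x, rr x ≤ rM) (hrlim : q ≤ rlim)
    (hlog : ∀ x, |rr x - rlim| * Real.log (Real.exp 1 + ρ o x) ≤ c) :
    ∃ A : ℝ≥0∞, A ≠ 0 ∧ A ≠ ∞ ∧ ∀ f, Measurable f →
      (∃ s₀ > 0, vnorm μ rr E (sob ρ μ E f q s₀) < ∞) →
        limsup (fun s : ℝ => ENNReal.ofReal s ^ (1 / q) * vnorm μ rr E (sob ρ μ E f q s)) (𝓝[>] 0) ≤
          A * vnorm μ rr E (fun x => ENNReal.ofReal |f x|) := by
  obtain ⟨A, hA0, hA, hbound⟩ :=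
    hn.exists_eventually_mul_vnorm_sob_le hX hL hE hq hrrm hrr hrM hrlim hlog
  refine ⟨A, hA0, hA, fun f hf ⟨s₀, hs₀, hfin⟩ => ?_⟩
  rw [mul_comm, ← ENNReal.div_le_iff_le_mul (.inl hA0) (.inl hA)]
  refine le_of_forall_gt_imp_ge_of_dense fun l hl => ?_
  rw [ENNReal.div_le_iff_le_mul (.inl hA0) (.inl hA)]
  rcases eq_or_ne l ∞ with rfl | hl'
  · rw [ENNReal.top_mul hA0]
    exact le_top
  lift l to ℝ≥0 using hl'
  have hl0 : (l : ℝ≥0∞) ≠ 0 := (bot_le.trans_lt hl).ne'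
  have hl_pos : (0 : ℝ) < l := by exact_mod_cast pos_iff_ne_zero.2 hl0
  set g : X → ℝ := fun x => (l : ℝ)⁻¹ * f x
  have hfg (s : ℝ) : sob ρ μ E f q s = fun x => l * sob ρ μ E g q s x := by
    rw [← ENNReal.ofReal_coe_nnreal, ← sob_const_mul hq l.coe_nonneg]
    simp only [g, mul_inv_cancel_left₀ hl_pos.ne']
  have hfg' (s : ℝ) : vnorm μ rr E (sob ρ μ E f q s) = l * vnorm μ rr E (sob ρ μ E g q s) := by
    rw [hfg, vnorm_const_mul hl0 ENNReal.coe_ne_top]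
  have hg : modular μ rr E (fun x => ENNReal.ofReal |g x|) ≤ 1 := by
    refine le_of_eq_of_le ?_ (modular_div_le_one_of_vnorm_lt (fun x => hq.le.trans (hrr x)) hl)
    congr! 2 with x
    rw [abs_mul, abs_inv, abs_of_pos hl_pos, inv_mul_eq_div, ENNReal.ofReal_div_of_pos hl_pos,
      ENNReal.ofReal_coe_nnreal]
  have hgfin : vnorm μ rr E (sob ρ μ E g q s₀) < ∞ := by
    rw [hfg'] at hfin
    exact ENNReal.lt_top_of_mul_ne_top_right hfin.ne hl0
  refine limsup_le_of_le (by isBoundedDefault) ?_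
  filter_upwards [hbound g (hf.const_mul _) hg s₀ hs₀ hgfin] with s hs
  rw [hfg', mul_left_comm]
  gcongr

end UpperBound

section LogHolder

/-- The log-Hölder decay condition at infinity, one of the two halves of `GloballyLogHolder`. -/
def LogHolderAtInfinity {Y : Type*} (ρ : Y → Y → ℝ) (rr : Y → ℝ) : Prop :=
  ∃ (x₀ : Y) (rlim C : ℝ), ∀ x, |rr x - rlim| ≤ C / Real.log (Real.exp 1 + ρ x₀ x)

theorem GloballyLogHolder.logHolderAtInfinity {Y : Type*} {ρ : Y → Y → ℝ} {rr : Y → ℝ}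
    (h : GloballyLogHolder ρ rr) : LogHolderAtInfinity ρ rr :=
  let ⟨x₀, rlim, C, _, _, h⟩ := h
  ⟨x₀, rlim, C, h⟩

theorem LogHolderAtInfinity.exists_ae_eq_bounded {rr : X → ℝ} {rm rM : ℝ}
    (h : LogHolderAtInfinity ρ rr) (hX : IsQuasiMetricMeasure ρ μ K₀) (hrrm : Measurable rr)
    (hbounds : ∀ᵐ x ∂μ, rm ≤ rr x ∧ rr x ≤ rM) :
    ∃ rr' : X → ℝ, rr =ᵐ[μ] rr' ∧ Measurable rr' ∧ (∀ x, rm ≤ rr' x) ∧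
      (∀ x, rr' x ≤ max rm rM) ∧ ∃ rlim, rm ≤ rlim ∧
        ∃ o C, ∀ x, |rr' x - rlim| * Real.log (Real.exp 1 + ρ o x) ≤ C := by
  obtain ⟨o, rlim, C, h⟩ := h
  refine ⟨fun x => max rm (min rM (rr x)), ?_, by fun_prop, fun x => le_max_left _ _,
    fun x => max_le_max_left _ (min_le_left _ _), max rm (min rM rlim), le_max_left _ _, o, C,
    fun x => ?_⟩
  · filter_upwards [hbounds] with x hx
    rw [min_eq_right hx.2, max_eq_right hx.1]
  · have hlog : 0 < Real.log (Real.exp 1 + ρ o x) :=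
      Real.log_pos (by linarith [hX.nonneg o x, Real.add_one_lt_exp one_ne_zero])
    rw [← le_div_iff₀ hlog]
    refine le_trans ?_ (h x)
    calc |max rm (min rM (rr x)) - max rm (min rM rlim)|
        ≤ |min rM (rr x) - min rM rlim| := by
          simpa only [max_comm rm] using abs_max_sub_max_le_abs _ _ _
      _ ≤ |rr x - rlim| := by
          simpa using abs_min_sub_min_le_max rM (rr x) rM rlim

end LogHolder

theorem statement13_general {rr : X → ℝ} {Ω : Set X} {q : ℝ}
    (hX : IsQuasiMetricMeasure ρ μ K₀) (hL : IsDoubling ρ μ L) (hWRD : WRD ρ μ)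
    (hΩm : MeasurableSet Ω) (hWMD : WMD ρ μ Ω) (hrrm : Measurable rr)
    (hLH : LogHolderAtInfinity ρ rr) (hq : 0 < q)
    (hbounds : ∃ rM : ℝ, ∀ᵐ x ∂μ, q ≤ rr x ∧ rr x ≤ rM) :
    ∃ C C' : ℝ≥0, 0 < C ∧ 0 < C' ∧ ∀ f : X → ℝ, Measurable f →
      ((⨅ a : ℝ, vnorm μ rr Ω fun x => ENNReal.ofReal |f x + a|) < ∞ →
        (C : ℝ≥0∞) * (⨅ a : ℝ, vnorm μ rr Ω fun x => ENNReal.ofReal |f x + a|) ≤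
          liminf (fun s : ℝ => ENNReal.ofReal s ^ (1 / q) * vnorm μ rr Ω (sob ρ μ Ω f q s))
            (𝓝[>] (0 : ℝ))) ∧
      ((∃ s₀ > 0, vnorm μ rr Ω (sob ρ μ Ω f q s₀) < ∞) →
        limsup (fun s : ℝ => ENNReal.ofReal s ^ (1 / q) * vnorm μ rr Ω (sob ρ μ Ω f q s))
            (𝓝[>] (0 : ℝ)) ≤
          (C' : ℝ≥0∞) * (⨅ a : ℝ, vnorm μ rr Ω fun x => ENNReal.ofReal |f x + a|)) := by
  obtain ⟨rM, hbounds⟩ := hbounds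
  obtain ⟨rr', hae, hrrm', hrr', hrM, rlim, hrlim, o, D, hlog⟩ :=
    hLH.exists_ae_eq_bounded hX hrrm hbounds
  obtain ⟨n, hn⟩ := hL.exists_hasGrowthExponent
  obtain ⟨c, hc0, hc, hlower⟩ := hWMD.exists_mul_vnorm_le_liminf hWRD hX hL hΩm hq
  obtain ⟨A, hA0, hA, hupper⟩ :=
    hn.exists_limsup_le_mul_vnorm hX hL hΩm hq hrrm' hrr' hrM hrlim hlog
  lift c to ℝ≥0 using hc
  lift A to ℝ≥0 using hA
  simp only [vnorm_congr_ae hae]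
  refine ⟨c, A, by simpa [pos_iff_ne_zero] using hc0, by simpa [pos_iff_ne_zero] using hA0,
    fun f hf => ⟨fun hfin => ?_, fun hs₀ => ?_⟩⟩
  · obtain ⟨a, ha⟩ := iInf_lt_iff.1 hfin
    calc _ ≤ c * vnorm μ rr' Ω fun x => ENNReal.ofReal |f x + a| := by
          gcongr
          exact iInf_le _ a
      _ ≤ _ := by
          simpa only [sob_add_const] using hlower rr' _ (fun x => hq.trans_le (hrr' x)) hrM _
            (hf.add_const a) ha
  · rw [ENNReal.mul_iInf_of_ne hA0 ENNReal.coe_ne_top]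
    exact le_iInf fun a => by
      simpa only [sob_add_const] using hupper _ (hf.add_const a) (by simpa only [sob_add_const])

theorem statement13 [Nonempty X] (ρ : X → X → ℝ) (μ : Measure X) (K₀ : ℝ) (L : ℝ≥0∞)
    (hX : IsQuasiMetricMeasure ρ μ K₀) (hL : IsDoubling ρ μ L) (hWRD : WRD ρ μ)
    (Ω : Set X) (hΩm : MeasurableSet Ω) (hΩo : IsRhoOpen ρ Ω) (hWMD : WMD ρ μ Ω)
    (rr : X → ℝ) (hrrm : Measurable rr) (hrrpos : ∀ x, 0 < rr x)
    (hLH : GloballyLogHolder ρ rr)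
    (q : ℝ) (hq : 0 < q)
    (hbounds : ∃ rm rM : ℝ, q < rm ∧ ∀ᵐ x ∂μ, rm ≤ rr x ∧ rr x ≤ rM) :
    ∃ C C' : ℝ≥0, 0 < C ∧ 0 < C' ∧
      ∀ f : X → ℝ, Measurable f →
        (⨅ a : ℝ, vnorm μ rr Ω fun x => ENNReal.ofReal |f x + a|) < ∞ →
        (∃ s₀ ∈ Set.Ioo (0:ℝ) 1, vnorm μ rr Ω (sob ρ μ Ω f q s₀) < ∞) →
        (C : ℝ≥0∞) * (⨅ a : ℝ, vnorm μ rr Ω fun x => ENNReal.ofReal |f x + a|) ≤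
            liminf (fun s : ℝ => ENNReal.ofReal s ^ (1 / q) * vnorm μ rr Ω (sob ρ μ Ω f q s))
              (𝓝[>] (0:ℝ)) ∧
          limsup (fun s : ℝ => ENNReal.ofReal s ^ (1 / q) * vnorm μ rr Ω (sob ρ μ Ω f q s))
              (𝓝[>] (0:ℝ)) ≤
            (C' : ℝ≥0∞) * (⨅ a : ℝ, vnorm μ rr Ω fun x => ENNReal.ofReal |f x + a|) := by
  obtain ⟨rm, rM, hqrm, hb⟩ := hbounds
  obtain ⟨C, C', hC, hC', h⟩ := statement13_general hX hL hWRD hΩm hWMD hrrm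
    hLH.logHolderAtInfinity hq ⟨rM, hb.mono fun _ => And.imp_left hqrm.le.trans⟩
  exact ⟨C, C', hC, hC', fun f hf hN ⟨s₀, hs₀, hfin⟩ =>
    ⟨(h f hf).1 hN, (h f hf).2 ⟨s₀, hs₀.1, hfin⟩⟩⟩

end Paper
end
end

section
/- Let (X,ρ,μ) be a space of homogeneous type, let φ : X × (0,∞) → (0,∞) belong to 𝒢^dec_1 and satisfy the nearness condition, and let Φ be a strictly increasing convex Orlicz function with 1 < r_Φ⁻ ≤ r_Φ⁺ < ∞. Then the Hardy–Littlewood maximal operator M is bounded on the generalized Orlicz–Morrey space L^{(Φ,φ)}(X): there exists a positive constant C such that for every measurable f with ‖f‖_{L^{(Φ,φ)}(X)} < ∞, ‖Mf‖_{L^{(Φ,φ)}(X)} ≤ C·‖f‖_{L^{(Φ,φ)}(X)}. -/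
noncomputable section

open MeasureTheory Filter Set
open scoped ENNReal NNReal Topology

namespace Paper

variable {X : Type*} [MeasurableSpace X]

/-- `Φ` is an Orlicz function (conditions imposed on `[0,∞)`). -/
structure OrliczFun (Φ : ℝ → ℝ) : Prop where
  zero : Φ 0 = 0
  nonneg : ∀ t, 0 ≤ t → 0 ≤ Φ t
  mono : ∀ s t, 0 ≤ s → s ≤ t → Φ s ≤ Φ t
  pos : ∀ t, 0 < t → 0 < Φ t
  tendsto_atTop : Tendsto Φ atTop atTop

/-- `Φ` is of lower type `r`. -/
def LowerType (Φ : ℝ → ℝ) (r : ℝ) : Prop :=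
  ∃ C : ℝ, 1 ≤ C ∧ ∀ t s : ℝ, 0 < t → 0 < s → s < 1 → Φ (s * t) ≤ C * s ^ r * Φ t

/-- `Φ` is of upper type `r`. -/
def UpperType (Φ : ℝ → ℝ) (r : ℝ) : Prop :=
  ∃ C : ℝ, 1 ≤ C ∧ ∀ t s : ℝ, 0 < t → 1 < s → Φ (s * t) ≤ C * s ^ r * Φ t

/-- The canonical extension of `Φ` to `ℝ≥0∞`. -/
def extO (Φ : ℝ → ℝ) (t : ℝ≥0∞) : ℝ≥0∞ :=
  if t = ∞ then ∞ else ENNReal.ofReal (Φ t.toReal)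

/-- The generalized inverse of `Φ`. -/
def invO (Φ : ℝ → ℝ) (u : ℝ) : ℝ :=
  sInf {t : ℝ | 0 ≤ t ∧ u ≤ Φ t}

/-- `‖f‖_{Φ,φ,B}` for the ball `B = B(x,r)`:
the least `λ` with `μ(B)⁻¹ ∫_B Φ(|f|/λ) dμ ≤ φ(B)`. -/
def ballNorm (ρ : X → X → ℝ) (μ : Measure X) (Φ : ℝ → ℝ) (φ : X → ℝ → ℝ)
    (x : X) (r : ℝ) (g : X → ℝ≥0∞) : ℝ≥0∞ :=
  sInf {lam : ℝ≥0∞ | lam ≠ 0 ∧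
    (∫⁻ y in ball ρ x r, extO Φ (g y / lam) ∂μ) ≤
      ENNReal.ofReal (φ x r) * μ (ball ρ x r)}

/-- The generalized Orlicz–Morrey quasi-norm `‖f‖_{L^{(Φ,φ)}(X)}`. -/
def OMnorm (ρ : X → X → ℝ) (μ : Measure X) (Φ : ℝ → ℝ) (φ : X → ℝ → ℝ)
    (g : X → ℝ≥0∞) : ℝ≥0∞ :=
  ⨆ (x : X) (r : ℝ) (_ : 0 < r), ballNorm ρ μ Φ φ x r g

/-- `φ` takes values in `(0,∞)`. -/
def PhiPos (φ : X → ℝ → ℝ) : Prop := ∀ (x : X) (r : ℝ), 0 < r → 0 < φ x r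

/-- The nearness condition for `φ`. -/
def Nearness (ρ : X → X → ℝ) (φ : X → ℝ → ℝ) : Prop :=
  ∃ C : ℝ, 1 ≤ C ∧ ∀ (x y : X) (r : ℝ), 0 < r → ρ x y ≤ r → φ x r ≤ C * φ y r

/-- `φ ∈ 𝒢^dec_1`: `r ↦ μ(B(x,r))φ(x,r)` is almost increasing and
`r ↦ φ(x,r)` is almost decreasing. -/
def Gdec1 (ρ : X → X → ℝ) (μ : Measure X) (φ : X → ℝ → ℝ) : Prop :=
  ∃ C : ℝ, 1 ≤ C ∧ ∀ (x : X) (r s : ℝ), 0 < r → r ≤ s →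
    μ (ball ρ x r) * ENNReal.ofReal (φ x r) ≤
        ENNReal.ofReal C * (μ (ball ρ x s) * ENNReal.ofReal (φ x s)) ∧
      φ x s ≤ C * φ x r

/-- The Hardy–Littlewood maximal operator on `(X, ρ, μ)`. -/
def maximal (ρ : X → X → ℝ) (μ : Measure X) (g : X → ℝ≥0∞) (x : X) : ℝ≥0∞ :=
  ⨆ (z : X) (r : ℝ) (_ : 0 < r) (_ : x ∈ ball ρ z r),
    (∫⁻ y in ball ρ z r, g y ∂μ) / μ (ball ρ z r)

/-!
On a space of homogeneous type, Vitali's covering lemma gives the weak type `(1, 1)` bound for `M`,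
and truncating `h` at height `t` improves it to
`t * μ {2 * t < M h} ≤ A * ∫ h over {t < h}`. Take `t = 2 ^ k` and weights `Φ (2 ^ k) / 2 ^ k`:
their sum over `2 ^ k < h` is at most a multiple of `Φ h / h` because the lower type exceeds `1`,
which gives the modular inequality `∫ Φ (M h / 4) ≤ S * ∫ Φ h`.

Let `f` lie in the modular unit ball of the Morrey space and fix `B = B(x, r)`. At a point of `B`,
the averages of `f` over balls of radius at most `r` only see the restriction of `f` to a dilate
of `B`, and are handled by the modular inequality. If `a` is roughly `Φ⁻¹ (φ B)`, then the averages
over larger balls `B'` are at most a multiple of `a`, since `φ B' ≤ C * φ B`. Hence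
`∫ Φ (M f / E) ≤ S * φ B * μ B` over `B`, and the lower type turns the factor `S` into a multiple
of `E`. The norm bound follows by homogeneity.
-/

lemma ennreal_div_mul_eq_div_div (x : ℝ≥0∞) {a b : ℝ≥0∞} (h₀ : a ≠ 0 ∨ b ≠ ∞)
    (h_top : a ≠ ∞ ∨ b ≠ 0) : x / (a * b) = x / a / b := by
  simp only [div_eq_mul_inv, ENNReal.mul_inv h₀ h_top, mul_assoc]

section Orlicz

variable {Φ : ℝ → ℝ}

@[simp]
lemma extO_top : extO Φ ∞ = ∞ := if_pos rfl

lemma extO_of_ne_top {v : ℝ≥0∞} (hv : v ≠ ∞) : extO Φ v = ENNReal.ofReal (Φ v.toReal) :=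
  if_neg hv

lemma extO_ne_top {v : ℝ≥0∞} (hv : v ≠ ∞) : extO Φ v ≠ ∞ := by
  rw [extO_of_ne_top hv]
  exact ENNReal.ofReal_ne_top

namespace OrliczFun

@[simp]
lemma extO_zero (hΦ : OrliczFun Φ) : extO Φ 0 = 0 := by
  rw [extO_of_ne_top ENNReal.zero_ne_top, ENNReal.toReal_zero, hΦ.zero, ENNReal.ofReal_zero]

lemma extO_mono (hΦ : OrliczFun Φ) : Monotone (extO Φ) := by
  intro s t hst
  rcases eq_or_ne t ∞ with rfl | ht
  · simp only [extO_top, le_top]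
  · rw [extO_of_ne_top ht, extO_of_ne_top (ne_top_of_le_ne_top ht hst)]
    exact ENNReal.ofReal_le_ofReal
      (hΦ.mono _ _ ENNReal.toReal_nonneg (ENNReal.toReal_mono ht hst))

lemma tendsto_extO_two_pow (hΦ : OrliczFun Φ) :
    Tendsto (fun n : ℕ => extO Φ (2 ^ n)) atTop (𝓝 ∞) := by
  have h_pow : Tendsto (fun n : ℕ => (2 : ℝ) ^ n) atTop atTop :=
    tendsto_pow_atTop_atTop_of_one_lt one_lt_two
  refine (ENNReal.tendsto_ofReal_atTop.comp (hΦ.tendsto_atTop.comp h_pow)).congr fun n => ?_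
  simp [extO_of_ne_top (ENNReal.pow_ne_top ENNReal.ofNat_ne_top)]

lemma exists_extO_mul_le (hΦ : OrliczFun Φ) {r : ℝ} (hlt : LowerType Φ r) :
    ∃ C : ℝ≥0∞, 1 ≤ C ∧ C ≠ ∞ ∧ ∀ s ≤ 1, ∀ v, extO Φ (s * v) ≤ C * s ^ r * extO Φ v := by
  obtain ⟨C, hC, h⟩ := hlt
  have hC' : 1 ≤ ENNReal.ofReal C := ENNReal.one_le_ofReal.2 hC
  refine ⟨ENNReal.ofReal C, hC', ENNReal.ofReal_ne_top, fun s hs v => ?_⟩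
  rcases eq_or_ne s 0 with rfl | hs0
  · simp [hΦ.extO_zero]
  rcases eq_or_ne v 0 with rfl | hv0
  · simp [hΦ.extO_zero]
  rcases hs.eq_or_lt with rfl | hs1
  · simpa using le_mul_of_one_le_left' hC'
  have hs_top : s ≠ ∞ := hs1.ne_top
  rcases eq_or_ne v ∞ with rfl | hv
  · have h_coeff : ENNReal.ofReal C * s ^ r ≠ 0 :=
      mul_ne_zero (one_pos.trans_le hC').ne' (ENNReal.rpow_pos (pos_iff_ne_zero.2 hs0) hs_top).ne'
    simp only [extO_top, ENNReal.mul_top h_coeff, le_top]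
  have hs_pos : 0 < s.toReal := ENNReal.toReal_pos hs0 hs_top
  have h_real := h v.toReal s.toReal (ENNReal.toReal_pos hv0 hv) hs_pos
    (by simpa using (ENNReal.toReal_lt_toReal hs_top ENNReal.one_ne_top).2 hs1)
  rw [extO_of_ne_top (ENNReal.mul_ne_top hs_top hv), extO_of_ne_top hv, ENNReal.toReal_mul]
  refine (ENNReal.ofReal_le_ofReal h_real).trans_eq ?_
  rw [ENNReal.ofReal_mul (by positivity), ENNReal.ofReal_mul (by positivity),
    ← ENNReal.ofReal_rpow_of_pos hs_pos, ENNReal.ofReal_toReal hs_top]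

lemma exists_extO_mul_le_linear (hΦ : OrliczFun Φ) {r : ℝ} (hr : 1 ≤ r) (hlt : LowerType Φ r) :
    ∃ C : ℝ≥0∞, 1 ≤ C ∧ C ≠ ∞ ∧ ∀ s ≤ 1, ∀ v, extO Φ (s * v) ≤ C * s * extO Φ v := by
  obtain ⟨C, hC, hC_top, h⟩ := hΦ.exists_extO_mul_le hlt
  refine ⟨C, hC, hC_top, fun s hs v => (h s hs v).trans ?_⟩
  gcongr
  exact ENNReal.rpow_le_self_of_le_one hs hr

lemma exists_mul_extO_div_le (hΦ : OrliczFun Φ) {r : ℝ} (hr : 1 ≤ r) (hlt : LowerType Φ r)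
    {Q : ℝ≥0∞} (hQ : Q ≠ ∞) :
    ∃ D : ℝ≥0∞, D ≠ 0 ∧ D ≠ ∞ ∧ ∀ v, Q * extO Φ (v / D) ≤ extO Φ v := by
  obtain ⟨C, hC, hC_top, h⟩ := hΦ.exists_extO_mul_le_linear hr hlt
  have hD : 1 ≤ C * max 1 Q := one_le_mul hC (le_max_left _ _)
  have hD0 : C * max 1 Q ≠ 0 := (one_pos.trans_le hD).ne'
  have hD_top : C * max 1 Q ≠ ∞ := ENNReal.mul_ne_top hC_top (by simp [hQ])
  refine ⟨C * max 1 Q, hD0, hD_top, fun v => ?_⟩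
  calc Q * extO Φ (v / (C * max 1 Q))
      = Q * extO Φ ((C * max 1 Q)⁻¹ * v) := by rw [div_eq_mul_inv, mul_comm v]
    _ ≤ max 1 Q * (C * (C * max 1 Q)⁻¹ * extO Φ v) := by
        gcongr
        · exact le_max_right _ _
        · exact h _ (ENNReal.inv_le_one.2 hD) v
    _ = C * max 1 Q * (C * max 1 Q)⁻¹ * extO Φ v := by ring
    _ = extO Φ v := by rw [ENNReal.mul_inv_cancel hD0 hD_top, one_mul]

lemma exists_extO_le_le_extO (hΦ : OrliczFun Φ) {r : ℝ} (hr : 1 ≤ r) (hlt : LowerType Φ r)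
    {N : ℝ≥0∞} (hN0 : N ≠ 0) (hN_top : N ≠ ∞) :
    ∃ a : ℝ≥0∞, a ≠ 0 ∧ a ≠ ∞ ∧ extO Φ (a / 2) ≤ N ∧ N ≤ extO Φ (2 * a) := by
  set a : ℝ≥0∞ := sSup {t | extO Φ t ≤ N}
  have ha0 : a ≠ 0 := by
    have h1_top : extO Φ 1 ≠ ∞ := extO_ne_top ENNReal.one_ne_top
    have h1_pos : extO Φ 1 ≠ 0 := by
      simpa [extO_of_ne_top ENNReal.one_ne_top] using hΦ.pos 1 one_pos
    obtain ⟨D, -, hD_top, hD⟩ := hΦ.exists_mul_extO_div_le hr hlt (ENNReal.div_ne_top h1_top hN0)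
    have h_small : extO Φ (1 / D) ≤ N := by
      have h_mul : extO Φ 1 * (extO Φ (1 / D) / N) ≤ extO Φ 1 * 1 := by
        simpa only [div_eq_mul_inv, mul_one, mul_assoc, mul_comm N⁻¹] using hD 1
      rw [ENNReal.mul_le_mul_iff_right h1_pos h1_top, ENNReal.div_le_iff hN0 hN_top] at h_mul
      simpa only [one_mul] using h_mul
    exact ((ENNReal.div_pos one_ne_zero hD_top).trans_le (le_sSup h_small)).ne'
  have ha_top : a ≠ ∞ := by
    obtain ⟨n, hn⟩ := (hΦ.tendsto_extO_two_pow.eventually_const_lt hN_top.lt_top).exists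
    refine ne_top_of_le_ne_top (by finiteness : (2 : ℝ≥0∞) ^ n ≠ ∞) (sSup_le fun t ht => ?_)
    exact (hΦ.extO_mono.reflect_lt (ht.trans_lt hn)).le
  refine ⟨a, ha0, ha_top, ?_, ?_⟩
  · obtain ⟨t, ht, hat⟩ := lt_sSup_iff.1 (ENNReal.half_lt_self ha0 ha_top)
    exact (hΦ.extO_mono hat.le).trans ht
  · by_contra! h
    have h2a : 2 * a ≤ a := le_sSup h.le
    rw [two_mul] at h2a
    exact h2a.not_gt (ENNReal.lt_add_right ha_top ha0)

-- Jensen's inequality up to a constant: `Φ a / a ≤ C * (Φ v / v)` for `a ≤ v` replaces convexity.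
lemma exists_lintegral_le_of_lintegral_extO_le (hΦ : OrliczFun Φ) {r : ℝ} (hr : 1 ≤ r)
    (hlt : LowerType Φ r) :
    ∃ C : ℝ≥0∞, C ≠ ∞ ∧ ∀ {α : Type*} [MeasurableSpace α] (ν : Measure α) (g : α → ℝ≥0∞)
      (a N Q : ℝ≥0∞), a ≠ 0 → a ≠ ∞ → N ≠ 0 → N ≤ extO Φ a →
      ∫⁻ y, extO Φ (g y) ∂ν ≤ Q * N * ν univ →
      ∫⁻ y, g y ∂ν ≤ (1 + C * Q) * a * ν univ := by
  obtain ⟨C, hC, hC_top, h⟩ := hΦ.exists_extO_mul_le_linear hr hlt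
  refine ⟨C, hC_top, fun ν g a N Q ha0 ha_top hN0 hNa hg => ?_⟩
  have hN_top : N ≠ ∞ := ne_top_of_le_ne_top (extO_ne_top ha_top) hNa
  have h_linear : ∀ v, N * v ≤ a * N + a * C * extO Φ v := by
    intro v
    rcases le_total v a with hva | hav
    · exact (mul_comm N v).trans_le ((mul_le_mul_left hva N).trans le_self_add)
    rcases eq_or_ne v ∞ with rfl | hv
    · simp [ENNReal.mul_top, ha0, (one_pos.trans_le hC).ne']
    have hv0 : v ≠ 0 := fun hv0 => ha0 (le_zero_iff.1 (hv0 ▸ hav))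
    calc N * v ≤ extO Φ (a / v * v) * v := by
          rw [ENNReal.div_mul_cancel hv0 hv]; gcongr
      _ ≤ C * (a / v) * extO Φ v * v := by
          gcongr; exact h _ (ENNReal.div_le_of_le_mul (by rwa [one_mul])) v
      _ = (a / v * v) * C * extO Φ v := by ring
      _ ≤ a * N + a * C * extO Φ v := by
          rw [ENNReal.div_mul_cancel hv0 hv]; exact le_add_self
  rw [← ENNReal.mul_le_mul_iff_right hN0 hN_top]
  calc N * ∫⁻ y, g y ∂ν = ∫⁻ y, N * g y ∂ν := (lintegral_const_mul' _ _ hN_top).symm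
    _ ≤ ∫⁻ y, (a * N + a * C * extO Φ (g y)) ∂ν := lintegral_mono fun y => h_linear (g y)
    _ = a * N * ν univ + a * C * ∫⁻ y, extO Φ (g y) ∂ν := by
        rw [lintegral_add_left measurable_const, lintegral_const,
          lintegral_const_mul' _ _ (ENNReal.mul_ne_top ha_top hC_top)]
    _ ≤ a * N * ν univ + a * C * (Q * N * ν univ) := by gcongr
    _ = N * ((1 + C * Q) * a * ν univ) := by ring

end OrliczFun

end Orlicz

section Dyadic

variable {Φ : ℝ → ℝ}

lemma tsum_zpow_div_rpow_le {p : ℝ} (hp : 0 < p) (v : ℝ≥0∞) :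
    ∑' k : ℤ, (if (2 : ℝ≥0∞) ^ k < v then ((2 : ℝ≥0∞) ^ k / v) ^ p else 0)
      ≤ (1 - (2⁻¹ : ℝ≥0∞) ^ p)⁻¹ := by
  rcases eq_or_ne v 0 with rfl | hv0
  · simp
  rcases eq_or_ne v ∞ with rfl | hv
  · simp [hp]
  obtain ⟨m, hm, hm'⟩ :=
    ENNReal.exists_mem_Ioc_zpow hv0 hv ENNReal.one_lt_two ENNReal.ofNat_ne_top
  have h_inj : Function.Injective fun j : ℕ => m - (j : ℤ) := fun i j hij => by
    simpa using hij
  have h_supp : Function.support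
      (fun k : ℤ => if (2 : ℝ≥0∞) ^ k < v then ((2 : ℝ≥0∞) ^ k / v) ^ p else 0)
        ⊆ range fun j : ℕ => m - (j : ℤ) := by
    intro k hk
    have hkv : (2 : ℝ≥0∞) ^ k < v := by
      by_contra hkv
      simp [hkv] at hk
    have hkm : k < m + 1 :=
      (ENNReal.monotone_zpow ENNReal.one_lt_two.le).reflect_lt (hkv.trans_le hm')
    exact ⟨(m - k).toNat, by simp only; omega⟩
  rw [← h_inj.tsum_eq h_supp, ← ENNReal.tsum_geometric]
  refine ENNReal.tsum_le_tsum fun j => ?_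
  split_ifs with hj
  swap
  · exact zero_le
  rw [← ENNReal.rpow_natCast, ← ENNReal.rpow_mul, mul_comm p, ENNReal.rpow_mul,
    ENNReal.rpow_natCast]
  gcongr
  refine ENNReal.div_le_of_le_mul ?_
  calc (2 : ℝ≥0∞) ^ (m - (j : ℤ)) = 2⁻¹ ^ j * 2 ^ m := by
        rw [ENNReal.zpow_sub two_ne_zero ENNReal.ofNat_ne_top, zpow_natCast, mul_comm,
          ENNReal.inv_pow]
    _ ≤ 2⁻¹ ^ j * v := by gcongr

lemma OrliczFun.extO_half_le_tsum (hΦ : OrliczFun Φ) (v : ℝ≥0∞) :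
    extO Φ (v / 2) ≤ ∑' k : ℤ, if (2 : ℝ≥0∞) ^ k < v then extO Φ (2 ^ k) else 0 := by
  rcases eq_or_ne v 0 with rfl | hv0
  · simp [hΦ.extO_zero]
  rcases eq_or_ne v ∞ with rfl | hv
  · refine le_top.trans (le_of_tendsto' hΦ.tendsto_extO_two_pow fun n => ?_)
    refine le_trans ?_ (ENNReal.le_tsum (n : ℤ))
    simp
  obtain ⟨k, hk, hk'⟩ :=
    ENNReal.exists_mem_Ioc_zpow hv0 hv ENNReal.one_lt_two ENNReal.ofNat_ne_top
  refine le_trans ?_ (ENNReal.le_tsum k)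
  rw [if_pos hk]
  apply hΦ.extO_mono
  rwa [ENNReal.zpow_add two_ne_zero ENNReal.ofNat_ne_top, zpow_one,
    ← ENNReal.div_le_iff two_ne_zero ENNReal.ofNat_ne_top] at hk'

lemma OrliczFun.extO_div_four_le_tsum (hΦ : OrliczFun Φ) (v : ℝ≥0∞) :
    extO Φ (v / 4) ≤ ∑' k : ℤ, if 2 * (2 : ℝ≥0∞) ^ k < v then extO Φ (2 ^ k) else 0 := by
  have h_four : (4 : ℝ≥0∞) = 2 * 2 := by norm_num
  rw [h_four, ennreal_div_mul_eq_div_div v (.inl two_ne_zero) (.inl ENNReal.ofNat_ne_top)]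
  refine (hΦ.extO_half_le_tsum _).trans_eq (tsum_congr fun k => ?_)
  simp only [ENNReal.lt_div_iff_mul_lt (.inl two_ne_zero) (.inl ENNReal.ofNat_ne_top), mul_comm]

lemma OrliczFun.exists_tsum_extO_zpow_div_mul_le (hΦ : OrliczFun Φ) {r : ℝ} (hr : 1 < r)
    (hlt : LowerType Φ r) :
    ∃ C : ℝ≥0∞, C ≠ ∞ ∧ ∀ v : ℝ≥0∞,
      ∑' k : ℤ, extO Φ (2 ^ k) / 2 ^ k * (if (2 : ℝ≥0∞) ^ k < v then v else 0)
        ≤ C * extO Φ v := by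
  obtain ⟨C, hC, hC_top, h⟩ := hΦ.exists_extO_mul_le hlt
  have hq : (2⁻¹ : ℝ≥0∞) ^ (r - 1) < 1 := ENNReal.rpow_lt_one (by simp) (by linarith)
  have hS_top : (1 - (2⁻¹ : ℝ≥0∞) ^ (r - 1))⁻¹ ≠ ∞ :=
    ENNReal.inv_ne_top.2 (tsub_pos_of_lt hq).ne'
  refine ⟨C * (1 - (2⁻¹ : ℝ≥0∞) ^ (r - 1))⁻¹, ENNReal.mul_ne_top hC_top hS_top, fun v => ?_⟩
  rcases eq_or_ne v ∞ with rfl | hv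
  · simp [ENNReal.mul_top, (one_pos.trans_le hC).ne', ENNReal.sub_eq_top_iff]
  have h_term : ∀ k : ℤ, extO Φ (2 ^ k) / 2 ^ k * (if (2 : ℝ≥0∞) ^ k < v then v else 0) ≤
      C * extO Φ v * (if (2 : ℝ≥0∞) ^ k < v then ((2 : ℝ≥0∞) ^ k / v) ^ (r - 1) else 0) := by
    intro k
    split_ifs with hk
    swap
    · simp
    have hv0 : v ≠ 0 := hk.ne_bot
    have hk0 : (2 : ℝ≥0∞) ^ k ≠ 0 := (ENNReal.zpow_pos two_ne_zero ENNReal.ofNat_ne_top k).ne'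
    have hs0 : (2 : ℝ≥0∞) ^ k / v ≠ 0 := (ENNReal.div_pos hk0 hv).ne'
    have hs1 : (2 : ℝ≥0∞) ^ k / v ≤ 1 := ENNReal.div_le_of_le_mul (by simpa using hk.le)
    calc extO Φ (2 ^ k) / 2 ^ k * v = extO Φ (2 ^ k / v * v) / (2 ^ k / v) := by
          rw [ENNReal.div_mul_cancel hv0 hv, div_eq_mul_inv, mul_assoc, div_eq_mul_inv _ (_ / _),
            ENNReal.inv_div (.inl hv) (.inl hv0), mul_comm _ v, ← div_eq_mul_inv]
      _ ≤ C * (2 ^ k / v) ^ r * extO Φ v / (2 ^ k / v) := by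
          gcongr; exact h _ hs1 v
      _ = C * extO Φ v * (2 ^ k / v) ^ (r - 1) := by
          rw [ENNReal.rpow_sub _ _ hs0 (ne_top_of_le_ne_top ENNReal.one_ne_top hs1),
            ENNReal.rpow_one, div_eq_mul_inv, div_eq_mul_inv _ (_ / _)]
          ring
  calc _ ≤ ∑' k : ℤ, C * extO Φ v *
          (if (2 : ℝ≥0∞) ^ k < v then ((2 : ℝ≥0∞) ^ k / v) ^ (r - 1) else 0) :=
        ENNReal.tsum_le_tsum h_term
    _ ≤ C * extO Φ v * (1 - (2⁻¹ : ℝ≥0∞) ^ (r - 1))⁻¹ := by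
        rw [ENNReal.tsum_mul_left]
        gcongr
        exact tsum_zpow_div_rpow_le (by linarith) v
    _ = _ := by ring

end Dyadic

section QuasiMetric

variable {ρ : X → X → ℝ} {μ : Measure X} {K₀ : ℝ} {L : ℝ≥0∞}

lemma mem_ball {Y : Type*} {ρ : Y → Y → ℝ} {x y : Y} {r : ℝ} : y ∈ ball ρ x r ↔ ρ x y < r :=
  Iff.rfl

namespace IsQuasiMetricMeasure

lemma mem_ball_self (hX : IsQuasiMetricMeasure ρ μ K₀) (x : X) {r : ℝ} (hr : 0 < r) :
    x ∈ ball ρ x r := by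
  rwa [mem_ball, (hX.eq_zero_iff x x).2 rfl]

lemma ball_subset_ball_of_mem_inter (hX : IsQuasiMetricMeasure ρ μ K₀) {x y z : X} {r s : ℝ}
    (hyx : y ∈ ball ρ x r) (hyz : y ∈ ball ρ z s) :
    ball ρ z s ⊆ ball ρ x (K₀ ^ 2 * (r + 2 * s)) := by
  intro w hw
  rw [mem_ball] at *
  have hK := hX.one_le
  have h_yw : ρ y w ≤ K₀ * (2 * s) := by
    refine (hX.triangle y z w).trans ?_
    rw [hX.symm y z]
    gcongr
    linarith
  have hr : 0 ≤ r := (hX.nonneg x y).trans hyx.le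
  calc ρ x w ≤ K₀ * (ρ x y + ρ y w) := hX.triangle x y w
    _ < K₀ * (r + K₀ * (2 * s)) :=
        mul_lt_mul_of_pos_left (add_lt_add_of_lt_of_le hyx h_yw) (one_pos.trans_le hK)
    _ ≤ K₀ * (K₀ * r + K₀ * (2 * s)) := by gcongr; exact le_mul_of_one_le_left hr hK
    _ = K₀ ^ 2 * (r + 2 * s) := by ring

lemma exists_pairwiseDisjoint_iUnion_ball_subset (hX : IsQuasiMetricMeasure ρ μ K₀)
    {T : Set (X × ℝ)} {R : ℝ} (hT : ∀ p ∈ T, p.2 ∈ Ioc 0 R) :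
    ∃ u ⊆ T, u.PairwiseDisjoint (fun p => ball ρ p.1 p.2) ∧
      ⋃ p ∈ T, ball ρ p.1 p.2 ⊆ ⋃ p ∈ u, ball ρ p.1 (5 * K₀ ^ 2 * p.2) := by
  obtain ⟨u, huT, hu_disj, hu⟩ := Vitali.exists_disjoint_subfamily_covering_enlargement
    (fun p : X × ℝ => ball ρ p.1 p.2) T Prod.snd 2 one_lt_two (fun p hp => (hT p hp).1.le) R
    (fun p hp => (hT p hp).2) (fun p hp => ⟨p.1, hX.mem_ball_self p.1 (hT p hp).1⟩)
  refine ⟨u, huT, hu_disj, iUnion₂_subset fun p hp x hx => ?_⟩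
  obtain ⟨q, hq, ⟨w, hwp, hwq⟩, hpq⟩ := hu p hp
  refine mem_iUnion₂.2 ⟨q, hq, ?_⟩
  refine (mem_ball.1 (hX.ball_subset_ball_of_mem_inter hwq hwp hx)).trans_le ?_
  nlinarith [sq_nonneg K₀]

end IsQuasiMetricMeasure

lemma IsDoubling.exists_measure_ball_mul_le (hL : IsDoubling ρ μ L) (c : ℝ) :
    ∃ A : ℝ≥0∞, A ≠ ∞ ∧ ∀ x r, 0 < r → μ (ball ρ x (c * r)) ≤ A * μ (ball ρ x r) := by
  obtain ⟨-, hL_top, hL⟩ := hL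
  have h_pow : ∀ n : ℕ, ∀ x r, 0 < r → μ (ball ρ x (2 ^ n * r)) ≤ L ^ n * μ (ball ρ x r) := by
    intro n x r hr
    induction n with
    | zero => simp
    | succ n ih =>
      calc μ (ball ρ x (2 ^ (n + 1) * r)) = μ (ball ρ x (2 * (2 ^ n * r))) := by ring_nf
        _ ≤ L * μ (ball ρ x (2 ^ n * r)) := (hL x _ (by positivity)).2.1
        _ ≤ L * (L ^ n * μ (ball ρ x r)) := by gcongr
        _ = L ^ (n + 1) * μ (ball ρ x r) := by ring
  obtain ⟨n, hn⟩ := pow_unbounded_of_one_lt c one_lt_two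
  refine ⟨L ^ n, ENNReal.pow_ne_top hL_top.ne, fun x r hr => le_trans ?_ (h_pow n x r hr)⟩
  exact measure_mono fun y hy => (mem_ball.1 hy).trans_le (by gcongr)

end QuasiMetric

section Lintegral

variable {μ : Measure X} {ι : Type*}

lemma countable_of_pairwiseDisjoint_of_setLIntegral_ne_zero {h : X → ℝ≥0∞}
    (hh : ∫⁻ x, h x ∂μ ≠ ∞) {u : Set ι} {s : ι → Set X} (hs : ∀ i ∈ u, MeasurableSet (s i))
    (hu : u.PairwiseDisjoint s) (h_ne : ∀ i ∈ u, ∫⁻ x in s i, h x ∂μ ≠ 0) : u.Countable := by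
  have h_finite : μ.withDensity h (⋃ i : u, s i) ≠ ∞ := by
    refine ne_top_of_le_ne_top hh ((measure_mono (subset_univ _)).trans_eq ?_)
    rw [withDensity_apply _ MeasurableSet.univ, Measure.restrict_univ]
  have h_countable := Measure.countable_meas_pos_of_disjoint_of_meas_iUnion_ne_top
    (μ.withDensity h) (As := fun i : u => s i) (fun i => hs i i.2)
    (pairwise_subtype_iff_pairwise_set u (Function.onFun Disjoint s) |>.2 hu) h_finite
  have h_all : {i : u | 0 < μ.withDensity h (s i)} = univ := by
    refine eq_univ_of_forall fun i => ?_
    rw [mem_ofPred_eq, withDensity_apply _ (hs i i.2)]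
    exact pos_iff_ne_zero.2 (h_ne i i.2)
  rwa [h_all, countable_univ_iff, countable_coe_iff] at h_countable

-- The sets `E i` need not be measurable, so countable additivity is applied to measurable hulls.
lemma lintegral_tsum_indicator_const_le [Countable ι] (E : ι → Set X) (c : ι → ℝ≥0∞) :
    ∫⁻ x, ∑' i, (E i).indicator (fun _ => c i) x ∂μ ≤ ∑' i, c i * μ (E i) := by
  calc ∫⁻ x, ∑' i, (E i).indicator (fun _ => c i) x ∂μ
      ≤ ∫⁻ x, ∑' i, (toMeasurable μ (E i)).indicator (fun _ => c i) x ∂μ := by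
        gcongr
        exact subset_toMeasurable μ _
    _ = ∑' i, c i * μ (E i) := by
        rw [lintegral_tsum fun i =>
          (measurable_const.indicator (measurableSet_toMeasurable μ _)).aemeasurable]
        simp only [lintegral_indicator_const (measurableSet_toMeasurable μ _),
          measure_toMeasurable]

end Lintegral

section Maximal

variable {ρ : X → X → ℝ} {μ : Measure X} {K₀ : ℝ} {L : ℝ≥0∞}

lemma lt_maximal_iff {h : X → ℝ≥0∞} {t : ℝ≥0∞} {x : X} :
    t < maximal ρ μ h x ↔ ∃ z r, 0 < r ∧ x ∈ ball ρ z r ∧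
      t < (∫⁻ y in ball ρ z r, h y ∂μ) / μ (ball ρ z r) := by
  simp only [maximal, lt_iSup_iff, exists_prop]

lemma maximal_le_iff {h : X → ℝ≥0∞} {t : ℝ≥0∞} {x : X} :
    maximal ρ μ h x ≤ t ↔ ∀ z r, 0 < r → x ∈ ball ρ z r →
      (∫⁻ y in ball ρ z r, h y ∂μ) / μ (ball ρ z r) ≤ t := by
  simp only [maximal, iSup_le_iff]

lemma div_le_maximal (h : X → ℝ≥0∞) {x z : X} {r : ℝ} (hr : 0 < r) (hx : x ∈ ball ρ z r) :
    (∫⁻ y in ball ρ z r, h y ∂μ) / μ (ball ρ z r) ≤ maximal ρ μ h x :=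
  maximal_le_iff.1 le_rfl z r hr hx

lemma maximal_const_mul {c : ℝ≥0∞} (hc : c ≠ ∞) (h : X → ℝ≥0∞) (x : X) :
    maximal ρ μ (fun y => c * h y) x = c * maximal ρ μ h x := by
  simp only [maximal, ENNReal.mul_iSup, lintegral_const_mul' c _ hc, mul_div_assoc]

lemma maximal_le_maximal_add {h k : X → ℝ≥0∞} {t : ℝ≥0∞} (hk : ∀ y, h y ≤ k y + t) (x : X) :
    maximal ρ μ h x ≤ maximal ρ μ k x + t := by
  refine maximal_le_iff.2 fun z r hr hx => ?_
  calc (∫⁻ y in ball ρ z r, h y ∂μ) / μ (ball ρ z r)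
      ≤ (∫⁻ y in ball ρ z r, (k y + t) ∂μ) / μ (ball ρ z r) := by gcongr; exact hk _
    _ = (∫⁻ y in ball ρ z r, k y ∂μ) / μ (ball ρ z r) +
          t * (μ (ball ρ z r) / μ (ball ρ z r)) := by
        rw [lintegral_add_right _ measurable_const, setLIntegral_const, ENNReal.add_div,
          mul_div_assoc]
    _ ≤ maximal ρ μ k x + t := by
        gcongr
        · exact div_le_maximal k hr hx
        · exact mul_le_of_le_one_right' ENNReal.div_self_le_one

namespace IsQuasiMetricMeasure

lemma mul_measure_biUnion_ball_le (hX : IsQuasiMetricMeasure ρ μ K₀) {A : ℝ≥0∞}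
    (hA : ∀ x r, 0 < r → μ (ball ρ x (5 * K₀ ^ 2 * r)) ≤ A * μ (ball ρ x r))
    {h : X → ℝ≥0∞} (hh : ∫⁻ x, h x ∂μ ≠ ∞) {t : ℝ≥0∞} {T : Set (X × ℝ)} {R : ℝ}
    (hT : ∀ p ∈ T, p.2 ∈ Ioc 0 R)
    (ht : ∀ p ∈ T, t * μ (ball ρ p.1 p.2) < ∫⁻ y in ball ρ p.1 p.2, h y ∂μ) :
    t * μ (⋃ p ∈ T, ball ρ p.1 p.2) ≤ A * ∫⁻ x, h x ∂μ := by
  obtain ⟨u, huT, hu_disj, hu⟩ := hX.exists_pairwiseDisjoint_iUnion_ball_subset hT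
  have hu_count : u.Countable := countable_of_pairwiseDisjoint_of_setLIntegral_ne_zero hh
    (fun p _ => hX.measurableSet_ball p.1 p.2) hu_disj fun p hp => (ht p (huT hp)).ne_bot
  calc t * μ (⋃ p ∈ T, ball ρ p.1 p.2)
      ≤ t * ∑' p : u, μ (ball ρ p.1.1 (5 * K₀ ^ 2 * p.1.2)) := by
        gcongr
        exact (measure_mono hu).trans (measure_biUnion_le μ hu_count _)
    _ ≤ t * ∑' p : u, A * μ (ball ρ p.1.1 p.1.2) := by
        gcongr with p
        exact hA _ _ (hT p (huT p.2)).1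
    _ = A * ∑' p : u, t * μ (ball ρ p.1.1 p.1.2) := by
        rw [ENNReal.tsum_mul_left, ENNReal.tsum_mul_left, mul_left_comm]
    _ ≤ A * ∑' p : u, ∫⁻ y in ball ρ p.1.1 p.1.2, h y ∂μ := by
        gcongr with p
        exact (ht p (huT p.2)).le
    _ = A * ∫⁻ y in ⋃ p ∈ u, ball ρ p.1 p.2, h y ∂μ := by
        rw [lintegral_biUnion hu_count (fun p _ => hX.measurableSet_ball _ _) hu_disj]
    _ ≤ A * ∫⁻ x, h x ∂μ := by
        gcongr
        exact Measure.restrict_le_self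

lemma exists_mul_measure_lt_maximal_le (hX : IsQuasiMetricMeasure ρ μ K₀)
    (hL : IsDoubling ρ μ L) :
    ∃ A : ℝ≥0∞, A ≠ ∞ ∧ ∀ (h : X → ℝ≥0∞) (t : ℝ≥0∞),
      t * μ {x | t < maximal ρ μ h x} ≤ A * ∫⁻ x, h x ∂μ := by
  obtain ⟨A, hA_top, hA⟩ := hL.exists_measure_ball_mul_le (5 * K₀ ^ 2)
  refine ⟨A + 1, by finiteness, fun h t => ?_⟩
  rcases eq_or_ne (∫⁻ x, h x ∂μ) ∞ with hh | hh
  · simp [hh, ENNReal.mul_top]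
  let T : ℕ → Set (X × ℝ) := fun n =>
    {p | p.2 ∈ Ioc 0 (n : ℝ) ∧ t < (∫⁻ y in ball ρ p.1 p.2, h y ∂μ) / μ (ball ρ p.1 p.2)}
  have h_union : {x | t < maximal ρ μ h x} = ⋃ n, ⋃ p ∈ T n, ball ρ p.1 p.2 := by
    ext x
    simp only [mem_ofPred_eq, lt_maximal_iff, mem_iUnion, exists_prop, Prod.exists, T]
    constructor
    · rintro ⟨z, r, hr, hx, ht⟩
      obtain ⟨n, hn⟩ := exists_nat_ge r
      exact ⟨n, z, r, ⟨⟨hr, hn⟩, ht⟩, hx⟩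
    · rintro ⟨n, z, r, ⟨hr, ht⟩, hx⟩
      exact ⟨z, r, hr.1, hx, ht⟩
  have h_mono : Monotone fun n => ⋃ p ∈ T n, ball ρ p.1 p.2 := fun m n hmn =>
    biUnion_subset_biUnion_left fun p hp =>
      ⟨Ioc_subset_Ioc_right (Nat.cast_le.2 hmn) hp.1, hp.2⟩
  rw [h_union, h_mono.measure_iUnion, ENNReal.mul_iSup]
  refine iSup_le fun n => ?_
  calc t * μ (⋃ p ∈ T n, ball ρ p.1 p.2) ≤ A * ∫⁻ x, h x ∂μ :=
        hX.mul_measure_biUnion_ball_le hA hh (fun p hp => hp.1)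
          fun p hp => ENNReal.mul_lt_of_lt_div hp.2
    _ ≤ (A + 1) * ∫⁻ x, h x ∂μ := by gcongr; exact le_self_add

lemma exists_mul_measure_two_mul_lt_maximal_le (hX : IsQuasiMetricMeasure ρ μ K₀)
    (hL : IsDoubling ρ μ L) :
    ∃ A : ℝ≥0∞, A ≠ ∞ ∧ ∀ (h : X → ℝ≥0∞) (t : ℝ≥0∞),
      t * μ {x | 2 * t < maximal ρ μ h x} ≤ A * ∫⁻ x, (if t < h x then h x else 0) ∂μ := by
  obtain ⟨A, hA_top, hA⟩ := hX.exists_mul_measure_lt_maximal_le hL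
  refine ⟨A, hA_top, fun h t => le_trans ?_ (hA (fun x => if t < h x then h x else 0) t)⟩
  refine mul_le_mul' le_rfl (measure_mono fun x hx => ?_)
  rw [mem_ofPred_eq, two_mul] at hx
  have h_trunc : maximal ρ μ h x ≤ maximal ρ μ (fun y => if t < h y then h y else 0) x + t := by
    refine maximal_le_maximal_add (fun y => ?_) x
    split_ifs with hy
    · exact le_self_add
    · simpa using hy
  exact lt_of_add_lt_add_right (hx.trans_le h_trunc)

lemma exists_lintegral_extO_maximal_le (hX : IsQuasiMetricMeasure ρ μ K₀)
    (hL : IsDoubling ρ μ L) {Φ : ℝ → ℝ} (hΦ : OrliczFun Φ) {r : ℝ} (hr : 1 < r)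
    (hlt : LowerType Φ r) :
    ∃ S : ℝ≥0∞, S ≠ ∞ ∧ ∀ h : X → ℝ≥0∞, Measurable h →
      ∫⁻ x, extO Φ (maximal ρ μ h x / 4) ∂μ ≤ S * ∫⁻ x, extO Φ (h x) ∂μ := by
  obtain ⟨A, hA_top, hA⟩ := hX.exists_mul_measure_two_mul_lt_maximal_le hL
  obtain ⟨C, hC_top, hC⟩ := hΦ.exists_tsum_extO_zpow_div_mul_le hr hlt
  refine ⟨A * C, ENNReal.mul_ne_top hA_top hC_top, fun h hh => ?_⟩
  let E : ℤ → Set X := fun k => {x | 2 * 2 ^ k < maximal ρ μ h x}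
  let trunc : ℤ → X → ℝ≥0∞ := fun k x => if (2 : ℝ≥0∞) ^ k < h x then h x else 0
  have h_trunc : ∀ k, Measurable (trunc k) := fun k =>
    Measurable.ite (measurableSet_lt measurable_const hh) hh measurable_const
  have h_pointwise : ∀ x, extO Φ (maximal ρ μ h x / 4) ≤
      ∑' k, (E k).indicator (fun _ => extO Φ (2 ^ k)) x := by
    intro x
    simpa only [E, indicator_apply, mem_ofPred_eq] using hΦ.extO_div_four_le_tsum _
  have h_level : ∀ k, extO Φ (2 ^ k) * μ (E k) ≤
      A * ∫⁻ x, extO Φ (2 ^ k) / 2 ^ k * trunc k x ∂μ := by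
    intro k
    have hk0 : (2 : ℝ≥0∞) ^ k ≠ 0 := (ENNReal.zpow_pos two_ne_zero ENNReal.ofNat_ne_top k).ne'
    have hk_top : (2 : ℝ≥0∞) ^ k ≠ ∞ := ENNReal.zpow_ne_top two_ne_zero ENNReal.ofNat_ne_top k
    calc extO Φ (2 ^ k) * μ (E k) = extO Φ (2 ^ k) / 2 ^ k * (2 ^ k * μ (E k)) := by
          rw [← mul_assoc, ENNReal.div_mul_cancel hk0 hk_top]
      _ ≤ extO Φ (2 ^ k) / 2 ^ k * (A * ∫⁻ x, trunc k x ∂μ) := mul_le_mul' le_rfl (hA h _)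
      _ = A * ∫⁻ x, extO Φ (2 ^ k) / 2 ^ k * trunc k x ∂μ := by
          rw [lintegral_const_mul _ (h_trunc k), mul_left_comm]
  calc ∫⁻ x, extO Φ (maximal ρ μ h x / 4) ∂μ
      ≤ ∫⁻ x, ∑' k, (E k).indicator (fun _ => extO Φ (2 ^ k)) x ∂μ :=
        lintegral_mono h_pointwise
    _ ≤ ∑' k, extO Φ (2 ^ k) * μ (E k) := lintegral_tsum_indicator_const_le _ _
    _ ≤ ∑' k : ℤ, A * ∫⁻ x, extO Φ (2 ^ k) / 2 ^ k * trunc k x ∂μ := ENNReal.tsum_le_tsum h_level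
    _ = A * ∫⁻ x, ∑' k : ℤ, extO Φ (2 ^ k) / 2 ^ k * trunc k x ∂μ := by
        rw [ENNReal.tsum_mul_left,
          lintegral_tsum fun k => ((h_trunc k).const_mul _).aemeasurable]
    _ ≤ A * ∫⁻ x, C * extO Φ (h x) ∂μ := by gcongr with x; exact hC (h x)
    _ = A * C * ∫⁻ x, extO Φ (h x) ∂μ := by rw [lintegral_const_mul' _ _ hC_top, mul_assoc]

end IsQuasiMetricMeasure

end Maximal

section Morrey

variable {ρ : X → X → ℝ} {μ : Measure X} {K₀ : ℝ} {L : ℝ≥0∞} {Φ : ℝ → ℝ} {φ : X → ℝ → ℝ}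

/-- `g` lies in the modular unit ball of `L^{(Φ,φ)}(X)`: `μ(B)⁻¹ ∫_B Φ(g) dμ ≤ φ(B)` for every
ball `B`. As in `ballNorm`, the inequality is multiplied through by `μ(B)`. -/
def MemUnitBall (ρ : X → X → ℝ) (μ : Measure X) (Φ : ℝ → ℝ) (φ : X → ℝ → ℝ)
    (g : X → ℝ≥0∞) : Prop :=
  ∀ (x : X) (r : ℝ), 0 < r →
    ∫⁻ y in ball ρ x r, extO Φ (g y) ∂μ ≤ ENNReal.ofReal (φ x r) * μ (ball ρ x r)

lemma OMnorm_le_of_memUnitBall_div {g : X → ℝ≥0∞} {l : ℝ≥0∞} (hl : l ≠ 0)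
    (hg : MemUnitBall ρ μ Φ φ fun y => g y / l) : OMnorm ρ μ Φ φ g ≤ l :=
  iSup₂_le fun x r => iSup_le fun hr => sInf_le ⟨hl, hg x r hr⟩

lemma OrliczFun.memUnitBall_div_of_OMnorm_lt (hΦ : OrliczFun Φ) {g : X → ℝ≥0∞} {l : ℝ≥0∞}
    (hl : OMnorm ρ μ Φ φ g < l) : MemUnitBall ρ μ Φ φ fun y => g y / l := by
  intro x r hr
  have h_ball : ballNorm ρ μ Φ φ x r g ≤ OMnorm ρ μ Φ φ g :=
    le_iSup₂_of_le x r (le_iSup (fun _ : 0 < r => ballNorm ρ μ Φ φ x r g) hr)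
  obtain ⟨m, ⟨-, hm⟩, hml⟩ := sInf_lt_iff.1 (h_ball.trans_lt hl)
  exact (lintegral_mono fun y => hΦ.extO_mono (ENNReal.div_le_div_left hml.le _)).trans hm

lemma Gdec1.exists_ofReal_le_mul_ofReal_mul (hG : Gdec1 ρ μ φ) (hL : IsDoubling ρ μ L)
    {c : ℝ} (hc : 1 ≤ c) :
    ∃ B : ℝ≥0∞, B ≠ ∞ ∧ ∀ x r, 0 < r →
      ENNReal.ofReal (φ x r) ≤ B * ENNReal.ofReal (φ x (c * r)) := by
  obtain ⟨C, -, hC⟩ := hG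
  obtain ⟨A, hA_top, hA⟩ := hL.exists_measure_ball_mul_le c
  refine ⟨ENNReal.ofReal C * A, by finiteness, fun x r hr => ?_⟩
  obtain ⟨h_pos, -, h_fin⟩ := hL.2.2 x r hr
  rw [← ENNReal.mul_le_mul_iff_right h_pos.ne' h_fin.ne]
  calc μ (ball ρ x r) * ENNReal.ofReal (φ x r)
      ≤ ENNReal.ofReal C * (μ (ball ρ x (c * r)) * ENNReal.ofReal (φ x (c * r))) :=
        (hC x r (c * r) hr (le_mul_of_one_le_left hr.le hc)).1
    _ ≤ ENNReal.ofReal C * (A * μ (ball ρ x r) * ENNReal.ofReal (φ x (c * r))) := by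
        gcongr
        exact hA x r hr
    _ = μ (ball ρ x r) * (ENNReal.ofReal C * A * ENNReal.ofReal (φ x (c * r))) := by ring

lemma Gdec1.exists_ofReal_le_mul_of_le (hG : Gdec1 ρ μ φ) :
    ∃ C : ℝ≥0∞, C ≠ ∞ ∧ ∀ x r s, 0 < r → r ≤ s →
      ENNReal.ofReal (φ x s) ≤ C * ENNReal.ofReal (φ x r) := by
  obtain ⟨C, hC1, hC⟩ := hG
  refine ⟨ENNReal.ofReal C, ENNReal.ofReal_ne_top, fun x r s hr hrs => ?_⟩
  rw [← ENNReal.ofReal_mul (zero_le_one.trans hC1)]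
  exact ENNReal.ofReal_le_ofReal (hC x r s hr hrs).2

lemma Nearness.exists_ofReal_le_mul {Y : Type*} {ρ : Y → Y → ℝ} {φ : Y → ℝ → ℝ}
    (hN : Nearness ρ φ) :
    ∃ C : ℝ≥0∞, C ≠ ∞ ∧ ∀ x y r, 0 < r → ρ x y ≤ r →
      ENNReal.ofReal (φ x r) ≤ C * ENNReal.ofReal (φ y r) := by
  obtain ⟨C, hC1, hC⟩ := hN
  refine ⟨ENNReal.ofReal C, ENNReal.ofReal_ne_top, fun x y r hr hxy => ?_⟩
  rw [← ENNReal.ofReal_mul (zero_le_one.trans hC1)]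
  exact ENNReal.ofReal_le_ofReal (hC x y r hr hxy)

namespace IsQuasiMetricMeasure

lemma exists_ofReal_le_mul_of_mem_inter (hX : IsQuasiMetricMeasure ρ μ K₀) (hL : IsDoubling ρ μ L)
    (hG : Gdec1 ρ μ φ) (hN : Nearness ρ φ) :
    ∃ B : ℝ≥0∞, B ≠ ∞ ∧ ∀ x y z r s, 0 < r → r ≤ s → y ∈ ball ρ x r → y ∈ ball ρ z s →
      ENNReal.ofReal (φ z s) ≤ B * ENNReal.ofReal (φ x r) := by
  have hK := hX.one_le
  obtain ⟨B, hB_top, hB⟩ := hG.exists_ofReal_le_mul_ofReal_mul hL (c := 2 * K₀) (by linarith)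
  obtain ⟨C, hC_top, hC⟩ := hN.exists_ofReal_le_mul
  obtain ⟨D, hD_top, hD⟩ := hG.exists_ofReal_le_mul_of_le
  refine ⟨B * C * D, by finiteness, fun x y z r s hr hrs hyx hyz => ?_⟩
  have hs : 0 < s := hr.trans_le hrs
  have h_le : s ≤ 2 * K₀ * s := le_mul_of_one_le_left hs.le (by linarith)
  have h_near : ρ z x ≤ 2 * K₀ * s := by
    rw [mem_ball] at hyx hyz
    calc ρ z x ≤ K₀ * (ρ z y + ρ y x) := hX.triangle z y x
      _ ≤ K₀ * (s + s) := by rw [hX.symm y x]; gcongr; exact hyx.le.trans hrs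
      _ = 2 * K₀ * s := by ring
  calc ENNReal.ofReal (φ z s)
      ≤ B * ENNReal.ofReal (φ z (2 * K₀ * s)) := hB z s hs
    _ ≤ B * (C * ENNReal.ofReal (φ x (2 * K₀ * s))) := by
        gcongr; exact hC z x _ (by positivity) h_near
    _ ≤ B * (C * (D * ENNReal.ofReal (φ x r))) := by
        gcongr; exact hD x r _ hr (hrs.trans h_le)
    _ = B * C * D * ENNReal.ofReal (φ x r) := by ring

lemma maximal_le_max (hX : IsQuasiMetricMeasure ρ μ K₀) (g : X → ℝ≥0∞) {x y : X} {r : ℝ}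
    (hy : y ∈ ball ρ x r) {c : ℝ≥0∞}
    (hc : ∀ z s, r ≤ s → y ∈ ball ρ z s →
      (∫⁻ w in ball ρ z s, g w ∂μ) / μ (ball ρ z s) ≤ c) :
    maximal ρ μ g y ≤ max (maximal ρ μ ((ball ρ x (3 * K₀ ^ 2 * r)).indicator g) y) c := by
  refine maximal_le_iff.2 fun z s hs hyz => ?_
  rcases le_total r s with hrs | hsr
  · exact le_max_of_le_right (hc z s hrs hyz)
  refine le_max_of_le_left (le_trans ?_ (div_le_maximal _ hs hyz))
  have h_subset : ball ρ z s ⊆ ball ρ x (3 * K₀ ^ 2 * r) := fun w hw =>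
    (mem_ball.1 (hX.ball_subset_ball_of_mem_inter hy hyz hw)).trans_le
      (by nlinarith [sq_nonneg K₀])
  rw [setLIntegral_congr_fun (hX.measurableSet_ball z s)
    fun w hw => (indicator_of_mem (h_subset hw) g).symm]

lemma exists_average_le_of_memUnitBall (hX : IsQuasiMetricMeasure ρ μ K₀)
    (hL : IsDoubling ρ μ L) (hφ : PhiPos φ) (hG : Gdec1 ρ μ φ) (hN : Nearness ρ φ)
    (hΦ : OrliczFun Φ) {p : ℝ} (hp : 1 ≤ p) (hlt : LowerType Φ p) :
    ∃ Q : ℝ≥0∞, Q ≠ ∞ ∧ ∀ g, MemUnitBall ρ μ Φ φ g → ∀ x y z r s, 0 < r → r ≤ s →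
      y ∈ ball ρ x r → y ∈ ball ρ z s → ∀ a ≠ 0, a ≠ ∞ → ENNReal.ofReal (φ x r) ≤ extO Φ a →
      (∫⁻ w in ball ρ z s, g w ∂μ) / μ (ball ρ z s) ≤ Q * a := by
  obtain ⟨B, hB_top, hB⟩ := hX.exists_ofReal_le_mul_of_mem_inter hL hG hN
  obtain ⟨C, hC_top, hC⟩ := hΦ.exists_lintegral_le_of_lintegral_extO_le hp hlt
  refine ⟨1 + C * B, by finiteness, fun g hg x y z r s hr hrs hyx hyz a ha0 ha_top ha => ?_⟩
  refine ENNReal.div_le_of_le_mul ?_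
  rw [← Measure.restrict_apply_univ (ball ρ z s)]
  refine hC _ g a _ B ha0 ha_top (ENNReal.ofReal_pos.2 (hφ x r hr)).ne' ha ?_
  rw [Measure.restrict_apply_univ]
  refine (hg z s (hr.trans_le hrs)).trans ?_
  gcongr
  exact hB x y z r s hr hrs hyx hyz

lemma exists_setLIntegral_extO_maximal_indicator_le (hX : IsQuasiMetricMeasure ρ μ K₀)
    (hL : IsDoubling ρ μ L) (hG : Gdec1 ρ μ φ) (hΦ : OrliczFun Φ) {p : ℝ} (hp : 1 < p)
    (hlt : LowerType Φ p) :
    ∃ S : ℝ≥0∞, S ≠ ∞ ∧ ∀ g, Measurable g → MemUnitBall ρ μ Φ φ g → ∀ x r, 0 < r →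
      ∫⁻ y in ball ρ x r,
          extO Φ (maximal ρ μ ((ball ρ x (3 * K₀ ^ 2 * r)).indicator g) y / 4) ∂μ ≤
        S * (ENNReal.ofReal (φ x r) * μ (ball ρ x r)) := by
  obtain ⟨S, hS_top, hS⟩ := hX.exists_lintegral_extO_maximal_le hL hΦ hp hlt
  obtain ⟨A, hA_top, hA⟩ := hL.exists_measure_ball_mul_le (3 * K₀ ^ 2)
  obtain ⟨D, hD_top, hD⟩ := hG.exists_ofReal_le_mul_of_le
  refine ⟨S * D * A, by finiteness, fun g hg_meas hg x r hr => ?_⟩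
  have hK : r ≤ 3 * K₀ ^ 2 * r := le_mul_of_one_le_left hr.le (by nlinarith [hX.one_le])
  have h_meas := hX.measurableSet_ball x (3 * K₀ ^ 2 * r)
  set U := ball ρ x (3 * K₀ ^ 2 * r)
  calc ∫⁻ y in ball ρ x r, extO Φ (maximal ρ μ (U.indicator g) y / 4) ∂μ
      ≤ ∫⁻ y, extO Φ (maximal ρ μ (U.indicator g) y / 4) ∂μ := setLIntegral_le_lintegral _ _
    _ ≤ S * ∫⁻ y, extO Φ (U.indicator g y) ∂μ := hS _ (hg_meas.indicator h_meas)
    _ = S * ∫⁻ y in U, extO Φ (g y) ∂μ := by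
        rw [← lintegral_indicator h_meas]
        congr! with y
        exact (congrFun (indicator_comp_of_zero hΦ.extO_zero) y).symm
    _ ≤ S * (ENNReal.ofReal (φ x (3 * K₀ ^ 2 * r)) * μ U) := by
        gcongr; exact hg x _ (hr.trans_le hK)
    _ ≤ S * (D * ENNReal.ofReal (φ x r) * (A * μ (ball ρ x r))) := by
        gcongr
        · exact hD x r _ hr hK
        · exact hA x r hr
    _ = S * D * A * (ENNReal.ofReal (φ x r) * μ (ball ρ x r)) := by ring

lemma exists_setLIntegral_extO_maximal_le (hX : IsQuasiMetricMeasure ρ μ K₀)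
    (hL : IsDoubling ρ μ L) (hφ : PhiPos φ) (hG : Gdec1 ρ μ φ) (hN : Nearness ρ φ)
    (hΦ : OrliczFun Φ) {p : ℝ} (hp : 1 < p) (hlt : LowerType Φ p) :
    ∃ E S : ℝ≥0∞, E ≠ 0 ∧ E ≠ ∞ ∧ S ≠ ∞ ∧ ∀ g, Measurable g → MemUnitBall ρ μ Φ φ g →
      ∀ x r, 0 < r → ∫⁻ y in ball ρ x r, extO Φ (maximal ρ μ g y / E) ∂μ ≤
        S * (ENNReal.ofReal (φ x r) * μ (ball ρ x r)) := by
  obtain ⟨Q, hQ_top, hQ⟩ := hX.exists_average_le_of_memUnitBall hL hφ hG hN hΦ hp.le hlt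
  obtain ⟨S, hS_top, hS⟩ := hX.exists_setLIntegral_extO_maximal_indicator_le hL hG hΦ hp hlt
  refine ⟨max 4 (Q * 4), S + 1, by simp, by finiteness, by finiteness,
    fun g hg_meas hg x r hr => ?_⟩
  obtain ⟨a, ha0, ha_top, ha_le, ha_ge⟩ := hΦ.exists_extO_le_le_extO hp.le hlt
    (ENNReal.ofReal_pos.2 (hφ x r hr)).ne' ENNReal.ofReal_ne_top
  set h := (ball ρ x (3 * K₀ ^ 2 * r)).indicator g
  have h_pointwise : ∀ y ∈ ball ρ x r, extO Φ (maximal ρ μ g y / max 4 (Q * 4)) ≤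
      extO Φ (maximal ρ μ h y / 4) + extO Φ (a / 2) := by
    intro y hy
    have h_split := hX.maximal_le_max g hy fun z s hrs hyz =>
      hQ g hg x y z r s hr hrs hy hyz (2 * a) (by simp [ha0]) (by finiteness) ha_ge
    rcases le_max_iff.1 h_split with h_near | h_far
    · refine (hΦ.extO_mono ?_).trans le_self_add
      gcongr
      exact le_max_left _ _
    · refine (hΦ.extO_mono (ENNReal.div_le_of_le_mul (h_far.trans ?_))).trans le_add_self
      calc Q * (2 * a) = a / 2 * 2 * (Q * 2) := by
            rw [ENNReal.div_mul_cancel two_ne_zero ENNReal.ofNat_ne_top]; ring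
        _ = a / 2 * (Q * 4) := by ring
        _ ≤ a / 2 * max 4 (Q * 4) := by gcongr; exact le_max_right _ _
  calc ∫⁻ y in ball ρ x r, extO Φ (maximal ρ μ g y / max 4 (Q * 4)) ∂μ
      ≤ ∫⁻ y in ball ρ x r, (extO Φ (maximal ρ μ h y / 4) + extO Φ (a / 2)) ∂μ :=
        setLIntegral_mono' (hX.measurableSet_ball x r) h_pointwise
    _ = ∫⁻ y in ball ρ x r, extO Φ (maximal ρ μ h y / 4) ∂μ +
          extO Φ (a / 2) * μ (ball ρ x r) := by
        rw [lintegral_add_right _ measurable_const, setLIntegral_const]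
    _ ≤ S * (ENNReal.ofReal (φ x r) * μ (ball ρ x r)) +
          ENNReal.ofReal (φ x r) * μ (ball ρ x r) := by
        gcongr
        exact hS g hg_meas hg x r hr
    _ = (S + 1) * (ENNReal.ofReal (φ x r) * μ (ball ρ x r)) := by ring

lemma exists_memUnitBall_maximal_div (hX : IsQuasiMetricMeasure ρ μ K₀)
    (hL : IsDoubling ρ μ L) (hφ : PhiPos φ) (hG : Gdec1 ρ μ φ) (hN : Nearness ρ φ)
    (hΦ : OrliczFun Φ) {p : ℝ} (hp : 1 < p) (hlt : LowerType Φ p) :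
    ∃ D : ℝ≥0∞, D ≠ 0 ∧ D ≠ ∞ ∧ ∀ g, Measurable g → MemUnitBall ρ μ Φ φ g →
      MemUnitBall ρ μ Φ φ fun y => maximal ρ μ g y / D := by
  obtain ⟨E, S, hE0, hE_top, hS_top, hES⟩ :=
    hX.exists_setLIntegral_extO_maximal_le hL hφ hG hN hΦ hp hlt
  obtain ⟨D, hD0, hD_top, hD⟩ := hΦ.exists_mul_extO_div_le hp.le hlt
    (ENNReal.add_ne_top.2 ⟨hS_top, ENNReal.one_ne_top⟩)
  have hS0 : S + 1 ≠ 0 := by simp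
  have hS1_top : S + 1 ≠ ∞ := by finiteness
  refine ⟨E * D, mul_ne_zero hE0 hD0, by finiteness, fun g hg_meas hg x r hr => ?_⟩
  rw [← ENNReal.mul_le_mul_iff_right hS0 hS1_top]
  calc (S + 1) * ∫⁻ y in ball ρ x r, extO Φ (maximal ρ μ g y / (E * D)) ∂μ
      = ∫⁻ y in ball ρ x r, (S + 1) * extO Φ (maximal ρ μ g y / E / D) ∂μ := by
        simp only [ennreal_div_mul_eq_div_div _ (.inl hE0) (.inl hE_top),
          lintegral_const_mul' _ _ hS1_top]
    _ ≤ ∫⁻ y in ball ρ x r, extO Φ (maximal ρ μ g y / E) ∂μ := lintegral_mono fun y => hD _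
    _ ≤ S * (ENNReal.ofReal (φ x r) * μ (ball ρ x r)) := hES g hg_meas hg x r hr
    _ ≤ (S + 1) * (ENNReal.ofReal (φ x r) * μ (ball ρ x r)) := by gcongr; exact le_self_add

end IsQuasiMetricMeasure

end Morrey

theorem statement17_general {ρ : X → X → ℝ} {μ : Measure X} {K₀ : ℝ} {L : ℝ≥0∞}
    (hX : IsQuasiMetricMeasure ρ μ K₀) (hL : IsDoubling ρ μ L) {φ : X → ℝ → ℝ}
    (hφ : PhiPos φ) (hG : Gdec1 ρ μ φ) (hN : Nearness ρ φ) {Φ : ℝ → ℝ} (hΦ : OrliczFun Φ)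
    {p : ℝ} (hp : 1 < p) (hlt : LowerType Φ p) :
    ∃ C : ℝ≥0, 0 < C ∧ ∀ g : X → ℝ≥0∞, Measurable g →
      OMnorm ρ μ Φ φ (maximal ρ μ g) ≤ C * OMnorm ρ μ Φ φ g := by
  obtain ⟨D, hD0, hD_top, hD⟩ := hX.exists_memUnitBall_maximal_div hL hφ hG hN hΦ hp hlt
  refine ⟨D.toNNReal, ENNReal.toNNReal_pos hD0 hD_top, fun g hg => ?_⟩
  rw [ENNReal.coe_toNNReal hD_top, mul_comm, ← ENNReal.div_le_iff hD0 hD_top]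
  refine le_of_forall_gt_imp_ge_of_dense fun l hl => ?_
  have hl0 : l ≠ 0 := hl.ne_bot
  rw [ENNReal.div_le_iff hD0 hD_top]
  refine OMnorm_le_of_memUnitBall_div (mul_ne_zero hl0 hD0) ?_
  have h_unit := hD _ (hg.div_const l) (hΦ.memUnitBall_div_of_OMnorm_lt hl)
  have h_maximal : ∀ y, maximal ρ μ (fun w => g w / l) y = maximal ρ μ g y / l := fun y => by
    simp only [div_eq_mul_inv, mul_comm _ l⁻¹, maximal_const_mul (ENNReal.inv_ne_top.2 hl0)]
  simpa only [h_maximal, ennreal_div_mul_eq_div_div _ (.inl hl0) (.inr hD0)] using h_unit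

theorem statement17 [Nonempty X] (ρ : X → X → ℝ) (μ : Measure X) (K₀ : ℝ) (L : ℝ≥0∞)
    (hX : IsQuasiMetricMeasure ρ μ K₀) (hL : IsDoubling ρ μ L)
    (φ : X → ℝ → ℝ) (hφpos : PhiPos φ) (hφG : Gdec1 ρ μ φ) (hφN : Nearness ρ φ)
    (Φ : ℝ → ℝ) (hΦ : OrliczFun Φ) (hΦmono : StrictMonoOn Φ (Set.Ici (0:ℝ)))
    (hΦconv : ConvexOn ℝ (Set.Ici (0:ℝ)) Φ)
    (rminus rplus : ℝ) (hrm : 1 < rminus) (hrr : rminus ≤ rplus)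
    (hlt : LowerType Φ rminus) (hut : UpperType Φ rplus) :
    ∃ C : ℝ≥0, 0 < C ∧ ∀ f : X → ℝ, Measurable f →
      OMnorm ρ μ Φ φ (fun x => ENNReal.ofReal |f x|) < ∞ →
      OMnorm ρ μ Φ φ (maximal ρ μ fun x => ENNReal.ofReal |f x|) ≤
        (C : ℝ≥0∞) * OMnorm ρ μ Φ φ (fun x => ENNReal.ofReal |f x|) := by
  obtain ⟨C, hC, h⟩ := statement17_general hX hL hφpos hφG hφN hΦ hrm hlt
  exact ⟨C, hC, fun f hf _ => h _ (by fun_prop)⟩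

end Paper
end
end
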